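/- arXiv:2605.07349 — 10 statements merged into one kernel-verified Lean document; each statement's English description precedes it below -/
import Mathlib

section
/- For every s ∈ (0,1], there exists a randomized online bidding strategy that is ρ(s)-robust and χ(s)-consistent, where ρ(s) := e^s/s, and χ(s) := (e^s − 1)/s for 0 < s ≤ ln 2 and χ(s) := ξ(s)/s for ln 2 ≤ s ≤ 1, with ξ(s) the unique ξ ∈ [1, e] satisfying ξ·(2 − ln ξ) = e^s. -/
/-!
A positive nondecreasing profile `F : ℝ → ℝ` gives the strategy `Q_n = F (n + u)` with `u` uniform on
`(0, 1)`. Summing over `n` unfolds its cost into an integral over the line: if `G` is a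
positive primitive of `F`, the cost at a target `T` is at most `G (τ + 1)` with `τ = sup {F < T}`
(`bidCost_unfoldStrategy_le`, `lintegral_Iic_le`). Hence `ρ`-robustness follows from `G (t + 1) ≤ ρ F t` for all `t`
(`robust_of_le`), and the cost at `1` is at most `G 1` when `F ≥ 1` on `[0, ∞)`.

Let `ρ = e^s / s`. On `[0, ∞)` take `F x = max 1 (ξ e^{s(x-1)})`; on `(-∞, 0)` require equality
`F x = G (x + 1) / ρ`, which determines `F` one unit interval at a time
(`exists_backward_solution`). The only free datum is `G 0`, and it is chosen so that
`G t = s ∫_0^1 e^{-sx} G (t + x) dx` holds at `t = 0`. The equation propagates this identity to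
all `t ≤ 0` (`renewal_identity`), and the identity keeps `G` positive (`pos_of_renewal`).
The choice of `G 0` amounts to
`G 1 = e^s ∫_0^1 e^{-sx} F x dx = (e^s - ξ + ξ log ξ) / s` (`integral_exp_mul_forward`).

For `t ≥ 0` robustness holds as soon as `G 1 ≤ ξ / s`, that is `e^s ≤ ξ (2 - log ξ)`. When
`s ≤ log 2`, `ξ = 1` satisfies this and gives `G 1 = (e^s - 1) / s`; when `s ≥ log 2`, the root of
`ξ (2 - log ξ) = e^s` gives `G 1 = ξ / s`.
-/

open MeasureTheory Set
open scoped ENNReal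

/-- The expected cost of a randomized online bidding strategy `μ` at target `T`:
`E_μ[∑_{n∈ℤ} Q_n · 1{Q_{n−1} < T}]`. -/
noncomputable def bidCost (μ : Measure (ℤ → ℝ)) (T : ℝ) : ℝ≥0∞ :=
  ∫⁻ Q, ∑' n : ℤ, (if Q (n - 1) < T then ENNReal.ofReal (Q n) else 0) ∂μ

/-- A randomized online bidding strategy: a probability measure on bid sequences that are
almost surely positive and strictly increasing. -/
def IsBidStrategy (μ : Measure (ℤ → ℝ)) : Prop :=
  IsProbabilityMeasure μ ∧ ∀ᵐ Q ∂μ, (∀ n : ℤ, 0 < Q n) ∧ StrictMono Q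

/-- `χ` is the value `χ(s)`: it equals `(e^s − 1)/s` for `0 < s ≤ ln 2`, and `ξ(s)/s`
for `ln 2 ≤ s ≤ 1`, where `ξ(s)` is the unique `ξ ∈ [1, e]` with `ξ(2 − ln ξ) = e^s`. -/
def IsChiVal (s χ : ℝ) : Prop :=
  (s ≤ Real.log 2 ∧ χ = (Real.exp s - 1) / s) ∨
  (Real.log 2 ≤ s ∧ ∃ ξ : ℝ, ξ ∈ Set.Icc 1 (Real.exp 1) ∧
    ξ * (2 - Real.log ξ) = Real.exp s ∧ χ = ξ / s)

/-! ### Strategies from a profile on the line -/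

/-- The strategy attached to a bid profile `F : ℝ → ℝ`: draw `u` uniformly from `(0, 1)` and bid
`Q_n = F (n + u)`. The open interval excludes the integer phases, where `F` may fail to increase
strictly from one bid to the next. -/
noncomputable def unfoldStrategy (F : ℝ → ℝ) : Measure (ℤ → ℝ) :=
  (volume.restrict (Ioo (0 : ℝ) 1)).map fun u n => F (n + u)

theorem measurable_unfold {F : ℝ → ℝ} (hF : Measurable F) :
    Measurable fun (u : ℝ) (n : ℤ) => F (n + u) :=
  measurable_pi_lambda _ fun _ => hF.comp (measurable_const.add measurable_id)

/-- The cost at `T` is `∫ F x · 1{F (x - 1) < T} dx`, because the unit intervals `(n, n + 1)` tile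
the line up to a null set; if `F t < T` forces `t ≤ τ`, only `x ≤ τ + 1` contributes. -/
theorem bidCost_unfoldStrategy_le {F : ℝ → ℝ} (hF : Measurable F) {T τ : ℝ}
    (hτ : ∀ t, F t < T → t ≤ τ) :
    bidCost (unfoldStrategy F) T ≤ ∫⁻ x in Iic (τ + 1), ENNReal.ofReal (F x) := by
  let h : ℝ → ℝ≥0∞ := fun x => if F (x - 1) < T then ENNReal.ofReal (F x) else 0
  have hh : Measurable h :=
    Measurable.ite (measurableSet_lt (by fun_prop) measurable_const) (by fun_prop)
      measurable_const
  have hterm : ∀ n : ℤ, Measurable fun Q : ℤ → ℝ =>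
      if Q (n - 1) < T then ENNReal.ofReal (Q n) else 0 := fun n =>
    Measurable.ite (measurableSet_lt (by fun_prop) measurable_const) (by fun_prop)
      measurable_const
  calc bidCost (unfoldStrategy F) T
      = ∫⁻ u in Ioo (0 : ℝ) 1, ∑' n : ℤ, h (n + u) := by
        rw [bidCost, unfoldStrategy, lintegral_map (Measurable.tsum hterm)
          (measurable_unfold hF)]
        refine lintegral_congr fun u => tsum_congr fun n => ?_
        have : ((n - 1 : ℤ) : ℝ) + u = n + u - 1 := by push_cast; ring
        simp only [h, this]
    _ = ∑' n : ℤ, ∫⁻ u in Ioo (0 : ℝ) 1, h (n + u) :=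
        lintegral_tsum fun n => (hh.comp (measurable_const.add measurable_id)).aemeasurable
    _ = ∑' n : ℤ, ∫⁻ x in Ioo (n : ℝ) (n + 1), h x := by
        refine tsum_congr fun n => ?_
        have := (measurePreserving_add_left volume (n : ℝ)).setLIntegral_comp_preimage
          (s := Ioo (n : ℝ) (n + 1)) measurableSet_Ioo hh
        rw [← this]
        congr 2
        ext x
        simp
    _ = ∫⁻ x in ⋃ n : ℤ, Ioo (n : ℝ) (n + 1), h x :=
        (lintegral_iUnion (fun n => measurableSet_Ioo) (pairwise_disjoint_Ioo_intCast ℝ) h).symm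
    _ ≤ ∫⁻ x, h x := setLIntegral_le_lintegral _ _
    _ ≤ ∫⁻ x, (Iic (τ + 1)).indicator (fun x => ENNReal.ofReal (F x)) x := by
        refine lintegral_mono fun x => ?_
        by_cases hx : F (x - 1) < T
        · have : x ≤ τ + 1 := by linarith [hτ _ hx]
          simp [h, hx, this]
        · simp [h, hx]
    _ = ∫⁻ x in Iic (τ + 1), ENNReal.ofReal (F x) := lintegral_indicator measurableSet_Iic _

/-- Positivity of the primitive `G` alone bounds the mass of `F` on `(-∞, t]` by `G t`; the limit of
`G` at `-∞` need not be known. -/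
theorem lintegral_Iic_le {F G : ℝ → ℝ} (hF : ∀ x, 0 < F x)
    (hint : ∀ a b, IntervalIntegrable F volume a b)
    (hFG : ∀ a b, ∫ x in a..b, F x = G b - G a) (hG : ∀ t, 0 < G t) (t : ℝ) :
    ∫⁻ x in Iic t, ENNReal.ofReal (F x) ≤ ENNReal.ofReal (G t) := by
  have hU : ⋃ n : ℕ, Ioc (t - n) t = Iic t := by
    ext x
    simp only [mem_iUnion, mem_Ioc, mem_Iic]
    refine ⟨fun ⟨n, h⟩ => h.2, fun h => ?_⟩
    obtain ⟨n, hn⟩ := exists_nat_gt (t - x)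
    exact ⟨n, by linarith, h⟩
  have hmono : Monotone fun n : ℕ => Ioc (t - n) t := by
    intro m n hmn
    exact Ioc_subset_Ioc_left (by have : (m : ℝ) ≤ n := by exact_mod_cast hmn
                                  linarith)
  rw [← hU, setLIntegral_iUnion_of_directed _ hmono.directed_le]
  refine iSup_le fun n => ?_
  have hle : t - (n : ℝ) ≤ t := by linarith [n.cast_nonneg (α := ℝ)]
  rw [← ofReal_integral_eq_lintegral_ofReal
    ((intervalIntegrable_iff_integrableOn_Ioc_of_le hle).1 (hint _ _))
    (ae_of_all _ fun x => (hF x).le), ← intervalIntegral.integral_of_le hle, hFG]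
  exact ENNReal.ofReal_le_ofReal (by linarith [hG (t - n)])

theorem isBidStrategy_unfoldStrategy {F : ℝ → ℝ} (hF : Measurable F) (hpos : ∀ x, 0 < F x)
    (hstep : ∀ (n : ℤ) (u : ℝ), u ∈ Ioo (0 : ℝ) 1 → F (n + u) < F (n + u + 1)) :
    IsBidStrategy (unfoldStrategy F) := by
  have hm := measurable_unfold hF
  constructor
  · have : IsProbabilityMeasure (volume.restrict (Ioo (0 : ℝ) 1)) := ⟨by simp⟩
    exact Measure.isProbabilityMeasure_map hm.aemeasurable
  · have h : ∀ᵐ Q ∂unfoldStrategy F, ∀ n : ℤ, 0 < Q n ∧ Q n < Q (n + 1) := by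
      refine ae_all_iff.2 fun n => ?_
      have hS : MeasurableSet {Q : ℤ → ℝ | 0 < Q n ∧ Q n < Q (n + 1)} :=
        (measurableSet_lt measurable_const (measurable_pi_apply n)).inter
          (measurableSet_lt (measurable_pi_apply n) (measurable_pi_apply (n + 1)))
      rw [unfoldStrategy, ae_map_iff hm.aemeasurable hS]
      filter_upwards [ae_restrict_mem measurableSet_Ioo] with u hu
      refine ⟨hpos _, ?_⟩
      have : ((n + 1 : ℤ) : ℝ) + u = n + u + 1 := by push_cast; ring
      rw [this]
      exact hstep n u hu
    filter_upwards [h] with Q hQ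
    exact ⟨fun n => (hQ n).1, strictMono_int_of_lt_succ fun n => (hQ n).2⟩

/-- Robustness reduces to `G (t + 1) ≤ ρ F t`: the bound at the level `T` follows at
`τ = sup {F < T}` by continuity of `G`. -/
theorem robust_of_le {F G : ℝ → ℝ} (hG : Continuous G) {ρ : ℝ} (hρ : 0 ≤ ρ)
    (hFG : ∀ t, G (t + 1) ≤ ρ * F t)
    (hcost : ∀ T τ, (∀ t, F t < T → t ≤ τ) →
      bidCost (unfoldStrategy F) T ≤ ENNReal.ofReal (G (τ + 1)))
    (hF : Measurable F) (hbdd : ∀ T, BddAbove {t | F t < T}) (T : ℝ) :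
    bidCost (unfoldStrategy F) T ≤ ENNReal.ofReal (ρ * T) := by
  rcases eq_empty_or_nonempty {t | F t < T} with h | h
  · have h' : ∀ x, ¬ F x < T := fun x hx => (h ▸ (show x ∈ {t | F t < T} from hx) : x ∈ (∅ : Set ℝ))
    have hz : bidCost (unfoldStrategy F) T = 0 := by
      have hterm : Measurable fun Q : ℤ → ℝ =>
          ∑' n : ℤ, if Q (n - 1) < T then ENNReal.ofReal (Q n) else 0 :=
        Measurable.tsum fun n =>
          Measurable.ite (measurableSet_lt (by fun_prop) measurable_const) (by fun_prop)
            measurable_const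
      rw [bidCost, unfoldStrategy, lintegral_map hterm (measurable_unfold hF)]
      simp [h']
    simp [hz]
  · refine (hcost T (sSup {t | F t < T}) fun t ht => le_csSup (hbdd T) ht).trans
      (ENNReal.ofReal_le_ofReal ?_)
    have hcl : IsClosed {t | G (t + 1) ≤ ρ * T} :=
      isClosed_le (by fun_prop) continuous_const
    exact closure_minimal (fun t ht => (hFG t).trans
      (mul_le_mul_of_nonneg_left (le_of_lt ht) hρ)) hcl (csSup_mem_closure h (hbdd T))

/-! ### The advanced equation on the negative half-line -/

/-- The advanced equation `F x = p * (c + ∫_0^{x+1} F)` for `x < 0`, with `F = f` prescribed on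
`[0, ∞)`, is solvable one unit interval at a time, going left. -/
theorem exists_backward_solution (f : ℝ → ℝ) (hf : Continuous f) (c p : ℝ) :
    ∃ F : ℝ → ℝ, (∀ a b, IntervalIntegrable F volume a b) ∧ (∀ x, 0 ≤ x → F x = f x) ∧
      ∀ x < 0, F x = p * (c + ∫ y in (0 : ℝ)..(x + 1), F y) := by
  classical
  let step : (ℝ → ℝ) → ℝ → ℝ := fun g x =>
    if 0 ≤ x then f x else p * (c + ∫ y in (0 : ℝ)..(x + 1), g y)
  -- The `n`-th iterate is already the solution on `[-n, ∞)`, so it stabilizes there.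
  let Φ : ℕ → ℝ → ℝ := fun n => step^[n] f
  have hΦs : ∀ n, Φ (n + 1) = step (Φ n) := fun n => Function.iterate_succ_apply' step n f
  have hint : ∀ n, LocallyIntegrable (Φ n) volume := by
    intro n
    induction n with
    | zero => exact hf.locallyIntegrable
    | succ n ih =>
      have hii : ∀ a b, IntervalIntegrable (Φ n) volume a b := fun a b =>
        (ih.integrableOn_isCompact isCompact_uIcc).intervalIntegrable
      have hc : Continuous fun x : ℝ => p * (c + ∫ y in (0 : ℝ)..(x + 1), Φ n y) := by
        have h1 := (intervalIntegral.continuous_primitive hii 0).comp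
          (continuous_id.add (continuous_const (y := (1 : ℝ))))
        exact continuous_const.mul (continuous_const.add h1)
      have e : Φ (n + 1) = (Ici (0 : ℝ)).indicator f +
          (Ici (0 : ℝ))ᶜ.indicator fun x : ℝ => p * (c + ∫ y in (0 : ℝ)..(x + 1), Φ n y) := by
        rw [hΦs]
        funext x
        by_cases hx : 0 ≤ x <;> simp [step, hx, indicator]
      rw [e]
      exact (hf.locallyIntegrable.indicator measurableSet_Ici).add
        (hc.locallyIntegrable.indicator measurableSet_Ici.compl)
  have hagree : ∀ (n : ℕ) (x : ℝ), -(n : ℝ) ≤ x → Φ (n + 1) x = Φ n x := by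
    intro n
    induction n with
    | zero =>
      intro x hx
      have : 0 ≤ x := by simpa using hx
      rw [hΦs]
      simp [step, this, Φ]
    | succ n ih =>
      intro x hx
      rw [hΦs (n + 1), hΦs n]
      by_cases h0 : 0 ≤ x
      · simp [step, h0]
      · simp only [step, h0, if_false]
        congr 2
        refine intervalIntegral.integral_congr fun y hy => ?_
        push_cast at hx
        exact (congrFun (hΦs n) y).symm.trans
          (ih y ((le_min (by simp) (by linarith)).trans hy.1))
  have hagree' : ∀ (n m : ℕ) (x : ℝ), n ≤ m → -(n : ℝ) ≤ x → Φ m x = Φ n x := by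
    intro n m x hnm hx
    induction m, hnm using Nat.le_induction with
    | base => rfl
    | succ m hm ih =>
      rw [hagree m x (le_trans (neg_le_neg (by exact_mod_cast hm)) hx), ih]
  let F : ℝ → ℝ := fun x => Φ ⌈-x⌉₊ x
  have hF : ∀ (n : ℕ) (x : ℝ), -(n : ℝ) ≤ x → F x = Φ n x := by
    intro n x hx
    refine (hagree' ⌈-x⌉₊ n x (Nat.ceil_le.2 (by linarith)) ?_).symm
    have := Nat.le_ceil (-x)
    linarith
  have hFint : ∀ n : ℕ, ∀ a b, -(n : ℝ) ≤ a → -(n : ℝ) ≤ b →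
      EqOn F (Φ n) (uIcc a b) := by
    intro n a b ha hb y hy
    exact hF n y ((le_min ha hb).trans hy.1)
  refine ⟨F, fun a b => ?_, fun x hx => ?_, fun x hx => ?_⟩
  · obtain ⟨n, hn⟩ := exists_nat_ge (max (-a) (-b))
    have ha := (le_max_left _ _).trans hn
    have hb := (le_max_right _ _).trans hn
    refine IntervalIntegrable.congr_uIoo
      ((hint n).integrableOn_isCompact isCompact_uIcc).intervalIntegrable fun y hy => ?_
    exact (hFint n a b (by linarith) (by linarith) (Ioo_subset_Icc_self hy)).symm
  · rw [hF 0 x (by simpa using hx)]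
    rfl
  · obtain ⟨n, hn⟩ := exists_nat_ge (-x)
    rw [hF (n + 1) x (by push_cast; linarith), hΦs]
    simp only [step, not_le.2 hx, if_false]
    rw [intervalIntegral.integral_congr (hFint n 0 (x + 1) (by simp) (by linarith))]

/-- At the last point where `G ≤ 0`, the renewal identity would write `G` as an integral of its
strictly positive values on the next unit interval. -/
theorem pos_of_renewal {G : ℝ → ℝ} (hG : Continuous G) (h0 : ∀ t, 0 ≤ t → 0 < G t) {s : ℝ}
    (hs : 0 < s)
    (hren : ∀ t < 0, Real.exp (-s * t) * G t = s * ∫ y in t..(t + 1), Real.exp (-s * y) * G y) :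
    ∀ t, 0 < G t := by
  by_contra! hne
  let S : Set ℝ := {t | G t ≤ 0}
  have hS : S.Nonempty := hne
  have hbd : BddAbove S := ⟨0, fun t ht => le_of_not_gt fun h => absurd (h0 t h.le) (not_lt.2 ht)⟩
  have hmem : sSup S ∈ S := (isClosed_le hG continuous_const).csSup_mem hS hbd
  have hneg : sSup S < 0 := not_le.1 fun h => absurd (h0 _ h) (not_lt.2 hmem)
  have hpos : 0 < ∫ y in (sSup S)..(sSup S + 1), Real.exp (-s * y) * G y := by
    refine intervalIntegral.intervalIntegral_pos_of_pos_on
      (Continuous.intervalIntegrable (by fun_prop) _ _) (fun y hy => ?_) (by linarith)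
    exact mul_pos (Real.exp_pos _) (not_le.1 fun h => absurd (le_csSup hbd h) (not_le.2 hy.1))
  have h1 := hren _ hneg
  have h2 : Real.exp (-s * sSup S) * G (sSup S) ≤ 0 :=
    mul_nonpos_of_nonneg_of_nonpos (Real.exp_pos _).le hmem
  nlinarith [mul_pos hs hpos]

/-- The function `W t = e^{-st} G t - s ∫_t^{t+1} e^{-sy} G y dy` has zero derivative on `t < 0`
along solutions of `G' t = s e^{-s} G (t + 1)`, so it vanishes there as soon as `W 0 = 0`. -/
theorem renewal_identity {F G : ℝ → ℝ} {s : ℝ} (hG : Continuous G)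
    (hder : ∀ t < 0, HasDerivAt G (F t) t)
    (hF : ∀ t < 0, F t = s * Real.exp (-s) * G (t + 1))
    (hzero : G 0 = s * ∫ y in (0 : ℝ)..1, Real.exp (-s * y) * G y) :
    ∀ t < 0, Real.exp (-s * t) * G t = s * ∫ y in t..(t + 1), Real.exp (-s * y) * G y := by
  let g : ℝ → ℝ := fun y => Real.exp (-s * y) * G y
  have hg : Continuous g := by fun_prop
  have hgi : ∀ a b, IntervalIntegrable g volume a b := fun a b => hg.intervalIntegrable a b
  let J : ℝ → ℝ := fun t => ∫ y in (0 : ℝ)..t, g y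
  have hJ : ∀ t, HasDerivAt J (g t) t := fun t =>
    intervalIntegral.integral_hasDerivAt_right (hgi 0 t)
      (hg.stronglyMeasurableAtFilter _ _) hg.continuousAt
  let W : ℝ → ℝ := fun t => g t - s * (J (t + 1) - J t)
  have hJc : Continuous J := continuous_iff_continuousAt.2 fun t => (hJ t).continuousAt
  have hWc : Continuous W := by fun_prop
  have hW : ∀ t < 0, HasDerivAt W 0 t := by
    intro t ht
    have e1 : HasDerivAt (fun y => Real.exp (-s * y)) (Real.exp (-s * t) * (-s)) t := by
      simpa using ((hasDerivAt_id t).const_mul (-s)).exp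
    have e2 : HasDerivAt (fun y => J (y + 1)) (g (t + 1)) t := (hJ (t + 1)).comp_add_const t 1
    have h := (e1.mul (hder t ht)).sub ((e2.sub (hJ t)).const_mul s)
    refine h.congr_deriv ?_
    have e3 : Real.exp (-s * (t + 1)) = Real.exp (-s * t) * Real.exp (-s) := by
      rw [← Real.exp_add]; ring_nf
    simp only [g, hF t ht, e3]
    ring
  intro t ht
  have hconst : W t = W 0 := by
    obtain ⟨c, hc, he⟩ := exists_hasDerivAt_eq_slope W (fun _ => 0) ht hWc.continuousOn
      (fun x hx => hW x hx.2)
    have : (0 - t) ≠ 0 := by linarith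
    field_simp at he
    linarith
  have hW0 : W 0 = 0 := by
    simp only [W, J, g]
    simp [hzero]
  have hd : J (t + 1) - J t = ∫ y in t..(t + 1), g y :=
    intervalIntegral.integral_interval_sub_left (hgi _ _) (hgi _ _)
  have : W t = 0 := hconst.trans hW0
  simp only [W, hd] at this
  simpa [g] using sub_eq_zero.1 this

/-! ### Construction of the profile -/

/-- The maximum equals `1` up to `a = 1 - log ξ / s ∈ [0, 1]` and is exponential afterwards. -/
theorem integral_exp_mul_forward {s ξ : ℝ} (hs : 0 < s) (h1 : 1 ≤ ξ) (h2 : ξ ≤ Real.exp s) :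
    ∫ y in (0 : ℝ)..1, Real.exp (-s * y) * max 1 (ξ * Real.exp (s * (y - 1))) =
      Real.exp (-s) * ((Real.exp s - ξ + ξ * Real.log ξ) / s) := by
  have hξ : 0 < ξ := by linarith
  have hl0 : 0 ≤ Real.log ξ := Real.log_nonneg h1
  have hls : Real.log ξ ≤ s := (Real.log_le_iff_le_exp hξ).2 h2
  set a : ℝ := 1 - Real.log ξ / s with ha
  have hsa : s * (a - 1) = - Real.log ξ := by rw [ha]; field_simp; ring
  have ha0 : 0 ≤ a := by
    have := (div_le_one hs).2 hls
    linarith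
  have ha1 : a ≤ 1 := by
    have := div_nonneg hl0 hs.le
    linarith
  have hc : Continuous fun y : ℝ => Real.exp (-s * y) * max 1 (ξ * Real.exp (s * (y - 1))) := by
    fun_prop
  have hlog : ∀ y, ξ * Real.exp (s * (y - 1)) = Real.exp (s * (y - a)) := by
    intro y
    nth_rewrite 1 [← Real.exp_log hξ]
    rw [← Real.exp_add]
    congr 1
    linear_combination hsa
  rw [← intervalIntegral.integral_add_adjacent_intervals (hc.intervalIntegrable 0 a)
    (hc.intervalIntegrable a 1)]
  have i1 : ∫ y in (0 : ℝ)..a, Real.exp (-s * y) * max 1 (ξ * Real.exp (s * (y - 1))) =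
      ∫ y in (0 : ℝ)..a, Real.exp (-s * y) := by
    refine intervalIntegral.integral_congr fun y hy => ?_
    rw [uIcc_of_le ha0] at hy
    have : Real.exp (s * (y - a)) ≤ 1 :=
      Real.exp_le_one_iff.2 (mul_nonpos_of_nonneg_of_nonpos hs.le (by linarith [hy.2]))
    simp only [hlog, max_eq_left this, mul_one]
  have i2 : ∫ y in a..1, Real.exp (-s * y) * max 1 (ξ * Real.exp (s * (y - 1))) =
      ∫ y in a..1, ξ * Real.exp (-s) := by
    refine intervalIntegral.integral_congr fun y hy => ?_
    rw [uIcc_of_le ha1] at hy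
    have : 1 ≤ ξ * Real.exp (s * (y - 1)) := by
      rw [hlog]
      exact Real.one_le_exp (mul_nonneg hs.le (by linarith [hy.1]))
    simp only [max_eq_right this]
    rw [mul_left_comm, ← Real.exp_add]
    ring_nf
  have i3 : ∫ y in (0 : ℝ)..a, Real.exp (-s * y) = (1 - ξ * Real.exp (-s)) / s := by
    rw [intervalIntegral.integral_comp_mul_left _ (by linarith : -s ≠ 0), integral_exp]
    have : Real.exp (-s * a) = ξ * Real.exp (-s) := by
      have := hlog 0
      rw [show s * (0 - 1) = -s by ring, show s * (0 - a) = -s * a by ring] at this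
      exact this.symm
    rw [this]
    simp
    field_simp
    ring
  have he : Real.exp (-s) * Real.exp s = 1 := by rw [← Real.exp_add]; simp
  rw [i1, i2, i3, intervalIntegral.integral_const, smul_eq_mul, ha]
  field_simp
  linear_combination -he

/-- A one-parameter family of strategies covering both regimes of `χ`: the parameter `ξ = 1` serves
`s ≤ log 2`, and the root of `ξ (2 - log ξ) = e^s` serves `log 2 ≤ s`. -/
theorem exists_strategy {s ξ : ℝ} (hs : 0 < s) (h1 : 1 ≤ ξ) (h2 : ξ ≤ Real.exp s)
    (h3 : Real.exp s ≤ ξ * (2 - Real.log ξ)) :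
    ∃ μ : Measure (ℤ → ℝ), IsBidStrategy μ ∧
      (∀ T > 0, bidCost μ T ≤ ENNReal.ofReal (Real.exp s / s * T)) ∧
      bidCost μ 1 ≤ ENNReal.ofReal ((Real.exp s - ξ + ξ * Real.log ξ) / s) := by
  have hξ : 0 < ξ := by linarith
  have he : Real.exp (-s) * Real.exp s = 1 := by rw [← Real.exp_add]; simp
  set f : ℝ → ℝ := fun x => max 1 (ξ * Real.exp (s * (x - 1))) with hf
  have hfc : Continuous f := by fun_prop
  have hf1 : ∀ x, 1 ≤ f x := fun x => le_max_left _ _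
  have hfi : ∀ a b, IntervalIntegrable f volume a b := fun a b => hfc.intervalIntegrable a b
  let P : ℝ → ℝ := fun t => ∫ y in (0 : ℝ)..t, f y
  have hP : ∀ t, HasDerivAt P (f t) t := fun t =>
    intervalIntegral.integral_hasDerivAt_right (hfi 0 t)
      (hfc.stronglyMeasurableAtFilter _ _) hfc.continuousAt
  have hPc : Continuous P := continuous_iff_continuousAt.2 fun t => (hP t).continuousAt
  have hPpos : ∀ t, 0 < t → 0 < P t := fun t ht =>
    intervalIntegral.intervalIntegral_pos_of_pos_on (hfi _ _)
      (fun y _ => zero_lt_one.trans_le (hf1 y)) ht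
  -- `c` is the value of `G` at `0` forced by the renewal identity.
  let K : ℝ := ∫ y in (0 : ℝ)..1, Real.exp (-s * y) * P y
  have hK : 0 < K := intervalIntegral.intervalIntegral_pos_of_pos_on
    (Continuous.intervalIntegrable (by fun_prop) _ _)
    (fun y hy => mul_pos (Real.exp_pos _) (hPpos y hy.1)) one_pos
  let c : ℝ := s * Real.exp s * K
  have hcpos : 0 < c := by positivity
  have hparts : s * K = Real.exp (-s) * ((Real.exp s - ξ + ξ * Real.log ξ) / s)
      - Real.exp (-s) * P 1 := by
    rw [← integral_exp_mul_forward hs h1 h2]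
    have hd : ∀ y ∈ uIcc (0 : ℝ) 1, HasDerivAt (fun y => Real.exp (-s * y) * P y)
        (Real.exp (-s * y) * f y - s * (Real.exp (-s * y) * P y)) y := by
      intro y _
      have e1 : HasDerivAt (fun y => Real.exp (-s * y)) (Real.exp (-s * y) * (-s)) y := by
        simpa using ((hasDerivAt_id y).const_mul (-s)).exp
      exact (e1.mul (hP y)).congr_deriv (by ring)
    have := intervalIntegral.integral_eq_sub_of_hasDerivAt hd
      (Continuous.intervalIntegrable (by fun_prop) _ _)
    rw [intervalIntegral.integral_sub (Continuous.intervalIntegrable (by fun_prop) _ _)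
      (Continuous.intervalIntegrable (by fun_prop) _ _),
      intervalIntegral.integral_const_mul] at this
    have hP0 : P 0 = 0 := intervalIntegral.integral_same
    simp only [hP0, mul_one, mul_zero, sub_zero] at this
    linarith
  have hc1 : c + P 1 = (Real.exp s - ξ + ξ * Real.log ξ) / s := by
    linear_combination Real.exp s * hparts +
      ((Real.exp s - ξ + ξ * Real.log ξ) / s - P 1) * he
  obtain ⟨F, hFi, hFf, hFb⟩ := exists_backward_solution f hfc c (s * Real.exp (-s))
  let G : ℝ → ℝ := fun t => c + ∫ y in (0 : ℝ)..t, F y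
  have hGc : Continuous G := continuous_const.add (intervalIntegral.continuous_primitive hFi 0)
  have hGP : ∀ t, 0 ≤ t → G t = c + P t := by
    intro t ht
    simp only [G, P]
    congr 1
    refine intervalIntegral.integral_congr fun y hy => hFf y ?_
    rw [uIcc_of_le ht] at hy
    exact hy.1
  have hFG : ∀ a b, ∫ x in a..b, F x = G b - G a := by
    intro a b
    simp only [G]
    rw [add_sub_add_left_eq_sub,
      intervalIntegral.integral_interval_sub_left (hFi _ _) (hFi _ _)]
  have hFb' : ∀ t < 0, F t = s * Real.exp (-s) * G (t + 1) := hFb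
  have hFm : ∀ t < 0, HasDerivAt G (F t) t := by
    intro t ht
    have hev : F =ᶠ[nhds t] fun x => s * Real.exp (-s) * G (x + 1) := by
      filter_upwards [Iio_mem_nhds ht] with x hx using hFb' x hx
    have hcont : ContinuousAt F t :=
      (ContinuousAt.congr (by fun_prop) hev.symm)
    have hmeas : StronglyMeasurableAtFilter F (nhds t) volume :=
      ⟨Iio 0, Iio_mem_nhds ht, by
        refine (Continuous.aestronglyMeasurable (f := fun x => s * Real.exp (-s) * G (x + 1))
          (by fun_prop)).congr ?_
        filter_upwards [ae_restrict_mem measurableSet_Iio] with x hx using (hFb' x hx).symm⟩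
    exact (intervalIntegral.integral_hasDerivAt_right (hFi 0 t) hmeas hcont).const_add c
  have hzero : G 0 = s * ∫ y in (0 : ℝ)..1, Real.exp (-s * y) * G y := by
    have e1 : ∫ y in (0 : ℝ)..1, Real.exp (-s * y) * G y =
        (∫ y in (0 : ℝ)..1, Real.exp (-s * y)) * c + K := by
      rw [← intervalIntegral.integral_mul_const, ← intervalIntegral.integral_add
        (Continuous.intervalIntegrable (by fun_prop) _ _)
        (Continuous.intervalIntegrable (by fun_prop) _ _)]
      refine intervalIntegral.integral_congr fun y hy => ?_
      rw [uIcc_of_le zero_le_one] at hy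
      simp only [hGP y hy.1]
      ring
    have e2 : s * ∫ y in (0 : ℝ)..1, Real.exp (-s * y) = 1 - Real.exp (-s) := by
      rw [intervalIntegral.integral_comp_mul_left _ (by linarith : -s ≠ 0), integral_exp]
      simp
      field_simp
      ring
    have e3 : G 0 = c := by simp [G]
    rw [e1, e3]
    simp only [c] at e2 ⊢
    linear_combination (- s * Real.exp s * K) * e2 + s * K * he
  have hG0 : ∀ t, 0 ≤ t → 0 < G t := by
    intro t ht
    rw [hGP t ht]
    rcases ht.eq_or_lt with rfl | ht
    · simpa [P] using hcpos
    · linarith [hPpos t ht]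
  have hGpos : ∀ t, 0 < G t :=
    pos_of_renewal hGc hG0 hs (renewal_identity hGc hFm hFb' hzero)
  have hFpos : ∀ x, 0 < F x := by
    intro x
    rcases lt_or_ge x 0 with hx | hx
    · rw [hFb' x hx]
      have := hGpos (x + 1)
      positivity
    · rw [hFf x hx]
      linarith [hf1 x]
  have hGmono : StrictMono G := by
    intro a b hab
    have := intervalIntegral.intervalIntegral_pos_of_pos_on (hFi a b) (fun y _ => hFpos y) hab
    rw [hFG] at this
    linarith
  have hχ : (Real.exp s - ξ + ξ * Real.log ξ) / s ≤ ξ / s := by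
    gcongr
    linarith
  have hG1 : G 1 = (Real.exp s - ξ + ξ * Real.log ξ) / s := by rw [hGP 1 zero_le_one, hc1]
  have hF1 : ∀ x < 0, F x < 1 := by
    intro x hx
    have hlt : G (x + 1) < Real.exp s / s :=
      calc G (x + 1) < G 1 := hGmono (by linarith)
        _ ≤ ξ / s := hG1 ▸ hχ
        _ ≤ Real.exp s / s := by gcongr
    calc F x = s * Real.exp (-s) * G (x + 1) := hFb' x hx
      _ < s * Real.exp (-s) * (Real.exp s / s) := by gcongr
      _ = 1 := by field_simp; exact he
  have hfmono : Monotone f := by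
    intro a b hab
    simp only [hf]
    gcongr
  have hFmono : Monotone F := by
    intro a b hab
    rcases lt_or_ge a 0 with ha | ha
    · rcases lt_or_ge b 0 with hb | hb
      · rw [hFb' a ha, hFb' b hb]
        have := hGmono.monotone (add_le_add_left hab 1)
        gcongr
      · rw [hFf b hb]
        exact (hF1 a ha).le.trans (hf1 b)
    · rw [hFf a ha, hFf b (ha.trans hab)]
      exact hfmono hab
  have hFmeas : Measurable F := hFmono.measurable
  have hstep : ∀ x, x ≠ 0 → F x < F (x + 1) := by
    intro x hx0
    rcases lt_or_gt_of_ne hx0 with hx | hx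
    · rcases lt_or_ge (x + 1) 0 with hx1 | hx1
      · rw [hFb' x hx, hFb' _ hx1]
        have := hGmono (lt_add_one (x + 1))
        gcongr
      · rw [hFf _ hx1]
        exact (hF1 x hx).trans_le (hf1 _)
    · rw [hFf x hx.le, hFf _ (by linarith)]
      have h : 1 < ξ * Real.exp (s * (x + 1 - 1)) := by
        have : 1 < Real.exp (s * (x + 1 - 1)) := Real.one_lt_exp_iff.2 (by simpa using mul_pos hs hx)
        nlinarith
      have h' : ξ * Real.exp (s * (x - 1)) < ξ * Real.exp (s * (x + 1 - 1)) := by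
        gcongr
        linarith
      exact (max_lt h h').trans_le (le_max_right _ _)
  -- Comparison with the exact solution `ξ e^{s(t-1)} / s` of `G (t + 1) = ρ G' t`; it is at least `G`
  -- at `t = 1` precisely because `e^s ≤ ξ (2 - log ξ)`.
  have hGe : ∀ t, 1 ≤ t → G t ≤ ξ * Real.exp (s * (t - 1)) / s := by
    intro t ht
    have e1 : G t - G 1 = ∫ x in (1 : ℝ)..t, ξ * Real.exp (s * (x - 1)) := by
      rw [← hFG]
      refine intervalIntegral.integral_congr fun y hy => ?_
      rw [uIcc_of_le ht] at hy
      have : 1 ≤ Real.exp (s * (y - 1)) := Real.one_le_exp (mul_nonneg hs.le (by linarith [hy.1]))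
      rw [hFf y (by linarith [hy.1])]
      exact max_eq_right (by nlinarith)
    have e2 : ∫ x in (1 : ℝ)..t, ξ * Real.exp (s * (x - 1)) =
        ξ * Real.exp (s * (t - 1)) / s - ξ / s := by
      have hd : ∀ y ∈ uIcc (1 : ℝ) t, HasDerivAt (fun y => ξ * Real.exp (s * (y - 1)) / s)
          (ξ * Real.exp (s * (y - 1))) y := by
        intro y _
        have := ((((hasDerivAt_id y).sub_const 1).const_mul s).exp.const_mul ξ).div_const s
        refine this.congr_deriv ?_
        simp
        field_simp
      rw [intervalIntegral.integral_eq_sub_of_hasDerivAt hd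
        (Continuous.intervalIntegrable (by fun_prop) _ _)]
      simp
    linarith
  have hrob : ∀ t, G (t + 1) ≤ Real.exp s / s * F t := by
    intro t
    rcases lt_or_ge t 0 with ht | ht
    · rw [hFb' t ht]
      refine le_of_eq ?_
      field_simp
      linear_combination (-G (t + 1)) * he
    · calc G (t + 1) ≤ ξ * Real.exp (s * (t + 1 - 1)) / s := hGe _ (by linarith)
        _ = Real.exp s / s * (ξ * Real.exp (s * (t - 1))) := by
          rw [show s * (t + 1 - 1) = s + s * (t - 1) by ring, Real.exp_add]
          ring
        _ ≤ Real.exp s / s * F t := by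
          rw [hFf t ht]
          gcongr
          exact le_max_right _ _
  have hcost : ∀ T τ, (∀ t, F t < T → t ≤ τ) →
      bidCost (unfoldStrategy F) T ≤ ENNReal.ofReal (G (τ + 1)) := fun T τ h =>
    (bidCost_unfoldStrategy_le hFmeas h).trans (lintegral_Iic_le hFpos hFi hFG hGpos _)
  have hbdd : ∀ T, BddAbove {t | F t < T} := by
    intro T
    refine ⟨max 0 (1 + T / s), fun t ht => ?_⟩
    rcases lt_or_ge t 0 with h | h
    · exact h.le.trans (le_max_left _ _)
    · refine le_trans ?_ (le_max_right _ _)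
      have ht' : f t < T := hFf t h ▸ ht
      have h4 : ξ * Real.exp (s * (t - 1)) ≤ f t := le_max_right _ _
      have h5 := Real.add_one_le_exp (s * (t - 1))
      have h6 := Real.exp_pos (s * (t - 1))
      have h7 : (t - 1) ≤ T / s := by
        rw [le_div_iff₀ hs]
        nlinarith
      linarith
  refine ⟨unfoldStrategy F, isBidStrategy_unfoldStrategy hFmeas hFpos fun n u hu => ?_,
    fun T _ => robust_of_le hGc (by positivity) hrob hcost hFmeas hbdd T, ?_⟩
    -- `n + u` is not an integer, hence not the exceptional point `0`.
  · refine hstep _ fun h => ?_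
    have e1 : (n : ℝ) < 0 := by linarith [hu.1]
    have e2 : (-1 : ℝ) < n := by linarith [hu.2]
    have e3 : n < 0 := by exact_mod_cast e1
    have e4 : -1 < n := by exact_mod_cast e2
    omega
  · have := hcost 1 0 fun t ht => not_lt.1 fun h => by
      have := hf1 t
      rw [← hFf t h.le] at this
      linarith
    rwa [zero_add, hG1] at this

theorem exists_pareto_optimal_bidding_strategy
    (s : ℝ) (hs : s ∈ Set.Ioc (0 : ℝ) 1) (χ : ℝ) (hχ : IsChiVal s χ) :
    ∃ μ : Measure (ℤ → ℝ), IsBidStrategy μ ∧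
      (∀ T > 0, bidCost μ T ≤ ENNReal.ofReal (Real.exp s / s * T)) ∧
      bidCost μ 1 ≤ ENNReal.ofReal χ := by
  rcases hχ with ⟨hs2, rfl⟩ | ⟨-, ξ, ⟨h1, he⟩, hξ, rfl⟩
  · have h2 : Real.exp s ≤ 2 := (Real.le_log_iff_exp_le two_pos).1 hs2
    simpa using exists_strategy (ξ := 1) hs.1 le_rfl (Real.one_le_exp hs.1.le) (by simpa using h2)
  · have hl : Real.log ξ ≤ 1 := (Real.log_le_iff_le_exp (by linarith)).2 he
    have h2 : ξ ≤ Real.exp s := by nlinarith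
    have h := exists_strategy hs.1 h1 h2 hξ.ge
    rwa [show Real.exp s - ξ + ξ * Real.log ξ = ξ by linarith] at h
end

section
/- For every s ∈ (0,1], every randomized online bidding strategy μ that is ρ(s)-robust (i.e., cost_μ(T) ≤ (e^s/s)·T for all T > 0) satisfies cost_μ(1) ≥ χ(s); in other words, no ρ(s)-robust strategy is χ-consistent for any χ < χ(s). -/
/-!
The lower bound rests on comparing all strategies through the intensity of their bids. For a
threshold `T`, let `A T` be the expected total of the bids below `T` and `N T` the expected signed
number of bids between `1` and `T`. Put `S n = sup_T (A T + T (n - N T))`: by duality this is the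
least expected total of `n` bids, counted from the threshold `1`, when the smallest bids are taken
first. The cost at `T` charges all bids below `T` and exactly one further bid, so
`S (N T + 1) ≤ cost T` (`GoodBids.le_pathCost`, which is a pathwise statement).

If `N T ≤ n` then `S` has slope at least `T` to the right of `n`. Together with `cost T ≤ ρT` this
yields the two properties of `S` that matter: `S' n ≥ S (n + 1) / ρ` everywhere, and `S' ≥ 1` to the
right of `0` (`chi_le_of_profile`). It remains to bound `S 1 ≤ cost 1` from below.

* The advanced differential inequality forces exponential growth: an admissible growth rate `k`
  improves to `e^k / ρ`, hence the best rate satisfies `e^k ≤ ρk`, and as `ρ = e^s / s` this means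
  `k ≥ s` (`exp_growth`). So `G u = e^{-su} S u` is nondecreasing.
* At the points of differentiability, `G' = e^{-su} S' - sG ≥ s (G (u + 1) - G u)`. Integrating this
  over `[-N, 1]` and telescoping, with `S' ≥ 1` used instead on `[0, c]`, and `G (u + 1) ≥ G 1` on
  `[c, 1]`, gives `sS(1) ≥ e^s - e^{s(1-c)} + (1-c) s · sS(1)` (`value_ineq`).
* The choice `c = 1` gives `sS(1) ≥ e^s - 1`; the choice `1 - c = (ln ξ)/s` gives `sS(1) ≥ ξ`
  (`chi_le_value`).

Derivatives are only needed almost everywhere, by Lebesgue's theorem for monotone functions.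
-/

open MeasureTheory Set
open scoped ENNReal

/-! ### Growth of the value function -/

/-- If `S` gains at least `S(n+1)/ρ` per unit of length from `n` on, with `ρ = e^s/s`, then it grows
at least at the exponential rate `s`. The set of admissible rates is closed, and it is stable under
`k ↦ e^k/ρ`; its maximum `k` thus satisfies `e^k ≤ ρk`, which forces `k ≥ s` as `x ↦ e^x/x`
decreases on `(0,1]`. -/
lemma exp_growth {S : ℝ → ℝ} {s : ℝ} (hs0 : 0 < s) (hs1 : s ≤ 1)
    (h0 : ∀ n, 0 ≤ S n) (hpos : ∃ n, 0 < S n)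
    (h1 : ∀ n m, n ≤ m → S (n + 1) / (Real.exp s / s) * (m - n) ≤ S m - S n) :
    ∀ n h, 0 ≤ h → Real.exp (s * h) * S n ≤ S (n + h) := by
  have hρ : 0 < Real.exp s / s := by positivity
  set ρ := Real.exp s / s with hρdef
  let K : Set ℝ := {k | 0 ≤ k ∧ ∀ n h, 0 ≤ h → Real.exp (k * h) * S n ≤ S (n + h)}
  have hK0 : (0 : ℝ) ∈ K := by
    refine ⟨le_rfl, fun n h hh => ?_⟩
    have := h1 n (n + h) (by linarith)
    have h3 : 0 ≤ S (n + 1) / ρ * (n + h - n) :=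
      mul_nonneg (div_nonneg (h0 _) hρ.le) (by linarith)
    simp only [zero_mul, Real.exp_zero, one_mul]
    linarith
  have hKbdd : BddAbove K := by
    obtain ⟨n, hn⟩ := hpos
    refine ⟨S (n + 1) / S n, fun k hk => ?_⟩
    have h2 := hk.2 n 1 zero_le_one
    rw [mul_one] at h2
    rw [le_div_iff₀ hn]
    have := Real.add_one_le_exp k
    nlinarith
  have hKcl : IsClosed K := by
    have : K = Ici 0 ∩ ⋂ n : ℝ, ⋂ h : ℝ, ⋂ _ : 0 ≤ h,
        {k | Real.exp (k * h) * S n ≤ S (n + h)} := by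
      ext k; simp [K]
    rw [this]
    refine isClosed_Ici.inter (isClosed_iInter fun n => isClosed_iInter fun h =>
      isClosed_iInter fun _ => isClosed_le (by fun_prop) continuous_const)
  have hk0 := hKcl.csSup_mem ⟨0, hK0⟩ hKbdd
  set k := sSup K
  have hstep : Real.exp k / ρ ∈ K := by
    set κ := Real.exp k / ρ
    have hκ : 0 ≤ κ := by positivity
    refine ⟨hκ, fun n h hh => ?_⟩
    have one : ∀ n h, 0 ≤ h → (1 + κ * h) * S n ≤ S (n + h) := by
      intro n h hh
      have a := h1 n (n + h) (by linarith)
      have b := hk0.2 n 1 zero_le_one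
      rw [mul_one] at b
      have c : κ * S n ≤ S (n + 1) / ρ := by
        rw [le_div_iff₀ hρ]
        calc κ * S n * ρ = Real.exp k * S n := by
              simp only [κ]; field_simp
          _ ≤ _ := b
      nlinarith [mul_le_mul_of_nonneg_right c hh]
    have many : ∀ (j : ℕ) (h : ℝ), 0 ≤ h → (1 + κ * h) ^ j * S n ≤ S (n + j * h) := by
      intro j h hh
      induction j with
      | zero => simp
      | succ j ih =>
        have a := one (n + j * h) h hh
        have b := mul_le_mul_of_nonneg_left ih (by positivity : 0 ≤ 1 + κ * h)
        calc (1 + κ * h) ^ (j + 1) * S n = (1 + κ * h) * ((1 + κ * h) ^ j * S n) := by ring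
          _ ≤ _ := b
          _ ≤ _ := a
          _ = _ := by push_cast; ring_nf
    have lim := (Real.tendsto_one_add_div_pow_exp (κ * h)).mul_const (S n)
    refine le_of_tendsto lim ?_
    filter_upwards [Filter.eventually_gt_atTop 0] with j hj
    have hj' : (0 : ℝ) < j := by exact_mod_cast hj
    have := many j (h / j) (by positivity)
    rwa [← mul_div_assoc, mul_div_cancel₀ h hj'.ne'] at this
  have hle : Real.exp k / ρ ≤ k := le_csSup hKbdd hstep
  have hsk : s ≤ k := by
    by_contra! hlt
    rw [div_le_iff₀ hρ, hρdef] at hle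
    have e1 : Real.exp k = Real.exp s * Real.exp (-(s - k)) := by
      rw [← Real.exp_add]; ring_nf
    have e2 : -(s - k) + 1 < Real.exp (-(s - k)) := Real.add_one_lt_exp (by linarith)
    have e3 : s * Real.exp (-(s - k)) ≤ k := by
      have : k * (Real.exp s / s) = Real.exp s * (k / s) := by ring
      rw [this, e1] at hle
      have := le_of_mul_le_mul_left hle (Real.exp_pos s)
      rw [le_div_iff₀ hs0] at this
      linarith
    nlinarith
  intro n h hh
  refine le_trans ?_ (hk0.2 n h hh)
  have : s * h ≤ k * h := mul_le_mul_of_nonneg_right hsk hh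
  exact mul_le_mul_of_nonneg_right (Real.exp_le_exp.2 this) (h0 n)

lemma le_deriv_of_right {S : ℝ → ℝ} {u d c : ℝ} (hd : HasDerivAt S d u)
    (h : ∀ m, u ≤ m → c * (m - u) ≤ S m - S u) : c ≤ d := by
  have h2 := (hasDerivAt_iff_tendsto_slope.1 hd).mono_left
    (nhdsWithin_mono u (fun x (hx : x ∈ Ioi u) => ne_of_gt hx))
  refine ge_of_tendsto h2 ?_
  filter_upwards [self_mem_nhdsWithin] with m hm
  have hm' : u < m := hm
  rw [slope_def_field, le_div_iff₀ (by linarith)]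
  exact h m hm'.le

/-- A monotone function increases by at least the integral of a pointwise lower bound for its
derivative: the absolutely continuous part of its variation is at most the total. -/
lemma integral_le_of_monotone {G f : ℝ → ℝ} (hG : Monotone G) {a b : ℝ} (hab : a ≤ b)
    (hf : IntervalIntegrable f volume a b)
    (h : ∀ u ∈ Icc a b, DifferentiableAt ℝ G u → f u ≤ deriv G u) :
    ∫ u in a..b, f u ≤ G b - G a := by
  have hm := hG.monotoneOn (uIcc a b)
  have h1 := hm.intervalIntegral_deriv_mem_uIcc
  rw [uIcc_of_le (sub_nonneg.2 (hG hab))] at h1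
  refine le_trans (intervalIntegral.integral_mono_ae_restrict hab hf hm.intervalIntegrable_deriv ?_)
    h1.2
  rw [Filter.EventuallyLE, MeasureTheory.ae_restrict_iff' measurableSet_Icc]
  filter_upwards [hG.ae_differentiableAt] with u hu hmem using h u hmem hu

/-- The key inequality for the value function `S`: with `G(u) = e^{-su}S(u)`, integrating
`G' = e^{-su}S' - sG` over `[-N, 1]` with `S' ≥ S(·+1)/ρ`, except on `[0,c]` where `S' ≥ 1` is used,
makes the integrals of `G` telescope up to `G(-N) - G(1-N)`, which tends to `0`. -/
lemma value_ineq {S : ℝ → ℝ} {s : ℝ} (hs0 : 0 < s) (hs1 : s ≤ 1)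
    (h0 : ∀ n, 0 ≤ S n)
    (h1 : ∀ n m, n ≤ m → S (n + 1) / (Real.exp s / s) * (m - n) ≤ S m - S n)
    (h2 : ∀ n m, 0 ≤ n → n ≤ m → m - n ≤ S m - S n)
    {c : ℝ} (hc0 : 0 ≤ c) (hc1 : c ≤ 1) :
    Real.exp s - Real.exp (s * (1 - c)) + (1 - c) * s * (s * S 1) ≤ s * S 1 := by
  have hgrow := exp_growth hs0 hs1 h0
    ⟨1, by have := h2 0 1 le_rfl zero_le_one; have := h0 0; linarith⟩ h1
  set G : ℝ → ℝ := fun u => Real.exp (-s * u) * S u with hGdef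
  have hG0 : ∀ u, 0 ≤ G u := fun u => mul_nonneg (Real.exp_pos _).le (h0 u)
  have hGm : Monotone G := by
    intro a b hab
    have := hgrow a (b - a) (by linarith)
    rw [add_sub_cancel] at this
    have h3 := mul_le_mul_of_nonneg_left this (Real.exp_pos (-s * b)).le
    rw [← mul_assoc, ← Real.exp_add] at h3
    simp only [hGdef]
    convert h3 using 3
    ring
  have hder : ∀ (u k : ℝ), (∀ m, u ≤ m → k * (m - u) ≤ S m - S u) → DifferentiableAt ℝ G u →
      Real.exp (-s * u) * k - s * G u ≤ deriv G u := by
    intro u k hk hd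
    have hS : S = fun x => Real.exp (s * x) * G x := by
      funext x
      simp only [hGdef]
      rw [← mul_assoc, ← Real.exp_add]
      simp
    have e1 : HasDerivAt (fun x => Real.exp (s * x)) (Real.exp (s * u) * s) u := by
      simpa using ((hasDerivAt_id u).const_mul s).exp
    have e2 := e1.mul hd.hasDerivAt
    have e3 : HasDerivAt S (Real.exp (s * u) * s * G u + Real.exp (s * u) * deriv G u) u :=
      e2.congr_of_eventuallyEq (Filter.Eventually.of_forall fun x => congrFun hS x)
    have e4 := le_deriv_of_right e3 hk
    have e5 := mul_le_mul_of_nonneg_left e4 (Real.exp_pos (-s * u)).le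
    have e6 : Real.exp (-s * u) * Real.exp (s * u) = 1 := by
      rw [← Real.exp_add]; simp
    have e7 : Real.exp (-s * u) * (Real.exp (s * u) * s * G u + Real.exp (s * u) * deriv G u)
        = (Real.exp (-s * u) * Real.exp (s * u)) * (s * G u + deriv G u) := by ring
    rw [e7, e6] at e5
    linarith
  have hder1 : ∀ u, DifferentiableAt ℝ G u → s * G (u + 1) - s * G u ≤ deriv G u := by
    intro u hd
    have := hder u _ (fun m hm => h1 u m hm) hd
    refine le_trans (le_of_eq ?_) this
    congr 1
    simp only [hGdef]
    have : Real.exp (-s * (u + 1)) = Real.exp (-s * u) / Real.exp s := by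
      rw [← Real.exp_sub]; ring_nf
    rw [this]
    field_simp
  have hGi : ∀ a b, IntervalIntegrable G volume a b := fun a b => hGm.intervalIntegrable
  have hG1i : ∀ a b, IntervalIntegrable (fun u => G (u + 1)) volume a b := fun a b =>
    Monotone.intervalIntegrable (fun x y hxy => hGm (by linarith))
  have key : ∀ N : ℕ, Real.exp (-s * 0) / s - Real.exp (-s * c) / s + (1 - c) * (s * G 1)
      + (G (-(N : ℝ)) - G (1 - (N : ℝ))) ≤ G 1 := by
    intro N
    have hN : -(N : ℝ) ≤ 0 := by simp
    have A := integral_le_of_monotone hGm hN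
      (((hG1i _ _).const_mul s).sub ((hGi _ _).const_mul s)) (fun u _ hu => hder1 u hu)
    have B := integral_le_of_monotone hGm hc0
      (f := fun u => Real.exp (-s * u) - s * G u)
      (IntervalIntegrable.sub (by apply Continuous.intervalIntegrable; fun_prop)
        ((hGi _ _).const_mul s))
      (fun u hu hd => by
        have := hder u 1 (fun m hm => by simpa using h2 u m hu.1 hm) hd
        simpa using this)
    have C := integral_le_of_monotone hGm hc1
      (f := fun u => s * G 1 - s * G u)
      (IntervalIntegrable.sub (by simp) ((hGi _ _).const_mul s))
      (fun u hu hd => by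
        have h3 := hder1 u hd
        have h4 : G 1 ≤ G (u + 1) := hGm (by linarith [hu.1])
        nlinarith)
    rw [intervalIntegral.integral_sub ((hG1i _ _).const_mul s) ((hGi _ _).const_mul s),
      intervalIntegral.integral_const_mul, intervalIntegral.integral_const_mul,
      intervalIntegral.integral_comp_add_right (fun u => G u)] at A
    rw [intervalIntegral.integral_sub (by apply Continuous.intervalIntegrable; fun_prop)
        ((hGi _ _).const_mul s), intervalIntegral.integral_const_mul] at B
    rw [intervalIntegral.integral_sub (by simp) ((hGi _ _).const_mul s),
      intervalIntegral.integral_const, smul_eq_mul, intervalIntegral.integral_const_mul] at C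
    have E : ∫ u in (0 : ℝ)..c, Real.exp (-s * u)
        = Real.exp (-s * 0) / s - Real.exp (-s * c) / s := by
      rw [intervalIntegral.integral_comp_mul_left (fun x => Real.exp x) (by linarith : -s ≠ 0)]
      simp
      field_simp
      ring
    have J1 := intervalIntegral.integral_add_adjacent_intervals (hGi 0 c) (hGi c 1)
    have J2 := intervalIntegral.integral_add_adjacent_intervals (hGi (-N) 0) (hGi 0 1)
    have J3 := intervalIntegral.integral_add_adjacent_intervals (hGi (-N) (-N + 1))
      (hGi (-N + 1) 1)
    have J4 : ∫ u in (-N : ℝ)..(-N + 1), G u ≤ G (1 - N) := by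
      have := intervalIntegral.integral_mono_on (by linarith : (-N : ℝ) ≤ -N + 1) (hGi _ _)
        (_root_.intervalIntegrable_const (c := G (1 - N)))
        (fun u hu => hGm (by linarith [hu.2] : u ≤ 1 - N))
      simpa using this
    rw [E] at B
    rw [zero_add] at A
    have J5 := hG0 (1 - N)
    have J6 : s * ∫ u in (-N : ℝ)..(-N + 1), G u ≤ G (1 - N) :=
      (mul_le_mul_of_nonneg_left J4 hs0.le).trans (mul_le_of_le_one_left J5 hs1)
    have J7 : s * ((∫ u in (-N + 1 : ℝ)..1, G u) - (∫ u in (-N : ℝ)..0, G u)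
        - (∫ u in (0 : ℝ)..c, G u) - ∫ u in c..1, G u)
        = s * -(∫ u in (-N : ℝ)..(-N + 1), G u) := by
      congr 1
      linarith
    linarith
  have hlim : Filter.Tendsto (fun N : ℕ => Real.exp (-s * 0) / s - Real.exp (-s * c) / s
      + (1 - c) * (s * G 1) + (G (-(N : ℝ)) - G (1 - (N : ℝ)))) Filter.atTop
      (nhds (Real.exp (-s * 0) / s - Real.exp (-s * c) / s
      + (1 - c) * (s * G 1) + ((⨅ x, G x) - (⨅ x, G x)))) := by
    have hb := tendsto_atBot_ciInf hGm ⟨0, by rintro _ ⟨x, rfl⟩; exact hG0 x⟩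
    have t1 : Filter.Tendsto (fun N : ℕ => -(N : ℝ)) Filter.atTop Filter.atBot :=
      Filter.tendsto_neg_atTop_atBot.comp tendsto_natCast_atTop_atTop
    have t2 : Filter.Tendsto (fun N : ℕ => 1 - (N : ℝ)) Filter.atTop Filter.atBot := by
      simpa [sub_eq_add_neg] using Filter.tendsto_atBot_add_const_left _ 1 t1
    exact tendsto_const_nhds.add ((hb.comp t1).sub (hb.comp t2))
  have fin := le_of_tendsto' hlim key
  have hG1 : G 1 = Real.exp (-s) * S 1 := by simp [hGdef]
  rw [hG1, mul_zero, Real.exp_zero, sub_self, add_zero] at fin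
  have f2 := mul_le_mul_of_nonneg_left fin (by positivity : 0 ≤ s * Real.exp s)
  have x1 : Real.exp s * Real.exp (-s) = 1 := by rw [← Real.exp_add]; simp
  have x2 : Real.exp (s * (1 - c)) = Real.exp s * Real.exp (-s * c) := by
    rw [← Real.exp_add]; ring_nf
  rw [x2]
  have x3 : s * Real.exp s * (1 / s - Real.exp (-s * c) / s
        + (1 - c) * (s * (Real.exp (-s) * S 1)))
      = Real.exp s - Real.exp s * Real.exp (-s * c)
        + (Real.exp s * Real.exp (-s)) * ((1 - c) * s * (s * S 1)) := by
    field_simp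
  have x4 : s * Real.exp s * (Real.exp (-s) * S 1)
      = (Real.exp s * Real.exp (-s)) * (s * S 1) := by ring
  rw [x3, x4, x1] at f2
  linarith

/-- Optimizing `value_ineq` over the length of the interval on which `S' ≥ 1` is used: the whole of
`[0,1]` for `s ≤ ln 2`, and the length `1 - (ln ξ)/s` for `s ≥ ln 2`. -/
lemma chi_le_value {S : ℝ → ℝ} {s χ : ℝ} (hs0 : 0 < s) (hs1 : s ≤ 1) (hχ : IsChiVal s χ)
    (h0 : ∀ n, 0 ≤ S n)
    (h1 : ∀ n m, n ≤ m → S (n + 1) / (Real.exp s / s) * (m - n) ≤ S m - S n)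
    (h2 : ∀ n m, 0 ≤ n → n ≤ m → m - n ≤ S m - S n) : χ ≤ S 1 := by
  rcases hχ with ⟨_, rfl⟩ | ⟨_, ξ, ⟨hξ1, hξe⟩, hξ, rfl⟩
  · have := value_ineq hs0 hs1 h0 h1 h2 zero_le_one le_rfl
    rw [div_le_iff₀ hs0]
    simp at this
    linarith
  · rw [div_le_iff₀ hs0, mul_comm]
    have hξ0 : 0 < ξ := by linarith
    have hl0 : 0 ≤ Real.log ξ := Real.log_nonneg hξ1
    have hl1 : Real.log ξ ≤ 1 := by
      rw [Real.log_le_iff_le_exp hξ0]; exact hξe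
    have gen : ∀ l, 0 ≤ l → l ≤ s → Real.exp s - Real.exp l + l * (s * S 1) ≤ s * S 1 := by
      intro l hl hls
      have := value_ineq hs0 hs1 h0 h1 h2 (c := 1 - l / s)
        (by rw [sub_nonneg, div_le_one hs0]; exact hls) (by simp; positivity)
      rw [sub_sub_cancel, mul_div_cancel₀ _ hs0.ne', div_mul_cancel₀ _ hs0.ne'] at this
      exact this
    rcases hl1.lt_or_eq with hlt | heq
    · have hls : Real.log ξ ≤ s := by
        rw [Real.log_le_iff_le_exp hξ0, ← hξ]
        nlinarith
      have := gen _ hl0 hls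
      rw [Real.exp_log hξ0, ← hξ] at this
      have h3 : 0 < 1 - Real.log ξ := by linarith
      nlinarith
    · -- The interval degenerates when `ξ = e`, that is `s = 1`, so it is approached from above.
      have hξe' : ξ = Real.exp 1 := by rw [← heq, Real.exp_log hξ0]
      have hs : s = 1 := by
        rw [heq, hξe'] at hξ
        norm_num at hξ
        linarith
      subst hs
      have hcont : Filter.Tendsto (fun l : ℝ => Real.exp l) (nhdsWithin 1 (Iio 1))
          (nhds (Real.exp 1)) := (Real.continuous_exp.tendsto 1).mono_left nhdsWithin_le_nhds
      rw [hξe']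
      refine le_of_tendsto hcont ?_
      filter_upwards [Ioo_mem_nhdsLT (zero_lt_one' ℝ)] with l hl
      have a := gen l hl.1.le hl.2.le
      have b : Real.exp l * (1 - l) ≤ Real.exp 1 - Real.exp l := by
        have := Real.add_one_le_exp (1 - l)
        have e : Real.exp 1 = Real.exp l * Real.exp (1 - l) := by
          rw [← Real.exp_add]; ring_nf
        rw [e]
        nlinarith [Real.exp_pos l]
      have : 0 < 1 - l := by linarith [hl.2]
      nlinarith

/-- The reduction from strategies to a value function. Here `A T` stands for the expected total of
the bids below `T`, `N T` for the expected signed number of bids between `1` and `T`, and `C T` for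
the cost at `T`. The value `S n = sup_T (A T + T (n - N T))` is the least total that an expected
number `n` of bids, counted from the threshold `1` and taken from the smallest upwards, can have. -/
lemma chi_le_of_profile {A N C : ℝ → ℝ} {s χ : ℝ} (hs0 : 0 < s) (hs1 : s ≤ 1) (hχ : IsChiVal s χ)
    (hA : ∀ T, 0 < T → 0 ≤ A T) (hN : ∀ T T', 0 < T → T ≤ T' → N T ≤ N T') (hN1 : N 1 = 0)
    (hC : ∀ T, 0 < T → C T ≤ Real.exp s / s * T)
    (hCA : ∀ T T', 0 < T → 0 < T' → A T' + T' * (1 + N T - N T') ≤ C T)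
    (hAA : ∀ T T', 0 < T → 0 < T' → A T' + T' * (N T - N T') ≤ A T) : χ ≤ C 1 := by
  have hρ : 0 < Real.exp s / s := by positivity
  -- Robustness makes the bids accumulate: half a bid is expected between `T` and `2ρT`.
  have hstep : ∀ T, 0 < T → N T + 1 / 2 ≤ N (2 * (Real.exp s / s) * T) := by
    intro T hT
    have hT' : 0 < 2 * (Real.exp s / s) * T := by positivity
    have a := hCA T _ hT hT'
    have b := hC T hT
    have c := hA _ hT'
    set ρ := Real.exp s / s
    have d : (ρ * T) * (2 * (1 + N T - N (2 * ρ * T))) ≤ (ρ * T) * 1 := by linarith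
    have := le_of_mul_le_mul_left d (by positivity)
    linarith
  have hunb : ∀ n : ℝ, ∃ T, 0 < T ∧ n ≤ N T := by
    have : ∀ j : ℕ, ∃ T, 0 < T ∧ (j : ℝ) * (1 / 2) ≤ N T := by
      intro j
      induction j with
      | zero => exact ⟨1, one_pos, by simp [hN1]⟩
      | succ j ih =>
        obtain ⟨T, hT, h⟩ := ih
        refine ⟨_, by positivity, le_trans ?_ (hstep T hT)⟩
        push_cast; linarith
    intro n
    obtain ⟨j, hj⟩ := exists_nat_ge (n * 2)
    obtain ⟨T, hT, h⟩ := this j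
    exact ⟨T, hT, by linarith⟩
  let S : ℝ → ℝ := fun n => ⨆ T : Ioi (0 : ℝ), (A T + T * (n - N T))
  have hle : ∀ n T, 0 < T → n ≤ 1 + N T → ∀ T' : Ioi (0 : ℝ), A T' + T' * (n - N T') ≤ C T := by
    intro n T hT hn T'
    refine le_trans ?_ (hCA T T' hT T'.2)
    have : (0 : ℝ) < T' := T'.2
    nlinarith
  have hbdd : ∀ n, BddAbove (range fun T : Ioi (0 : ℝ) => A T + T * (n - N T)) := by
    intro n
    obtain ⟨T, hT, h⟩ := hunb n
    exact ⟨C T, by rintro _ ⟨T', rfl⟩; exact hle n T hT (by linarith) T'⟩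
  haveI : Nonempty (Ioi (0 : ℝ)) := ⟨⟨1, mem_Ioi.2 one_pos⟩⟩
  have hSge : ∀ n T, 0 < T → A T + T * (n - N T) ≤ S n := fun n T hT =>
    le_ciSup (hbdd n) (⟨T, hT⟩ : Ioi (0 : ℝ))
  have hSle : ∀ n T, 0 < T → n ≤ 1 + N T → S n ≤ C T := fun n T hT hn => ciSup_le (hle n T hT hn)
  have hSmono : Monotone S := by
    intro n m hnm
    refine ciSup_le fun T => le_trans ?_ (hSge m T T.2)
    have : (0 : ℝ) < T := T.2
    nlinarith
  have hS0 : ∀ n, 0 ≤ S n := by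
    intro n
    have hlim : Filter.Tendsto (fun T : ℝ => T * n) (nhdsWithin 0 (Ioi 0)) (nhds 0) := by
      have : Filter.Tendsto (fun T : ℝ => T * n) (nhds 0) (nhds (0 * n)) :=
        Filter.tendsto_id.mul_const n
      rw [zero_mul] at this
      exact this.mono_left nhdsWithin_le_nhds
    refine le_of_tendsto hlim ?_
    filter_upwards [Ioo_mem_nhdsGT (zero_lt_one' ℝ)] with T hT
    have a := hSge n T hT.1
    have b := hA T hT.1
    have c := hN T 1 hT.1 hT.2.le
    rw [hN1] at c
    nlinarith [hT.1]
  -- Once `n` bids exceed all bids below `T`, every further bid costs at least `T`.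
  have hslope : ∀ T n m, 0 < T → N T ≤ n → n ≤ m → T * (m - n) ≤ S m - S n := by
    intro T n m hT hTn hnm
    suffices S n ≤ S m - T * (m - n) by linarith
    refine ciSup_le fun T' => ?_
    have hT' : (0 : ℝ) < T' := T'.2
    rcases le_total T (T' : ℝ) with h | h
    · have a := hSge m T' hT'
      nlinarith
    · have a := hSge m T hT
      have b := hAA T T' hT hT'
      nlinarith
  have h1 : ∀ n m, n ≤ m → S (n + 1) / (Real.exp s / s) * (m - n) ≤ S m - S n := by
    intro n m hnm
    set ρ := Real.exp s / s with hρdef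
    rcases (hS0 (n + 1)).eq_or_lt with h | h
    · rw [← h]; simpa using hSmono hnm
    have hx : 0 < S (n + 1) / ρ := by positivity
    have hlim : Filter.Tendsto (fun T : ℝ => T * (m - n)) (nhdsWithin (S (n + 1) / ρ)
        (Iio (S (n + 1) / ρ))) (nhds (S (n + 1) / ρ * (m - n))) :=
      (Filter.tendsto_id.mul_const (m - n)).mono_left nhdsWithin_le_nhds
    refine le_of_tendsto hlim ?_
    filter_upwards [Ioo_mem_nhdsLT hx] with T hT
    refine hslope T n m hT.1 ?_ hnm
    -- Otherwise `S (n + 1)` is at most the cost at `T`, which robustness keeps below it.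
    by_contra! hlt
    have a := hSle (n + 1) T hT.1 (by linarith)
    have b := hC T hT.1
    have c := hT.2
    rw [lt_div_iff₀ hρ] at c
    linarith
  have h2 : ∀ n m, 0 ≤ n → n ≤ m → m - n ≤ S m - S n := by
    intro n m hn hnm
    simpa using hslope 1 n m one_pos (by rw [hN1]; exact hn) hnm
  exact (chi_le_value hs0 hs1 hχ hS0 h1 h2).trans (hSle 1 1 one_pos (by rw [hN1]; simp))

/-! ### Bids below a threshold -/

/-- The cost at target `T` of a single bid sequence. -/
noncomputable def pathCost (Q : ℤ → ℝ) (T : ℝ) : ℝ≥0∞ :=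
  ∑' n : ℤ, (if Q (n - 1) < T then ENNReal.ofReal (Q n) else 0)

/-- The total of the bids below `T`. -/
noncomputable def lowSum (Q : ℤ → ℝ) (T : ℝ) : ℝ≥0∞ :=
  ∑' n : ℤ, (if Q n < T then ENNReal.ofReal (Q n) else 0)

/-- The number of bids in `[a, b)`. -/
noncomputable def bidCount (Q : ℤ → ℝ) (a b : ℝ) : ℝ≥0∞ :=
  ∑' n : ℤ, (if a ≤ Q n ∧ Q n < b then 1 else 0)

/-- The number of bids between `1` and `T`, counted negatively when `T < 1`. -/
noncomputable def signedCount (Q : ℤ → ℝ) (T : ℝ) : ℝ :=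
  (bidCount Q 1 T).toReal - (bidCount Q T 1).toReal

/-- The bid sequences that almost surely occur in a robust strategy. -/
structure GoodBids (Q : ℤ → ℝ) : Prop where
  pos : ∀ n, 0 < Q n
  mono : StrictMono Q
  fin : ∀ j : ℕ, pathCost Q j ≠ ⊤

/-- Finiteness of all costs forces the bids to tend to `0` and to `∞`, so that every `T > 0` has a
first bid reaching it. -/
lemma GoodBids.exists_threshold {Q : ℤ → ℝ} (h : GoodBids Q) {T : ℝ} (hT : 0 < T) :
    ∃ k : ℤ, ∀ n, Q n < T ↔ n < k := by
  have hlow : ∃ b, Q b < T := by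
    by_contra! hb
    obtain ⟨j, hj⟩ := exists_nat_gt (Q 0)
    have hfin := ENNReal.finite_const_le_of_tsum_ne_top (h.fin j)
      (ENNReal.ofReal_pos.2 hT).ne'
    refine (Set.Iic_infinite (0 : ℤ)) (hfin.subset fun n hn => ?_)
    have hn' : n ≤ 0 := hn
    have : Q (n - 1) < j := (h.mono (by omega : n - 1 < 0)).trans hj
    simp only [mem_ofPred_eq, if_pos this]
    exact ENNReal.ofReal_le_ofReal (hb n)
  have hhigh : ∃ z, T ≤ Q z := by
    by_contra! hb
    obtain ⟨j, hj⟩ := exists_nat_gt T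
    have hfin := ENNReal.finite_const_le_of_tsum_ne_top (h.fin j)
      (ENNReal.ofReal_pos.2 (h.pos 0)).ne'
    refine (Set.Ici_infinite (0 : ℤ)) (hfin.subset fun n hn => ?_)
    have : Q (n - 1) < j := (hb _).trans hj
    simp only [mem_ofPred_eq, if_pos this]
    exact ENNReal.ofReal_le_ofReal (h.mono.monotone hn)
  obtain ⟨b, hb⟩ := hlow
  obtain ⟨k, hk, hmin⟩ := Int.exists_least_of_bdd (P := fun z => T ≤ Q z)
    ⟨b, fun z hz => (h.mono.lt_iff_lt.1 (hb.trans_le hz)).le⟩ hhigh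
  refine ⟨k, fun n => ⟨fun hn => h.mono.lt_iff_lt.1 (hn.trans_le hk), fun hn => ?_⟩⟩
  by_contra! hc
  have := hmin n hc
  omega

lemma bidCount_eq {Q : ℤ → ℝ} {a b : ℝ} {k l : ℤ} (hk : ∀ n, Q n < a ↔ n < k)
    (hl : ∀ n, Q n < b ↔ n < l) : bidCount Q a b = ((l - k).toNat : ℝ≥0∞) := by
  have : ∀ n : ℤ, (if a ≤ Q n ∧ Q n < b then (1 : ℝ≥0∞) else 0)
      = if n ∈ Finset.Ico k l then 1 else 0 := by
    intro n
    refine if_congr ?_ rfl rfl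
    rw [Finset.mem_Ico, hl, ← not_lt, hk, not_lt]
  rw [bidCount, tsum_congr this, tsum_eq_sum (s := Finset.Ico k l) (fun n hn => if_neg hn),
    Finset.sum_congr rfl (fun n hn => if_pos hn)]
  simp

lemma signedCount_eq {Q : ℤ → ℝ} {T : ℝ} {k l : ℤ} (hk : ∀ n, Q n < 1 ↔ n < k)
    (hl : ∀ n, Q n < T ↔ n < l) : signedCount Q T = (l : ℝ) - k := by
  rw [signedCount, bidCount_eq hk hl, bidCount_eq hl hk, ENNReal.toReal_natCast,
    ENNReal.toReal_natCast]
  have : ((l - k).toNat : ℤ) - ((k - l).toNat : ℤ) = l - k := by omega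
  exact_mod_cast this

/-- The total of the bids with index below `i`. -/
noncomputable def partialSum (Q : ℤ → ℝ) (i : ℤ) : ℝ≥0∞ :=
  ∑' n : ℤ, (if n < i then ENNReal.ofReal (Q n) else 0)

lemma GoodBids.partialSum_ne_top {Q : ℤ → ℝ} (h : GoodBids Q) (i : ℤ) : partialSum Q i ≠ ⊤ := by
  obtain ⟨j, hj⟩ := exists_nat_gt (Q i)
  refine ne_top_of_le_ne_top (h.fin j) (ENNReal.tsum_le_tsum fun n => ?_)
  split_ifs with h1 h2
  · exact le_rfl
  · exact absurd ((h.mono (by omega : n - 1 < i)).trans hj) h2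
  · exact zero_le
  · exact le_rfl

lemma GoodBids.partialSum_succ {Q : ℤ → ℝ} (h : GoodBids Q) (i : ℤ) :
    (partialSum Q (i + 1)).toReal = (partialSum Q i).toReal + Q i := by
  have : partialSum Q (i + 1) = partialSum Q i + ENNReal.ofReal (Q i) := by
    have e : ∀ n : ℤ, (if n < i + 1 then ENNReal.ofReal (Q n) else 0)
        = (if n < i then ENNReal.ofReal (Q n) else 0)
          + (if n = i then ENNReal.ofReal (Q i) else 0) := by
      intro n
      rcases lt_trichotomy n i with h | h | h
      · simp [h, h.ne, (by omega : n < i + 1)]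
      · simp [h]
      · rw [if_neg (by omega), if_neg (by omega), if_neg h.ne', add_zero]
    simp only [partialSum]
    rw [tsum_congr e, ENNReal.tsum_add, tsum_ite_eq]
  rw [this, ENNReal.toReal_add (h.partialSum_ne_top i) ENNReal.ofReal_ne_top,
    ENNReal.toReal_ofReal (h.pos i).le]

/-- Partial sums lie above the line of slope `T` through the index of the first bid reaching `T`:
the bids before that index are smaller than `T`, the others are not. -/
lemma GoodBids.partialSum_ge {Q : ℤ → ℝ} (h : GoodBids Q) {T : ℝ} {k : ℤ}
    (hk : ∀ n, Q n < T ↔ n < k) (i : ℤ) :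
    (partialSum Q k).toReal + T * ((i : ℝ) - k) ≤ (partialSum Q i).toReal := by
  rcases le_total k i with hi | hi
  · induction i, hi using Int.leInduction with
    | base => simp
    | succ i hi ih =>
      rw [h.partialSum_succ]
      have : T ≤ Q i := by
        rw [← not_lt, hk]; omega
      push_cast
      linarith
  · induction i, hi using Int.leInductionDown with
    | base => simp
    | pred i hi ih =>
      have e := h.partialSum_succ (i - 1)
      rw [sub_add_cancel] at e
      have : Q (i - 1) < T := (hk _).2 (by omega)
      push_cast
      linarith

lemma lowSum_eq {Q : ℤ → ℝ} {T : ℝ} {k : ℤ} (hk : ∀ n, Q n < T ↔ n < k) :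
    lowSum Q T = partialSum Q k := by
  simp only [lowSum, partialSum, hk]

lemma pathCost_eq {Q : ℤ → ℝ} {T : ℝ} {k : ℤ} (hk : ∀ n, Q n < T ↔ n < k) :
    pathCost Q T = partialSum Q (k + 1) := by
  simp only [pathCost, partialSum, hk, sub_lt_iff_lt_add]

lemma GoodBids.le_pathCost {Q : ℤ → ℝ} (h : GoodBids Q) {T T' : ℝ} (hT : 0 < T) (hT' : 0 < T') :
    (lowSum Q T').toReal + T' * (1 + signedCount Q T - signedCount Q T')
      ≤ (pathCost Q T).toReal := by
  obtain ⟨k, hk⟩ := h.exists_threshold hT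
  obtain ⟨l, hl⟩ := h.exists_threshold hT'
  obtain ⟨m, hm⟩ := h.exists_threshold one_pos
  rw [lowSum_eq hl, pathCost_eq hk, signedCount_eq hm hk, signedCount_eq hm hl]
  have := h.partialSum_ge hl (k + 1)
  push_cast at this
  linarith

lemma GoodBids.le_lowSum {Q : ℤ → ℝ} (h : GoodBids Q) {T T' : ℝ} (hT : 0 < T) (hT' : 0 < T') :
    (lowSum Q T').toReal + T' * (signedCount Q T - signedCount Q T')
      ≤ (lowSum Q T).toReal := by
  obtain ⟨k, hk⟩ := h.exists_threshold hT
  obtain ⟨l, hl⟩ := h.exists_threshold hT'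
  obtain ⟨m, hm⟩ := h.exists_threshold one_pos
  rw [lowSum_eq hl, lowSum_eq hk, signedCount_eq hm hk, signedCount_eq hm hl]
  have := h.partialSum_ge hl k
  linarith

lemma GoodBids.signedCount_mono {Q : ℤ → ℝ} (h : GoodBids Q) {T T' : ℝ} (hT : 0 < T)
    (hTT : T ≤ T') : signedCount Q T ≤ signedCount Q T' := by
  obtain ⟨k, hk⟩ := h.exists_threshold hT
  obtain ⟨l, hl⟩ := h.exists_threshold (hT.trans_le hTT)
  obtain ⟨m, hm⟩ := h.exists_threshold one_pos
  rw [signedCount_eq hm hk, signedCount_eq hm hl]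
  have : k ≤ l := by
    by_contra! hc
    have h1 := (hk l).2 hc
    have h2 := (hl l).1 (h1.trans_le hTT)
    omega
  have : (k : ℝ) ≤ l := by exact_mod_cast this
  linarith

lemma GoodBids.lowSum_le {Q : ℤ → ℝ} (h : GoodBids Q) (T : ℝ) : lowSum Q T ≤ pathCost Q T := by
  refine ENNReal.tsum_le_tsum fun n => ?_
  split_ifs with h1 h2
  · exact le_rfl
  · exact absurd ((h.mono (by omega : n - 1 < n)).trans h1) h2
  · exact zero_le
  · exact le_rfl

lemma bidCount_le (Q : ℤ → ℝ) {a b : ℝ} (ha : 0 < a) :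
    bidCount Q a b ≤ (ENNReal.ofReal a)⁻¹ * lowSum Q b := by
  rw [bidCount, lowSum, ← ENNReal.tsum_mul_left]
  refine ENNReal.tsum_le_tsum fun n => ?_
  split_ifs with h1 h2
  · rw [← ENNReal.inv_mul_cancel (ENNReal.ofReal_pos.2 ha).ne' ENNReal.ofReal_ne_top]
    gcongr
    exact h1.1
  · exact absurd h1.2 h2
  · exact zero_le
  · exact zero_le

/-! ### Expectations -/

lemma measurable_pathCost (T : ℝ) : Measurable fun Q => pathCost Q T :=
  Measurable.tsum fun n => Measurable.ite
    (measurableSet_lt (measurable_pi_apply _) measurable_const)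
    (measurable_pi_apply n).ennreal_ofReal measurable_const

lemma measurable_lowSum (T : ℝ) : Measurable fun Q => lowSum Q T :=
  Measurable.tsum fun n => Measurable.ite
    (measurableSet_lt (measurable_pi_apply _) measurable_const)
    (measurable_pi_apply n).ennreal_ofReal measurable_const

lemma measurable_bidCount (a b : ℝ) : Measurable fun Q => bidCount Q a b :=
  Measurable.tsum fun n => Measurable.ite
    ((measurableSet_le measurable_const (measurable_pi_apply _)).inter
      (measurableSet_lt (measurable_pi_apply n) measurable_const))
    measurable_const measurable_const

theorem bidding_consistency_lower_bound
    (s : ℝ) (hs : s ∈ Set.Ioc (0 : ℝ) 1) (χs : ℝ) (hχs : IsChiVal s χs)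
    (μ : Measure (ℤ → ℝ)) (hμ : IsBidStrategy μ)
    (hrobust : ∀ T > 0, bidCost μ T ≤ ENNReal.ofReal (Real.exp s / s * T)) :
    ENNReal.ofReal χs ≤ bidCost μ 1 := by
  obtain ⟨hprob, hbids⟩ := hμ
  have hcost : ∀ T, bidCost μ T = ∫⁻ Q, pathCost Q T ∂μ := fun T => rfl
  have hfin : ∀ T, 0 < T → ∫⁻ Q, pathCost Q T ∂μ ≠ ⊤ := fun T hT =>
    ne_top_of_le_ne_top ENNReal.ofReal_ne_top (hrobust T hT)
  have hgood : ∀ᵐ Q ∂μ, GoodBids Q := by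
    have : ∀ᵐ Q ∂μ, ∀ j : ℕ, pathCost Q ((j : ℝ) + 1) ≠ ⊤ := by
      rw [ae_all_iff]
      intro j
      filter_upwards [ae_lt_top (measurable_pathCost _) (hfin (j + 1) (by positivity))] with Q hQ
        using hQ.ne
    filter_upwards [hbids, this] with Q h1 h2
    refine ⟨h1.1, h1.2, fun j => ?_⟩
    cases j with
    | zero =>
      have : ∀ n : ℤ, ¬ Q (n - 1) < 0 := fun n => not_lt.2 (h1.1 _).le
      simp [pathCost, this]
    | succ j => simpa using h2 j
  have hlfin : ∀ T, 0 < T → ∫⁻ Q, lowSum Q T ∂μ ≠ ⊤ := fun T hT =>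
    ne_top_of_le_ne_top (hfin T hT) (lintegral_mono_ae (hgood.mono fun Q h => h.lowSum_le T))
  have hcfin : ∀ a b, 0 < a → 0 < b → ∫⁻ Q, bidCount Q a b ∂μ ≠ ⊤ := by
    intro a b ha hb
    refine ne_top_of_le_ne_top ?_ (lintegral_mono fun Q => bidCount_le Q ha)
    rw [lintegral_const_mul _ (measurable_lowSum b)]
    exact ENNReal.mul_ne_top (ENNReal.inv_ne_top.2 (ENNReal.ofReal_pos.2 ha).ne') (hlfin b hb)
  have iC : ∀ T, 0 < T → Integrable (fun Q => (pathCost Q T).toReal) μ := fun T hT =>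
    integrable_toReal_of_lintegral_ne_top (measurable_pathCost T).aemeasurable (hfin T hT)
  have iA : ∀ T, 0 < T → Integrable (fun Q => (lowSum Q T).toReal) μ := fun T hT =>
    integrable_toReal_of_lintegral_ne_top (measurable_lowSum T).aemeasurable (hlfin T hT)
  have iN : ∀ T, 0 < T → Integrable (fun Q => signedCount Q T) μ := fun T hT =>
    (integrable_toReal_of_lintegral_ne_top (measurable_bidCount 1 T).aemeasurable
      (hcfin 1 T one_pos hT)).sub
    (integrable_toReal_of_lintegral_ne_top (measurable_bidCount T 1).aemeasurable
      (hcfin T 1 hT one_pos))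
  have hCval : ∀ T, 0 < T → ENNReal.ofReal (∫ Q, (pathCost Q T).toReal ∂μ) = bidCost μ T := by
    intro T hT
    rw [integral_toReal (measurable_pathCost T).aemeasurable
      (ae_lt_top (measurable_pathCost T) (hfin T hT)), hcost, ENNReal.ofReal_toReal (hfin T hT)]
  rw [← hCval 1 one_pos]
  refine ENNReal.ofReal_le_ofReal ?_
  refine chi_le_of_profile (A := fun T => ∫ Q, (lowSum Q T).toReal ∂μ)
    (N := fun T => ∫ Q, signedCount Q T ∂μ) (C := fun T => ∫ Q, (pathCost Q T).toReal ∂μ)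
    hs.1 hs.2 hχs ?_ ?_ ?_ ?_ ?_ ?_
  · exact fun T _ => integral_nonneg fun Q => ENNReal.toReal_nonneg
  · exact fun T T' hT hTT => integral_mono_ae (iN T hT) (iN T' (hT.trans_le hTT))
      (hgood.mono fun Q h => h.signedCount_mono hT hTT)
  · simp [signedCount]
  · intro T hT
    have h := hrobust T hT
    have hs0 := hs.1
    rw [← hCval T hT] at h
    exact (ENNReal.ofReal_le_ofReal_iff (by positivity)).1 h
  · intro T T' hT hT'
    have h := integral_mono_ae ((iA T' hT').add
      ((((integrable_const (1 : ℝ)).add (iN T hT)).sub (iN T' hT')).const_mul T')) (iC T hT)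
      (hgood.mono fun Q h => h.le_pathCost hT hT')
    rw [integral_add' (iA T' hT')
        ((((integrable_const (1 : ℝ)).add (iN T hT)).sub (iN T' hT')).const_mul T'),
      integral_const_mul, integral_sub' ((integrable_const (1 : ℝ)).add (iN T hT)) (iN T' hT'),
      integral_add' (integrable_const (1 : ℝ)) (iN T hT)] at h
    simpa using h
  · intro T T' hT hT'
    have h := integral_mono_ae ((iA T' hT').add
      (((iN T hT).sub (iN T' hT')).const_mul T')) (iA T hT)
      (hgood.mono fun Q h => h.le_lowSum hT hT')
    rw [integral_add' (iA T' hT') (((iN T hT).sub (iN T' hT')).const_mul T'),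
      integral_const_mul, integral_sub' (iN T hT) (iN T' hT')] at h
    exact h
end

section
/- Let ρ ≥ χ > 1 and let G be a (ρ,χ)-bidding profile. Then for every T > 0, the quantity τ(T) := sup{t ∈ ℝ : G(t) < T} satisfies τ(T) ≤ ρ·T − 1 (in particular it is finite), and the expected cost of the strategy driven by G equals the stated integral: ∑_{n∈ℤ} ∫₀¹ G(n+u)·1{G(n−1+u) < T} du = ∫_{−∞}^{τ(T)+1} G(t) dt. -/
/-!
The sublevel set `{t | G t < T}` is a down-set of `ℝ`. It is nonempty, as otherwise `G ≥ T > 0`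
would have infinite integral over `(-∞, 1]`. If `G x < T` and `x ≥ -1`, then `G ≥ 1` on
`(0, x + 1]` and robustness give `x + 1 ≤ ∫_{-∞}^{x+1} G ≤ ρ G x ≤ ρ T`, so the set is bounded
above by `ρ T - 1` (`le_of_lt_target`).

For the cost, the substitution `s = n + u` tiles `ℝ` by the intervals `(n, n + 1]`
(`tsum_lintegral_Ioc`), so the sum is `∫ G(s) 1{G(s - 1) < T} ds`. The condition `G (s - 1) < T`
agrees with `s ≤ τ(T) + 1` except possibly at the single point `s = τ(T) + 1`.
-/

open MeasureTheory Set
open scoped ENNReal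

/-- A `(ρ,χ)`-bidding profile: a non-decreasing, left-continuous, strictly positive
function `G : ℝ → ℝ` satisfying the offset, robustness and consistency conditions. -/
def BiddingProfile (ρ χ : ℝ) (G : ℝ → ℝ) : Prop :=
  Monotone G ∧
  (∀ x : ℝ, ContinuousWithinAt G (Set.Iic x) x) ∧
  (∀ x : ℝ, 0 < G x) ∧
  (∀ x < (0 : ℝ), G x < 1) ∧
  (∀ x > (0 : ℝ), 1 ≤ G x) ∧
  (∀ x : ℝ, (∫⁻ t in Set.Iic (x + 1), ENNReal.ofReal (G t)) ≤ ENNReal.ofReal (ρ * G x)) ∧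
  (∫⁻ t in Set.Iic (1 : ℝ), ENNReal.ofReal (G t)) ≤ ENNReal.ofReal χ

/-- The intervals `(n, n + 1]` tile the line, so integrating all integer translates of `F` over
`(0, 1]` amounts to integrating `F` over `ℝ`. -/
lemma tsum_lintegral_Ioc (F : ℝ → ℝ≥0∞) :
    (∑' n : ℤ, ∫⁻ u in Set.Ioc (0 : ℝ) 1, F ((n : ℝ) + u)) = ∫⁻ s, F s := by
  have h : ∀ n : ℤ, ∫⁻ u in Set.Ioc (0 : ℝ) 1, F ((n : ℝ) + u)
      = ∫⁻ s in Set.Ioc (n : ℝ) (n + 1), F s := by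
    intro n
    have := (measurePreserving_add_left (volume : Measure ℝ) (n : ℝ)).setLIntegral_comp_preimage_emb
      (measurableEmbedding_addLeft (n : ℝ)) F (Set.Ioc (n : ℝ) (n + 1))
    simpa using this
  simp_rw [h]
  rw [← lintegral_iUnion (fun n => measurableSet_Ioc) (pairwise_disjoint_Ioc_intCast ℝ),
    iUnion_Ioc_intCast, Measure.restrict_univ]

/-- Otherwise `G` would be bounded below by `T > 0` on a half-line of infinite measure. -/
lemma exists_lt_target {ρ χ : ℝ} {G : ℝ → ℝ} (hG : BiddingProfile ρ χ G) {T : ℝ} (hT : 0 < T) :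
    ∃ t, G t < T := by
  obtain ⟨-, -, -, -, -, -, hcons⟩ := hG
  by_contra! h
  have h1 : (∫⁻ _ in Set.Iic (1 : ℝ), ENNReal.ofReal T) ≤
      ∫⁻ t in Set.Iic (1 : ℝ), ENNReal.ofReal (G t) :=
    lintegral_mono fun t => ENNReal.ofReal_le_ofReal (h t)
  rw [setLIntegral_const, Real.volume_Iic, ENNReal.mul_top (by simpa using hT)] at h1
  exact absurd (h1.trans hcons) (by simp)

/-- Robustness at `x`, with the integral bounded below by `∫_0^{x+1} 1`. -/
lemma le_of_lt_target {ρ χ : ℝ} (hρ : 0 < ρ) {G : ℝ → ℝ} (hG : BiddingProfile ρ χ G) {T x : ℝ}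
    (hx : G x < T) : x ≤ ρ * T - 1 := by
  obtain ⟨-, -, hpos, -, hone, hrob, -⟩ := hG
  have h1 : ENNReal.ofReal (x + 1) ≤ ∫⁻ t in Set.Iic (x + 1), ENNReal.ofReal (G t) := by
    calc ENNReal.ofReal (x + 1) = ∫⁻ _ in Set.Ioc 0 (x + 1), 1 := by simp
      _ ≤ ∫⁻ t in Set.Ioc 0 (x + 1), ENNReal.ofReal (G t) :=
        setLIntegral_mono' measurableSet_Ioc fun t ht => by simpa using hone t ht.1
      _ ≤ _ := lintegral_mono_set Set.Ioc_subset_Iic_self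
  have h2 := (ENNReal.ofReal_le_ofReal_iff (mul_pos hρ (hpos x)).le).1 (h1.trans (hrob x))
  linarith [mul_lt_mul_of_pos_left hx hρ]

theorem bidding_profile_cost_formula
    (ρ χ : ℝ) (hχ : 1 < χ) (hχρ : χ ≤ ρ)
    (G : ℝ → ℝ) (hG : BiddingProfile ρ χ G) (T : ℝ) (hT : 0 < T) :
    sSup {t : ℝ | G t < T} ≤ ρ * T - 1 ∧
    (∑' n : ℤ, ∫⁻ u in Set.Ioc (0 : ℝ) 1,
        (if G ((n : ℝ) - 1 + u) < T then ENNReal.ofReal (G ((n : ℝ) + u)) else 0)) =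
      ∫⁻ t in Set.Iic (sSup {t : ℝ | G t < T} + 1), ENNReal.ofReal (G t) := by
  have hne : {t : ℝ | G t < T}.Nonempty := exists_lt_target hG hT
  have hub : ∀ x ∈ {t : ℝ | G t < T}, x ≤ ρ * T - 1 :=
    fun x hx => le_of_lt_target (by linarith) hG hx
  have hbdd : BddAbove {t : ℝ | G t < T} := ⟨_, hub⟩
  refine ⟨csSup_le hne hub, ?_⟩
  have htile := tsum_lintegral_Ioc fun s => if G (s - 1) < T then ENNReal.ofReal (G s) else 0
  simp only [add_sub_right_comm] at htile
  rw [htile, ← lintegral_indicator measurableSet_Iic]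
  apply lintegral_congr_ae
  -- Whether `G (τ(T)) < T` holds is irrelevant: it only affects the null set `{τ(T) + 1}`.
  filter_upwards [compl_mem_ae_iff.2 (measure_singleton (sSup {t : ℝ | G t < T} + 1))] with s hs
  have hs' : s ≠ sSup {t : ℝ | G t < T} + 1 := hs
  have hiff : G (s - 1) < T ↔ s ∈ Set.Iic (sSup {t : ℝ | G t < T} + 1) := by
    rw [Set.mem_Iic]
    constructor
    · intro h
      linarith [le_csSup hbdd h]
    · intro h
      obtain ⟨y, hy, hlt⟩ := exists_lt_of_lt_csSup hne
        (show s - 1 < sSup {t : ℝ | G t < T} by linarith [lt_of_le_of_ne h hs'])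
      exact (hG.1 hlt.le).trans_lt hy
  simp only [Set.indicator_apply, hiff]
end

section
/- Let ρ ≥ χ > 1, let G be a (ρ,χ)-bidding profile, and for T > 0 set τ(T) := sup{t ∈ ℝ : G(t) < T}. Then ∫_{−∞}^{τ(T)+1} G(t) dt ≤ ρ·T for every T > 0, and ∫_{−∞}^{τ(1)+1} G(t) dt ≤ χ; that is, the strategy driven by G is ρ-robust and χ-consistent. -/
/-!
Put `τ(T) = sSup {t | G t < T}`. The sublevel set is nonempty, since otherwise `G ≥ T > 0`
everywhere and the integral of `G` over `(-∞, 1]` would be infinite. Every `x < τ(T)` therefore lies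
below some point of the set, so `G x < T` by monotonicity, and left-continuity gives `G (τ(T)) ≤ T`.
Robustness at `x = τ(T)` is then the first bound. For `T = 1` the offset condition forces
`τ(1) = 0`, and the second bound is consistency itself.
-/

open MeasureTheory Set
open scoped ENNReal

/-- The sublevel sets are nonempty because a function with finite integral near `-∞`
cannot stay above a positive constant. -/
theorem BiddingProfile.nonempty_sublevel {ρ χ : ℝ} {G : ℝ → ℝ} (hG : BiddingProfile ρ χ G)
    {T : ℝ} (hT : 0 < T) : {t : ℝ | G t < T}.Nonempty := by
  obtain ⟨-, -, -, -, -, -, hcons⟩ := hG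
  by_contra hne
  have hge : ∀ t, T ≤ G t := fun t => not_lt.1 fun h => hne ⟨t, h⟩
  have h1 : (∫⁻ _ in Set.Iic (1 : ℝ), ENNReal.ofReal T) ≤ ENNReal.ofReal χ :=
    (lintegral_mono fun t => ENNReal.ofReal_le_ofReal (hge t)).trans hcons
  rw [setLIntegral_const, Real.volume_Iic, ENNReal.mul_top (by simpa using hT)] at h1
  exact absurd h1 (by simp)

/-- Left-continuity makes the bid at the supremum of the sublevel set at most `T`. Boundedness of
the set is not needed: were it unbounded, `G < T` would hold everywhere, in particular at the junk
value `0` of `sSup`. -/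
theorem BiddingProfile.apply_sSup_le {ρ χ : ℝ} {G : ℝ → ℝ} (hG : BiddingProfile ρ χ G)
    {T : ℝ} (hT : 0 < T) : G (sSup {t : ℝ | G t < T}) ≤ T := by
  have hne := hG.nonempty_sublevel hT
  obtain ⟨hmono, hleft, -⟩ := hG
  have hc := (hleft (sSup {t : ℝ | G t < T})).mono Set.Iio_subset_Iic_self
  refine le_of_tendsto hc.tendsto ?_
  filter_upwards [self_mem_nhdsWithin] with x hx
  obtain ⟨t, ht, hxt⟩ := exists_lt_of_lt_csSup hne hx
  exact (hmono hxt.le).trans (le_of_lt ht)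

theorem BiddingProfile.sSup_sublevel_one {ρ χ : ℝ} {G : ℝ → ℝ} (hG : BiddingProfile ρ χ G) :
    sSup {t : ℝ | G t < 1} = 0 := by
  obtain ⟨-, -, -, hneg, hpos, -⟩ := hG
  have hub : ∀ t ∈ {t : ℝ | G t < 1}, t ≤ 0 := fun t ht =>
    not_lt.1 fun h => (not_lt.2 (hpos t h)) ht
  refine csSup_eq_of_forall_le_of_forall_lt_exists_gt ⟨-1, hneg _ (by norm_num)⟩ hub ?_
  intro w hw
  exact ⟨w / 2, hneg _ (by linarith), by linarith⟩

theorem bidding_profile_robust_consistent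
    (ρ χ : ℝ) (hχ : 1 < χ) (hχρ : χ ≤ ρ)
    (G : ℝ → ℝ) (hG : BiddingProfile ρ χ G) :
    (∀ T > (0 : ℝ),
      (∫⁻ t in Set.Iic (sSup {t : ℝ | G t < T} + 1), ENNReal.ofReal (G t)) ≤
        ENNReal.ofReal (ρ * T)) ∧
    (∫⁻ t in Set.Iic (sSup {t : ℝ | G t < 1} + 1), ENNReal.ofReal (G t)) ≤
      ENNReal.ofReal χ := by
  have hρ : 0 < ρ := by linarith
  refine ⟨fun T hT => ?_, ?_⟩
  · have hle := hG.apply_sSup_le hT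
    obtain ⟨-, -, -, -, -, hrob, -⟩ := hG
    exact (hrob _).trans (ENNReal.ofReal_le_ofReal (mul_le_mul_of_nonneg_left hle hρ.le))
  · rw [hG.sSup_sublevel_one, zero_add]
    obtain ⟨-, -, -, -, -, -, hcons⟩ := hG
    exact hcons
end

section
/- Let ρ > 0 and let G : ℝ → ℝ be non-decreasing, left-continuous and nonnegative, satisfying G(x) < 1 for every x < 0, G(x) ≥ 1 for every x > 0, and ∫_{−∞}^{x+1} G(t) dt ≤ ρ·G(x) for every x ∈ ℝ. Then G(0) ≤ 1 and G(x) > 0 for every x ∈ ℝ (i.e., strict positivity of a bidding profile follows from left-continuity, the offset condition and the robustness condition). -/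
/-!
The bound `G 0 ≤ 1` is the limit of `G x < 1` as `x` tends to `0` from the left.
For positivity, a zero of `G` propagates to the right: if `G x = 0`, robustness makes the integral
of `G` over `(-∞, x + 1]` vanish, while by monotonicity it is at least `G (x + 1/2) / 2`, the
contribution of `(x + 1/2, x + 1]`. Hence `G (x + 1/2) = 0`, and iterating gives a zero of `G` at
some positive point, where `G ≥ 1`.
-/

open MeasureTheory Set
open scoped ENNReal

theorem zero_add_half (ρ : ℝ) (G : ℝ → ℝ) (hmono : Monotone G) (hnonneg : ∀ x : ℝ, 0 ≤ G x)
    (hrobust : ∀ x : ℝ,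
      (∫⁻ t in Set.Iic (x + 1), ENNReal.ofReal (G t)) ≤ ENNReal.ofReal (ρ * G x))
    (x : ℝ) (hx : G x = 0) : G (x + 1 / 2) = 0 := by
  have h1 : (∫⁻ _ in Set.Ioc (x + 1 / 2) (x + 1), ENNReal.ofReal (G (x + 1 / 2))) ≤ 0 := by
    calc _ ≤ ∫⁻ t in Set.Ioc (x + 1 / 2) (x + 1), ENNReal.ofReal (G t) :=
          setLIntegral_mono' measurableSet_Ioc fun t ht =>
            ENNReal.ofReal_le_ofReal (hmono ht.1.le)
      _ ≤ ∫⁻ t in Set.Iic (x + 1), ENNReal.ofReal (G t) := lintegral_mono_set Ioc_subset_Iic_self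
      _ ≤ 0 := by simpa [hx] using hrobust x
  rw [setLIntegral_const, Real.volume_Ioc, nonpos_iff_eq_zero, mul_eq_zero,
    ENNReal.ofReal_eq_zero, ENNReal.ofReal_eq_zero] at h1
  rcases h1 with h | h
  · exact le_antisymm h (hnonneg _)
  · linarith

theorem bidding_profile_positivity
    (ρ : ℝ) (hρ : 0 < ρ) (G : ℝ → ℝ)
    (hmono : Monotone G)
    (hlc : ∀ x : ℝ, ContinuousWithinAt G (Set.Iic x) x)
    (hnonneg : ∀ x : ℝ, 0 ≤ G x)
    (hoff_lt : ∀ x < (0 : ℝ), G x < 1)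
    (hoff_ge : ∀ x > (0 : ℝ), 1 ≤ G x)
    (hrobust : ∀ x : ℝ,
      (∫⁻ t in Set.Iic (x + 1), ENNReal.ofReal (G t)) ≤ ENNReal.ofReal (ρ * G x)) :
    G 0 ≤ 1 ∧ ∀ x : ℝ, 0 < G x := by
  constructor
  · have h : Filter.Tendsto G (nhdsWithin 0 (Set.Iio 0)) (nhds (G 0)) :=
      (hlc 0).mono Iio_subset_Iic_self
    exact le_of_tendsto h (eventually_nhdsWithin_of_forall fun x hx => (hoff_lt x hx).le)
  · intro x
    by_contra hx
    have hx0 : G x = 0 := le_antisymm (not_lt.mp hx) (hnonneg x)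
    have hiter : ∀ n : ℕ, G (x + n * (1 / 2)) = 0 := by
      intro n
      induction n with
      | zero => simpa using hx0
      | succ n ih =>
        have h := zero_add_half ρ G hmono hnonneg hrobust _ ih
        rwa [show x + ((n + 1 : ℕ) : ℝ) * (1 / 2) = x + n * (1 / 2) + 1 / 2 by
          push_cast; ring]
    obtain ⟨n, hn⟩ := exists_nat_gt (-2 * x)
    have h1 := hoff_ge (x + n * (1 / 2)) (by linarith)
    rw [hiter n] at h1
    linarith
end

section
/- For every s ∈ (0,1], there exists a (ρ(s), χ(s))-bidding profile, where ρ(s) := e^s/s, and χ(s) := (e^s − 1)/s for 0 < s ≤ ln 2 and χ(s) := ξ(s)/s for ln 2 ≤ s ≤ 1, with ξ(s) the unique ξ ∈ [1, e] satisfying ξ·(2 − ln ξ) = e^s. -/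
/-!
Put `g(x) = max(1, e^{s(x-a)})` for `x > 0`, where the switching point `a ∈ [0, 1]` is `1` when
`s ≤ ln 2` and `1 - (ln ξ)/s` otherwise. On `x ≤ 0` robustness is imposed with equality, so that
`G` is a fixed point of the operator `T` (`profileStep`) with
`T f (x) = s e^{-s} ∫_{-∞}^{x+1} f` for `x ≤ 0` and `T f = g` on `(0, ∞)`.
The profile is the least fixed point of `T`, the increasing limit of `Gₙ = Tⁿ⁺¹ 0`.

Everything rests on bounding the total mass `∫_{-∞}^1 Gₙ` (`lintegral_profileIter_le`). With
`Aₙ = ∫_{-∞}^0 e^{-sx} Gₙ(x) dx`, Tonelli gives the balance (`weighted_balance`)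
`Aₙ₊₁ + e^{-s} ∫_{-∞}^1 Gₙ = Aₙ + ∫_0^1 e^{-sx} g(x) dx`.
As `Aₙ ≤ Aₙ₊₁` are finite, `∫_{-∞}^1 Gₙ ≤ e^s ∫_0^1 e^{-sx} g(x) dx`, and the right-hand side
evaluates to exactly `χ(s)` for the chosen `a`. Consistency follows by monotone convergence.
Robustness for `x > 0` reduces, by integrating the exponential `g` over `(1, x+1]`, to
`χ(s) ≤ e^{s(1-a)}/s`, which for `a = 1` is the condition `e^s ≤ 2` and otherwise an equality.
-/

open MeasureTheory Set
open scoped ENNReal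

/-! ### The fixed-point operator and its iterates -/

/-- The profile on `(0, ∞)`: equal to `1` up to the point `a`, then growing like `e^{sx}`. -/
noncomputable def profileTail (s a x : ℝ) : ℝ := max 1 (Real.exp (s * (x - a)))

/-- The operator whose fixed points meet the robustness condition with equality on `(-∞, 0]` and
agree with `profileTail` on `(0, ∞)`. Values lie in `ℝ≥0∞`, so no integrability is needed. -/
noncomputable def profileStep (s a : ℝ) (f : ℝ → ℝ≥0∞) (x : ℝ) : ℝ≥0∞ :=
  if x ≤ 0 then ENNReal.ofReal (s * Real.exp (-s)) * ∫⁻ t in Iic (x + 1), f t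
  else ENNReal.ofReal (profileTail s a x)

/-- The iterates of `profileStep`, starting from the image of the zero function. -/
noncomputable def profileIter (s a : ℝ) : ℕ → ℝ → ℝ≥0∞
  | 0 => profileStep s a 0
  | n + 1 => profileStep s a (profileIter s a n)

/-- The least fixed point of `profileStep`, as the limit of its iterates. -/
noncomputable def profileLim (s a x : ℝ) : ℝ≥0∞ := ⨆ n, profileIter s a n x

lemma profileTail_continuous (s a : ℝ) : Continuous (profileTail s a) := by
  unfold profileTail; fun_prop

lemma profileTail_mono {s : ℝ} (hs : 0 < s) (a : ℝ) : Monotone (profileTail s a) := by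
  intro x y h
  unfold profileTail
  gcongr

lemma one_le_profileTail (s a x : ℝ) : 1 ≤ profileTail s a x := le_max_left _ _

lemma measurable_profileStep (s a : ℝ) (f : ℝ → ℝ≥0∞) : Measurable (profileStep s a f) := by
  have h : Monotone fun x : ℝ => ∫⁻ t in Iic (x + 1), f t := fun x y hxy =>
    lintegral_mono_set (Iic_subset_Iic.2 (by linarith))
  exact Measurable.ite measurableSet_Iic (h.measurable.const_mul _)
    (profileTail_continuous s a).measurable.ennreal_ofReal

lemma profileStep_mono (s a : ℝ) : Monotone (profileStep s a) := by
  intro f g h x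
  unfold profileStep
  split_ifs
  · gcongr
    exact h _
  · exact le_rfl

lemma profileIter_mono (s a : ℝ) : Monotone (profileIter s a) := by
  refine monotone_nat_of_le_succ fun n => ?_
  induction n with
  | zero => exact profileStep_mono s a (fun x => zero_le)
  | succ n ih => exact profileStep_mono s a ih

lemma measurable_profileIter (s a : ℝ) (n : ℕ) : Measurable (profileIter s a n) := by
  cases n <;> exact measurable_profileStep _ _ _

lemma profileIter_of_pos (s a : ℝ) (n : ℕ) {x : ℝ} (hx : 0 < x) :
    profileIter s a n x = ENNReal.ofReal (profileTail s a x) := by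
  cases n <;> exact if_neg (not_le.2 hx)

lemma measurable_profileLim (s a : ℝ) : Measurable (profileLim s a) :=
  Measurable.iSup fun n => measurable_profileIter s a n

lemma profileLim_of_pos (s a : ℝ) {x : ℝ} (hx : 0 < x) :
    profileLim s a x = ENNReal.ofReal (profileTail s a x) := by
  simp [profileLim, profileIter_of_pos s a _ hx]

lemma lintegral_profileLim (s a y : ℝ) :
    ∫⁻ t in Iic y, profileLim s a t = ⨆ n, ∫⁻ t in Iic y, profileIter s a n t :=
  lintegral_iSup (measurable_profileIter s a) (profileIter_mono s a)

lemma profileLim_of_nonpos (s a : ℝ) {x : ℝ} (hx : x ≤ 0) :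
    profileLim s a x
      = ENNReal.ofReal (s * Real.exp (-s)) * ∫⁻ t in Iic (x + 1), profileLim s a t := by
  rw [lintegral_profileLim, ENNReal.mul_iSup]
  have h : profileLim s a x = ⨆ n, profileIter s a (n + 1) x := by
    refine le_antisymm (iSup_le fun n => ?_) (iSup_le fun n => le_iSup (profileIter s a · x) _)
    exact (profileIter_mono s a n.le_succ x).trans (le_iSup (fun n => profileIter s a (n + 1) x) n)
  rw [h]
  exact iSup_congr fun n => if_pos hx

/-! ### Exponential integrals -/

lemma integral_exp_neg_mul {s : ℝ} (hs : 0 < s) (u v : ℝ) :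
    ∫ x in u..v, Real.exp (-(s * x)) = (Real.exp (-(s * u)) - Real.exp (-(s * v))) / s := by
  have h : ∀ x ∈ uIcc u v, HasDerivAt (fun x => -Real.exp (-(s * x)) / s)
      (Real.exp (-(s * x))) x := by
    intro x _
    have := (((hasDerivAt_id x).const_mul s).neg.exp.neg).div_const s
    refine this.congr_deriv ?_
    simp only [mul_one, mul_neg, neg_neg, id, Pi.neg_apply]
    field_simp
  rw [intervalIntegral.integral_eq_sub_of_hasDerivAt h
    (Continuous.intervalIntegrable (by fun_prop) _ _)]
  ring

lemma integral_exp_mul_sub {s : ℝ} (hs : 0 < s) (a u v : ℝ) :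
    ∫ x in u..v, Real.exp (s * (x - a))
      = (Real.exp (s * (v - a)) - Real.exp (s * (u - a))) / s := by
  have h : ∀ x ∈ uIcc u v, HasDerivAt (fun x => Real.exp (s * (x - a)) / s)
      (Real.exp (s * (x - a))) x := by
    intro x _
    have := ((((hasDerivAt_id x).sub_const a).const_mul s).exp).div_const s
    refine this.congr_deriv ?_
    simp only [mul_one, id]
    field_simp
  rw [intervalIntegral.integral_eq_sub_of_hasDerivAt h
    (Continuous.intervalIntegrable (by fun_prop) _ _)]
  ring

/-- Bridge from interval integrals of continuous non-negative functions to `∫⁻`. -/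
lemma lintegral_Ioc_ofReal {f : ℝ → ℝ} (hf : Continuous f) (h0 : ∀ x, 0 ≤ f x) {u v : ℝ}
    (huv : u ≤ v) : ∫⁻ x in Ioc u v, ENNReal.ofReal (f x) = ENNReal.ofReal (∫ x in u..v, f x) := by
  rw [intervalIntegral.integral_of_le huv, ofReal_integral_eq_lintegral_ofReal]
  · exact (hf.intervalIntegrable u v).1
  · exact Filter.Eventually.of_forall h0

/-! ### The mass bound -/

/-- Tonelli for the weight `e^{-sx}`: the mass at `y ≤ 1` enters `∫_{x ≤ 0} e^{-sx} T f(x) dx`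
through all `x ∈ [y - 1, 0]`, which contributes `e^{-sy} - e^{-s}`. -/
lemma weighted_step {s : ℝ} (hs : 0 < s) (a : ℝ) {f : ℝ → ℝ≥0∞} (hf : Measurable f) :
    ∫⁻ x in Iic (0 : ℝ), ENNReal.ofReal (Real.exp (-(s * x))) * profileStep s a f x
      = ∫⁻ y in Iic (1 : ℝ), ENNReal.ofReal (Real.exp (-(s * y)) - Real.exp (-s)) * f y := by
  set c := ENNReal.ofReal (s * Real.exp (-s)) with hc
  set w : ℝ → ℝ≥0∞ := fun x => ENNReal.ofReal (Real.exp (-(s * x))) with hw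
  have hwm : Measurable w := by fun_prop
  have hS : MeasurableSet {p : ℝ × ℝ | p.2 ≤ p.1 + 1} :=
    measurableSet_le measurable_snd (measurable_fst.add_const 1)
  set K : ℝ → ℝ → ℝ≥0∞ := fun x y =>
    ({p : ℝ × ℝ | p.2 ≤ p.1 + 1}).indicator (fun p => c * w p.1 * f p.2) (x, y) with hK
  have hKm : Measurable (Function.uncurry K) := by
    refine Measurable.indicator ?_ hS
    exact ((hwm.comp measurable_fst).const_mul c).mul (hf.comp measurable_snd)
  have h1 : ∫⁻ x in Iic (0 : ℝ), w x * profileStep s a f x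
      = ∫⁻ x in Iic (0 : ℝ), ∫⁻ y, K x y := by
    refine setLIntegral_congr_fun measurableSet_Iic fun x hx => ?_
    have : (fun y => K x y) = (Iic (x + 1)).indicator (fun y => c * w x * f y) := by
      ext y
      simp [hK, indicator]
    simp only [this]
    rw [lintegral_indicator measurableSet_Iic, lintegral_const_mul _ hf, profileStep,
      if_pos (mem_Iic.1 hx), ← hc]
    ring
  rw [h1, lintegral_lintegral_swap hKm.aemeasurable, ← lintegral_indicator measurableSet_Iic]
  refine lintegral_congr fun y => ?_
  have h2 : (fun x => K x y) = (Ici (y - 1)).indicator (fun x => w x * (c * f y)) := by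
    ext x
    simp only [hK, indicator, mem_ofPred_eq, mem_Ici, sub_le_iff_le_add]
    split_ifs
    · ring
    · rfl
  rw [h2, lintegral_indicator measurableSet_Ici, Measure.restrict_restrict measurableSet_Ici,
    Ici_inter_Iic, lintegral_mul_const _ hwm]
  by_cases hy : y ≤ 1
  · rw [indicator_of_mem (mem_Iic.2 hy), setLIntegral_congr Ioc_ae_eq_Icc.symm,
      lintegral_Ioc_ofReal (by fun_prop) (fun _ => (Real.exp_pos _).le) (by linarith),
      integral_exp_neg_mul hs, ← mul_assoc, hc, ← ENNReal.ofReal_mul']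
    · congr 2
      have : Real.exp (-(s * (y - 1))) * Real.exp (-s) = Real.exp (-(s * y)) := by
        rw [← Real.exp_add]; congr 1; ring
      rw [← this]
      simp
      field_simp
    · positivity
  · rw [indicator_of_notMem (by simpa using hy), Icc_eq_empty (by push Not at hy; linarith)]
    simp

/-- The balance `Aₙ₊₁ + e^{-s} ∫_{-∞}^1 Gₙ = Aₙ + ∫_0^1 e^{-sx} g(x) dx`. -/
lemma weighted_balance {s : ℝ} (hs : 0 < s) (a : ℝ) (n : ℕ) :
    (∫⁻ x in Iic (0 : ℝ), ENNReal.ofReal (Real.exp (-(s * x))) * profileIter s a (n + 1) x)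
        + ENNReal.ofReal (Real.exp (-s)) * ∫⁻ x in Iic (1 : ℝ), profileIter s a n x
      = (∫⁻ x in Iic (0 : ℝ), ENNReal.ofReal (Real.exp (-(s * x))) * profileIter s a n x)
        + ENNReal.ofReal (∫ x in (0 : ℝ)..1, Real.exp (-(s * x)) * profileTail s a x) := by
  have hm := measurable_profileIter s a n
  have ht := profileTail_continuous s a
  rw [profileIter, weighted_step hs a hm, ← lintegral_const_mul _ hm,
    ← lintegral_add_right _ (hm.const_mul _), ← lintegral_Ioc_ofReal (by fun_prop)
      (fun x => mul_nonneg (Real.exp_pos _).le (zero_le_one.trans (one_le_profileTail s a x)))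
      zero_le_one]
  have h1 : ∫⁻ x in Ioc (0 : ℝ) 1, ENNReal.ofReal (Real.exp (-(s * x)) * profileTail s a x)
      = ∫⁻ x in Ioc (0 : ℝ) 1, ENNReal.ofReal (Real.exp (-(s * x))) * profileIter s a n x := by
    refine setLIntegral_congr_fun measurableSet_Ioc fun x hx => ?_
    rw [profileIter_of_pos s a n hx.1, ENNReal.ofReal_mul (Real.exp_pos _).le]
  rw [h1, ← lintegral_union measurableSet_Ioc
    (Set.disjoint_left.2 fun x hx hx' => not_lt.2 (mem_Iic.1 hx) hx'.1),
    Iic_union_Ioc_eq_Iic zero_le_one]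
  refine setLIntegral_congr_fun measurableSet_Iic fun x hx => ?_
  rw [← add_mul, ← ENNReal.ofReal_add _ (Real.exp_pos _).le, sub_add_cancel]
  rw [sub_nonneg, Real.exp_le_exp]
  nlinarith [mem_Iic.1 hx]

/-- The mass bound `e^{-s} ∫_{-∞}^1 Gₙ ≤ ∫_0^1 e^{-sx} g(x) dx`, obtained by cancelling `Aₙ ≤ Aₙ₊₁` in
`weighted_balance`; the same balance shows by induction that every `Aₙ` is finite. -/
lemma lintegral_profileIter_le {s : ℝ} (hs : 0 < s) (a : ℝ) (n : ℕ) :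
    ENNReal.ofReal (Real.exp (-s)) * ∫⁻ x in Iic (1 : ℝ), profileIter s a n x
      ≤ ENNReal.ofReal (∫ x in (0 : ℝ)..1, Real.exp (-(s * x)) * profileTail s a x) := by
  have hfin : ∀ n, (∫⁻ x in Iic (0 : ℝ),
      ENNReal.ofReal (Real.exp (-(s * x))) * profileIter s a n x) ≠ ∞ := by
    intro n
    induction n with
    | zero =>
      have : ∫⁻ x in Iic (0 : ℝ), ENNReal.ofReal (Real.exp (-(s * x))) * profileIter s a 0 x
          = 0 := by
        rw [profileIter, weighted_step hs a measurable_zero]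
        simp
      simp [this]
    | succ n ih =>
      refine ne_top_of_le_ne_top (ENNReal.add_ne_top.2 ⟨ih, ENNReal.ofReal_ne_top⟩)
        (le_self_add.trans (weighted_balance hs a n).le)
  refine (ENNReal.add_le_add_iff_left (hfin n)).1 ?_
  rw [← weighted_balance hs a n]
  gcongr with x
  exact profileIter_mono s a n.le_succ x

lemma integral_weighted_tail {s a : ℝ} (hs : 0 < s) (ha0 : 0 ≤ a) (ha1 : a ≤ 1) :
    ∫ x in (0 : ℝ)..1, Real.exp (-(s * x)) * profileTail s a x
      = (1 - Real.exp (-(s * a))) / s + (1 - a) * Real.exp (-(s * a)) := by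
  have ht := profileTail_continuous s a
  have hint : ∀ u v, IntervalIntegrable (fun x => Real.exp (-(s * x)) * profileTail s a x)
      volume u v := fun u v => Continuous.intervalIntegrable (by fun_prop) u v
  rw [← intervalIntegral.integral_add_adjacent_intervals (hint 0 a) (hint a 1)]
  congr 1
  · have : ∫ x in (0 : ℝ)..a, Real.exp (-(s * x)) * profileTail s a x
        = ∫ x in (0 : ℝ)..a, Real.exp (-(s * x)) := by
      refine intervalIntegral.integral_congr fun x hx => ?_
      rw [uIcc_of_le ha0] at hx
      have : profileTail s a x = 1 :=
        max_eq_left (Real.exp_le_one_iff.2 (by nlinarith [hx.2]))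
      simp [this]
    rw [this, integral_exp_neg_mul hs]
    simp
  · have : ∫ x in a..1, Real.exp (-(s * x)) * profileTail s a x
        = ∫ x in a..1, Real.exp (-(s * a)) := by
      refine intervalIntegral.integral_congr fun x hx => ?_
      rw [uIcc_of_le ha1] at hx
      have : profileTail s a x = Real.exp (s * (x - a)) :=
        max_eq_right (Real.one_le_exp (mul_nonneg hs.le (by linarith [hx.1])))
      simp only [this]
      rw [← Real.exp_add]
      congr 1
      ring
    rw [this]
    simp

/-! ### The profile -/

/-- The real-valued limit is a profile as soon as `χ` lies between the mass bound
`e^s ∫_0^1 e^{-sx} g(x) dx` and the threshold `e^{s(1-a)}/s` required by robustness on `(0, ∞)`. -/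
lemma profileLim_isProfile {s a χ : ℝ} (hs : 0 < s) (ha0 : 0 ≤ a) (ha1 : a ≤ 1)
    (hlo : Real.exp s * ((1 - Real.exp (-(s * a))) / s + (1 - a) * Real.exp (-(s * a))) ≤ χ)
    (hhi : χ ≤ Real.exp (s * (1 - a)) / s) :
    BiddingProfile (Real.exp s / s) χ (fun x => (profileLim s a x).toReal) := by
  set L := profileLim s a with hL
  set c := s * Real.exp (-s) with hc
  have hcpos : 0 < c := by positivity
  have hρc : Real.exp s / s * c = 1 := by
    rw [hc, Real.exp_neg]; field_simp
  have hmass : ∫⁻ t in Iic (1 : ℝ), L t ≤ ENNReal.ofReal χ := by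
    rw [hL, lintegral_profileLim]
    refine iSup_le fun n => ?_
    have h := lintegral_profileIter_le hs a n
    rw [integral_weighted_tail hs ha0 ha1] at h
    have h2 : ENNReal.ofReal (Real.exp s) * ENNReal.ofReal (Real.exp (-s)) = 1 := by
      rw [← ENNReal.ofReal_mul (Real.exp_pos _).le, ← Real.exp_add]; simp
    calc ∫⁻ t in Iic (1 : ℝ), profileIter s a n t
        = ENNReal.ofReal (Real.exp s) * (ENNReal.ofReal (Real.exp (-s))
            * ∫⁻ t in Iic (1 : ℝ), profileIter s a n t) := by rw [← mul_assoc, h2, one_mul]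
      _ ≤ ENNReal.ofReal (Real.exp s) * _ := by gcongr
      _ = _ := (ENNReal.ofReal_mul (Real.exp_pos _).le).symm
      _ ≤ _ := ENNReal.ofReal_le_ofReal hlo
  have hρ : χ ≤ Real.exp s / s := by
    refine hhi.trans ?_
    gcongr
    nlinarith
  have hneg : ∀ x ≤ 0, L x = ENNReal.ofReal c * ∫⁻ t in Iic (x + 1), L t :=
    fun x hx => profileLim_of_nonpos s a hx
  have hpos : ∀ x > 0, L x = ENNReal.ofReal (profileTail s a x) :=
    fun x hx => profileLim_of_pos s a hx
  have hone : ∀ x > 0, 1 ≤ L x := fun x hx => by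
    rw [hpos x hx, ← ENNReal.ofReal_one]
    exact ENNReal.ofReal_le_ofReal (one_le_profileTail s a x)
  have hmassρ : ENNReal.ofReal c * ∫⁻ t in Iic (1 : ℝ), L t ≤ 1 := by
    calc _ ≤ ENNReal.ofReal c * ENNReal.ofReal (Real.exp s / s) := by
          gcongr
          exact hmass.trans (ENNReal.ofReal_le_ofReal hρ)
      _ = 1 := by rw [← ENNReal.ofReal_mul hcpos.le, mul_comm, hρc, ENNReal.ofReal_one]
  have hle : ∀ x ≤ 0, L x ≤ 1 := fun x hx => by
    rw [hneg x hx]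
    refine le_trans ?_ hmassρ
    gcongr
    linarith
  have hmono : Monotone L := by
    intro x y hxy
    rcases le_or_gt y 0 with hy | hy
    · rw [hneg x (hxy.trans hy), hneg y hy]
      gcongr
    · rcases le_or_gt x 0 with hx | hx
      · exact (hle x hx).trans (hone y hy)
      · rw [hpos x hx, hpos y hy]
        exact ENNReal.ofReal_le_ofReal (profileTail_mono hs a hxy)
  have hfin : ∀ x, L x ≠ ∞ := fun x => by
    rcases le_or_gt x 0 with hx | hx
    · exact ne_top_of_le_ne_top ENNReal.one_ne_top (hle x hx)
    · rw [hpos x hx]; exact ENNReal.ofReal_ne_top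
  have hL' : ∀ x, ENNReal.ofReal (L x).toReal = L x := fun x => ENNReal.ofReal_toReal (hfin x)
  have hmeas : Measurable L := measurable_profileLim s a
  have hgm : Monotone fun x => (L x).toReal := fun x y h => ENNReal.toReal_mono (hfin y) (hmono h)
  have hfinI : ∫⁻ t in Iic (1 : ℝ), L t ≠ ∞ := ne_top_of_le_ne_top ENNReal.ofReal_ne_top hmass
  -- positivity spreads to the left by one unit at a time
  have hposL : ∀ n : ℕ, ∀ x : ℝ, -(n : ℝ) < x → 0 < L x := by
    intro n
    induction n with
    | zero => intro x hx; exact zero_lt_one.trans_le (hone x (by simpa using hx))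
    | succ n ih =>
      intro x hx
      push_cast at hx
      rcases le_or_gt x 0 with hx0 | hx0
      · rw [hneg x hx0]
        refine ENNReal.mul_pos (by simpa using hcpos) (ne_of_gt ?_)
        obtain ⟨z, hz1, hz2⟩ := exists_between (show -(n : ℝ) < x + 1 by linarith)
        calc (0 : ℝ≥0∞) < L z * volume (Ioc z (x + 1)) := by
              refine ENNReal.mul_pos (ih z hz1).ne' ?_
              simpa using hz2
          _ = ∫⁻ t in Ioc z (x + 1), L z := by simp
          _ ≤ ∫⁻ t in Ioc z (x + 1), L t :=
              setLIntegral_mono hmeas fun t ht => hmono ht.1.le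
          _ ≤ _ := lintegral_mono_set Ioc_subset_Iic_self
      · exact zero_lt_one.trans_le (hone x hx0)
  refine ⟨hgm, fun x => ?_, fun x => ?_, fun x hx => ?_, fun x hx => ?_, fun x => ?_, ?_⟩
  · rcases le_or_gt x 0 with hx | hx
    · have hprim : Continuous fun b => ∫ t in (1 : ℝ)..b, (L t).toReal :=
        intervalIntegral.continuous_primitive (fun u v => hgm.intervalIntegrable) 1
      have hI : IntegrableOn (fun t => (L t).toReal) (Iic 1) :=
        integrable_toReal_of_lintegral_ne_top hmeas.aemeasurable hfinI
      have heq : ∀ y ∈ Iic x, (L y).toReal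
          = c * ((∫ t in Iic (1 : ℝ), (L t).toReal) + ∫ t in (1 : ℝ)..(y + 1), (L t).toReal) := by
        intro y hy
        have hy0 : y ≤ 0 := (mem_Iic.1 hy).trans hx
        have hIy : IntegrableOn (fun t => (L t).toReal) (Iic (y + 1)) :=
          hI.mono_set (Iic_subset_Iic.2 (by linarith))
        rw [← intervalIntegral.integral_Iic_sub_Iic hI hIy, add_sub_cancel, hneg y hy0,
          ENNReal.toReal_mul, ENNReal.toReal_ofReal hcpos.le,
          integral_toReal hmeas.aemeasurable (Filter.Eventually.of_forall fun t =>
            (hfin t).lt_top)]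
      refine ContinuousWithinAt.congr ?_ heq (heq x self_mem_Iic)
      have : Continuous fun y : ℝ => c * ((∫ t in Iic (1 : ℝ), (L t).toReal)
          + ∫ t in (1 : ℝ)..(y + 1), (L t).toReal) :=
        continuous_const.mul (continuous_const.add (hprim.comp (continuous_id.add_const 1)))
      exact this.continuousWithinAt
    · refine ContinuousAt.continuousWithinAt ?_
      refine (profileTail_continuous s a).continuousAt.congr ?_
      filter_upwards [lt_mem_nhds hx] with y hy
      rw [hpos y hy, ENNReal.toReal_ofReal (zero_le_one.trans (one_le_profileTail s a y))]
  · obtain ⟨n, hn⟩ := exists_nat_gt (-x)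
    exact ENNReal.toReal_pos (hposL n x (by linarith)).ne' (hfin x)
  · -- `χ = e^s/s` is possible (at `s = 1`), so strictness comes from the mass on `(x + 1, 1]`
    have hlt : ∫⁻ t in Iic (x + 1), L t < ∫⁻ t in Iic (1 : ℝ), L t := by
      have hsplit := lintegral_union (μ := volume) (f := L) (A := Iic (x + 1)) measurableSet_Ioc
        (Set.disjoint_left.2 fun t ht (ht' : t ∈ Ioc (x + 1) 1) => not_lt.2 (mem_Iic.1 ht) ht'.1)
      rw [Iic_union_Ioc_eq_Iic (by linarith)] at hsplit
      rw [hsplit]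
      refine ENNReal.lt_add_right (ne_top_of_le_ne_top hfinI
        (lintegral_mono_set (Iic_subset_Iic.2 (by linarith)))) (ne_of_gt ?_)
      obtain ⟨n, hn⟩ := exists_nat_gt (-(x + 1))
      calc (0 : ℝ≥0∞) < L (x + 1) * volume (Ioc (x + 1) 1) := by
            refine ENNReal.mul_pos (hposL n (x + 1) (by linarith)).ne' ?_
            simpa using hx
        _ = ∫⁻ t in Ioc (x + 1) 1, L (x + 1) := by simp
        _ ≤ ∫⁻ t in Ioc (x + 1) 1, L t := setLIntegral_mono hmeas fun t ht => hmono ht.1.le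
    have : L x < 1 := by
      rw [hneg x hx.le]
      refine lt_of_lt_of_le ?_ hmassρ
      exact ENNReal.mul_lt_mul_right (by simpa using hcpos) ENNReal.ofReal_ne_top hlt
    simpa using (ENNReal.toReal_lt_toReal (hfin x) ENNReal.one_ne_top).2 this
  · simpa using ENNReal.toReal_mono (hfin x) (hone x hx)
  · simp only [hL']
    rw [ENNReal.ofReal_mul (by positivity), hL']
    rcases le_or_gt x 0 with hx | hx
    · rw [hneg x hx, ← mul_assoc, ← ENNReal.ofReal_mul (by positivity), hρc, ENNReal.ofReal_one,
        one_mul]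
    · have hsplit := lintegral_union (μ := volume) (f := L) (A := Iic (1 : ℝ)) measurableSet_Ioc
        (Set.disjoint_left.2 fun t ht (ht' : t ∈ Ioc 1 (x + 1)) => not_lt.2 (mem_Iic.1 ht) ht'.1)
      rw [Iic_union_Ioc_eq_Iic (by linarith)] at hsplit
      have htail : ∫⁻ t in Ioc 1 (x + 1), L t
          = ENNReal.ofReal ((Real.exp (s * (x + 1 - a)) - Real.exp (s * (1 - a))) / s) := by
        rw [← integral_exp_mul_sub hs, ← lintegral_Ioc_ofReal (by fun_prop)
          (fun _ => (Real.exp_pos _).le) (by linarith)]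
        refine setLIntegral_congr_fun measurableSet_Ioc fun t ht => ?_
        rw [hpos t (by linarith [ht.1]), profileTail,
          max_eq_right (Real.one_le_exp (mul_nonneg hs.le (by linarith [ht.1])))]
      rw [hsplit, htail, hpos x hx, ← ENNReal.ofReal_mul (by positivity)]
      calc _ ≤ ENNReal.ofReal (Real.exp (s * (1 - a)) / s) + ENNReal.ofReal
              ((Real.exp (s * (x + 1 - a)) - Real.exp (s * (1 - a))) / s) := by
            gcongr
            exact hmass.trans (ENNReal.ofReal_le_ofReal hhi)
        _ = ENNReal.ofReal (Real.exp s / s * Real.exp (s * (x - a))) := by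
            rw [← ENNReal.ofReal_add (by positivity)]
            · congr 1
              rw [div_mul_eq_mul_div, ← Real.exp_add, show s + s * (x - a) = s * (x + 1 - a) by ring]
              ring
            · refine div_nonneg (sub_nonneg.2 (Real.exp_le_exp.2 ?_)) hs.le
              gcongr
              linarith
        _ ≤ _ := by
            refine ENNReal.ofReal_le_ofReal ?_
            gcongr
            exact le_max_right _ _
  · simpa only [hL'] using hmass

theorem exists_optimal_bidding_profile
    (s : ℝ) (hs : s ∈ Set.Ioc (0 : ℝ) 1) (χ : ℝ) (hχ : IsChiVal s χ) :
    ∃ G : ℝ → ℝ, BiddingProfile (Real.exp s / s) χ G := by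
  obtain ⟨hs0, hs1⟩ := hs
  rcases hχ with ⟨hlog, rfl⟩ | ⟨-, ξ, ⟨hξ1, hξe⟩, hξ, rfl⟩
  · have he : Real.exp s ≤ 2 := (Real.le_log_iff_exp_le two_pos).1 hlog
    refine ⟨_, profileLim_isProfile (a := 1) hs0 zero_le_one le_rfl (le_of_eq ?_) ?_⟩
    · rw [mul_one, Real.exp_neg]
      field_simp
      ring
    · rw [sub_self, mul_zero, Real.exp_zero]
      gcongr
      linarith
  · have hξ0 : 0 < ξ := zero_lt_one.trans_le hξ1
    have hl0 : 0 ≤ Real.log ξ := Real.log_nonneg hξ1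
    have hl1 : Real.log ξ ≤ 1 := (Real.log_le_iff_le_exp hξ0).2 hξe
    -- `ξ ≤ ξ (2 - ln ξ) = e^s`, which makes the switching point non-negative
    have hls : Real.log ξ ≤ s := by
      rw [Real.log_le_iff_le_exp hξ0, ← hξ]
      nlinarith
    have hsa : s * (1 - Real.log ξ / s) = s - Real.log ξ := by field_simp
    have hE : Real.exp (-(s - Real.log ξ)) = ξ / Real.exp s := by
      rw [neg_sub, Real.exp_sub, Real.exp_log hξ0]
    refine ⟨_, profileLim_isProfile (a := 1 - Real.log ξ / s) hs0 ?_ ?_ (le_of_eq ?_)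
      (le_of_eq ?_)⟩
    · rw [sub_nonneg, div_le_one hs0]
      exact hls
    · rw [sub_le_self_iff]
      positivity
    · rw [hsa, hE]
      have := Real.exp_pos s
      field_simp
      linarith
    · rw [show s * (1 - (1 - Real.log ξ / s)) = Real.log ξ by field_simp; ring,
        Real.exp_log hξ0]
end

section
/- Let ρ > χ > 1 and let G be a (ρ,χ)-bidding profile, and let φ : (0,1] → [1,∞) be its restriction, φ(x) = G(x) for x ∈ (0,1]. Then there exist a real χ' with 1 < χ' ≤ χ and a tight (ρ,χ')-bidding profile G' with G'(x) = φ(x) for all x ∈ (0,1]. -/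
/-!
The function `G'` keeps `G` on `(0, ∞)` and, on `(-∞, 0]`, is the least solution of the robustness
condition read as an equation. Concretely, consider the operator `T` on functions `ℝ → [0, ∞]` given
by `T F x = ρ⁻¹ ∫_{-∞}^{x+1} F` for `x ≤ 0` and `T F x = G x` for `x > 0`. It is monotone, so by
Knaster-Tarski it has a least fixed point `F`, and robustness of `G` says exactly `T G ≤ G`, whence
`F ≤ G`; in particular `F` is finite.

The fixed point equation is tightness of `F` at every `x ≤ 0`, and at `x = 0` it identifies the
consistency value `χ' = ρ F 0`. The bound `F ≤ G` gives `χ' ≤ χ`, hence `F 0 < 1` because `χ < ρ`,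
and it gives robustness on `(0, ∞)`, where `F = G`. Monotonicity and continuity on `(-∞, 0]` hold
because `F` is there an integral with bounded integrand. Positivity (`tightening_pos`) propagates to
the left one unit at a time, and `χ' > 1` since `F ≥ 1` on `(0, 1]` and `F > 0` on `(-1, 0]`.
-/

open MeasureTheory Set
open scoped ENNReal

/-- A bidding profile is tight if the robustness condition holds with equality for all
`x ≤ 0` and the consistency condition holds with equality. -/
def TightProfile (ρ χ : ℝ) (G : ℝ → ℝ) : Prop :=
  (∀ x ≤ (0 : ℝ),
    (∫⁻ t in Set.Iic (x + 1), ENNReal.ofReal (G t)) = ENNReal.ofReal (ρ * G x)) ∧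
  (∫⁻ t in Set.Iic (1 : ℝ), ENNReal.ofReal (G t)) = ENNReal.ofReal χ

/-- The monotone operator `T F x = ρ⁻¹ ∫_{-∞}^{x+1} F` for `x ≤ 0`, `T F x = G x` for `x > 0`.
Extended nonnegative values make the functions a complete lattice and the integral monotone
without any measurability assumption. -/
noncomputable def tighteningOp (ρ : ℝ) (G : ℝ → ℝ) : (ℝ → ℝ≥0∞) →o (ℝ → ℝ≥0∞) where
  toFun F x := if x ≤ 0 then (ENNReal.ofReal ρ)⁻¹ * ∫⁻ t in Set.Iic (x + 1), F t
    else ENNReal.ofReal (G x)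
  monotone' F₁ F₂ h x := by
    dsimp only
    split_ifs
    · gcongr
      exact h _
    · exact le_rfl

/-- The least fixed point of `tighteningOp`. -/
noncomputable def tightening (ρ : ℝ) (G : ℝ → ℝ) : ℝ → ℝ≥0∞ := (tighteningOp ρ G).lfp

lemma tightening_eq (ρ : ℝ) (G : ℝ → ℝ) (x : ℝ) :
    tightening ρ G x = if x ≤ 0 then (ENNReal.ofReal ρ)⁻¹ *
      ∫⁻ t in Set.Iic (x + 1), tightening ρ G t else ENNReal.ofReal (G x) :=
  (congrFun (tighteningOp ρ G).map_lfp x).symm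

lemma tightening_of_pos (ρ : ℝ) (G : ℝ → ℝ) {x : ℝ} (hx : 0 < x) :
    tightening ρ G x = ENNReal.ofReal (G x) := by
  rw [tightening_eq, if_neg hx.not_ge]

lemma tightening_of_nonpos (ρ : ℝ) (G : ℝ → ℝ) {x : ℝ} (hx : x ≤ 0) :
    tightening ρ G x = (ENNReal.ofReal ρ)⁻¹ * ∫⁻ t in Set.Iic (x + 1), tightening ρ G t := by
  rw [tightening_eq, if_pos hx]

lemma lintegral_tightening {ρ : ℝ} (hρ : 0 < ρ) (G : ℝ → ℝ) {x : ℝ} (hx : x ≤ 0) :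
    ∫⁻ t in Set.Iic (x + 1), tightening ρ G t = ENNReal.ofReal ρ * tightening ρ G x := by
  rw [tightening_of_nonpos ρ G hx, ← mul_assoc,
    ENNReal.mul_inv_cancel (by simpa using hρ) ENNReal.ofReal_ne_top, one_mul]

/-- Robustness of `G` makes `G` a pre-fixed point of `tighteningOp`. -/
lemma tightening_le {ρ χ : ℝ} {G : ℝ → ℝ} (hρ : 0 < ρ) (hG : BiddingProfile ρ χ G) (x : ℝ) :
    tightening ρ G x ≤ ENNReal.ofReal (G x) := by
  have h : tighteningOp ρ G (fun t => ENNReal.ofReal (G t)) ≤ fun t => ENNReal.ofReal (G t) := by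
    intro x
    show (if x ≤ 0 then _ else _) ≤ _
    split_ifs
    · calc _ ≤ (ENNReal.ofReal ρ)⁻¹ * ENNReal.ofReal (ρ * G x) := by
            gcongr
            exact hG.2.2.2.2.2.1 x
        _ = _ := by
            rw [ENNReal.ofReal_mul hρ.le, ← mul_assoc,
              ENNReal.inv_mul_cancel (by simpa using hρ) ENNReal.ofReal_ne_top, one_mul]
    · exact le_rfl
  exact (tighteningOp ρ G).lfp_le h x

lemma tightening_lintegral_le {ρ χ : ℝ} {G : ℝ → ℝ} (hρ : 0 < ρ) (hG : BiddingProfile ρ χ G) :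
    ENNReal.ofReal ρ * tightening ρ G 0 ≤ ENNReal.ofReal χ := by
  rw [← lintegral_tightening hρ G le_rfl, zero_add]
  exact (lintegral_mono fun t => tightening_le hρ hG t).trans hG.2.2.2.2.2.2

lemma tightening_zero_lt_one {ρ χ : ℝ} {G : ℝ → ℝ} (hρ : 0 < ρ) (hχρ : χ < ρ)
    (hG : BiddingProfile ρ χ G) : tightening ρ G 0 < 1 := by
  by_contra! h
  have h1 : ENNReal.ofReal χ < ENNReal.ofReal ρ := (ENNReal.ofReal_lt_ofReal_iff hρ).2 hχρ
  have h2 : ENNReal.ofReal ρ ≤ ENNReal.ofReal ρ * tightening ρ G 0 := le_mul_of_one_le_right' h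
  exact absurd (h2.trans (tightening_lintegral_le hρ hG)) h1.not_ge

lemma tightening_mono {ρ χ : ℝ} {G : ℝ → ℝ} (hρ : 0 < ρ) (hχρ : χ < ρ)
    (hG : BiddingProfile ρ χ G) : Monotone (tightening ρ G) := by
  have hneg : ∀ x y : ℝ, x ≤ y → y ≤ 0 → tightening ρ G x ≤ tightening ρ G y := by
    intro x y hxy hy
    rw [tightening_of_nonpos ρ G hy, tightening_of_nonpos ρ G (hxy.trans hy)]
    gcongr
  intro x y hxy
  rcases le_or_gt y 0 with hy | hy
  · exact hneg x y hxy hy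
  rw [tightening_of_pos ρ G hy]
  rcases le_or_gt x 0 with hx | hx
  · refine (hneg x 0 hx le_rfl).trans ((tightening_zero_lt_one hρ hχρ hG).le.trans ?_)
    simpa using ENNReal.ofReal_le_ofReal (hG.2.2.2.2.1 y hy)
  · rw [tightening_of_pos ρ G hx]
    exact ENNReal.ofReal_le_ofReal (hG.1 hxy)

lemma le_setLIntegral_Ioc {F : ℝ → ℝ≥0∞} (hF : Monotone F) (a b : ℝ) :
    F a * ENNReal.ofReal (b - a) ≤ ∫⁻ t in Set.Ioc a b, F t := by
  rw [← Real.volume_Ioc, ← setLIntegral_const]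
  exact setLIntegral_mono' measurableSet_Ioc fun t ht => hF ht.1.le

lemma setLIntegral_Ioc_le {F : ℝ → ℝ≥0∞} (hF : Monotone F) (a b : ℝ) :
    ∫⁻ t in Set.Ioc a b, F t ≤ F b * ENNReal.ofReal (b - a) := by
  rw [← Real.volume_Ioc, ← setLIntegral_const]
  exact setLIntegral_mono' measurableSet_Ioc fun t ht => hF ht.2

lemma setLIntegral_Iic_add (F : ℝ → ℝ≥0∞) {a b : ℝ} (hab : a ≤ b) :
    ∫⁻ t in Set.Iic b, F t = (∫⁻ t in Set.Iic a, F t) + ∫⁻ t in Set.Ioc a b, F t := by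
  rw [← lintegral_union measurableSet_Ioc (Set.Iic_disjoint_Ioc le_rfl),
    Set.Iic_union_Ioc_eq_Iic hab]

/-- Positivity on `(-n, ∞)` passes to `(-(n+1), ∞)`, since `T F x` integrates `F` up to `x + 1`. -/
lemma tightening_pos {ρ χ : ℝ} {G : ℝ → ℝ} (hρ : 0 < ρ) (hχρ : χ < ρ)
    (hG : BiddingProfile ρ χ G) (x : ℝ) : 0 < tightening ρ G x := by
  have hpos : ∀ y : ℝ, 0 < y → 0 < tightening ρ G y := fun y hy => by
    rw [tightening_of_pos ρ G hy]
    exact ENNReal.ofReal_pos.2 (hG.2.2.1 y)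
  have key : ∀ n : ℕ, ∀ y : ℝ, -(n : ℝ) < y → 0 < tightening ρ G y := by
    intro n
    induction n with
    | zero => exact fun y hy => hpos y (by simpa using hy)
    | succ n ih =>
      intro y hy
      push_cast at hy
      rcases le_or_gt y 0 with hy0 | hy0
      swap
      · exact hpos y hy0
      rw [tightening_of_nonpos ρ G hy0]
      refine ENNReal.mul_pos (by simp) (ne_of_gt ?_)
      -- the midpoint of `-n` and `y + 1`
      have hz : -(n : ℝ) < (y + 1 - n) / 2 := by linarith
      have hz' : 0 < y + 1 - (y + 1 - n) / 2 := by linarith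
      calc 0 < tightening ρ G ((y + 1 - n) / 2) * ENNReal.ofReal (y + 1 - (y + 1 - n) / 2) :=
            ENNReal.mul_pos (ih _ hz).ne' (ENNReal.ofReal_pos.2 hz').ne'
        _ ≤ ∫⁻ t in Set.Ioc ((y + 1 - n) / 2) (y + 1), tightening ρ G t :=
            le_setLIntegral_Ioc (tightening_mono hρ hχρ hG) _ _
        _ ≤ _ := lintegral_mono_set Set.Ioc_subset_Iic_self
  obtain ⟨n, hn⟩ := exists_nat_gt (-x)
  exact key n x (by linarith)

lemma one_lt_mul_tightening_zero {ρ χ : ℝ} {G : ℝ → ℝ} (hρ : 0 < ρ) (hχρ : χ < ρ)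
    (hG : BiddingProfile ρ χ G) : 1 < ENNReal.ofReal ρ * tightening ρ G 0 := by
  have hmono := tightening_mono hρ hχρ hG
  rw [← lintegral_tightening hρ G le_rfl, zero_add, setLIntegral_Iic_add _ zero_le_one]
  have h1 : (1 : ℝ≥0∞) ≤ ∫⁻ t in Set.Ioc (0 : ℝ) 1, tightening ρ G t := by
    calc (1 : ℝ≥0∞) = ∫⁻ _ in Set.Ioc (0 : ℝ) 1, 1 := by simp
      _ ≤ _ := setLIntegral_mono' measurableSet_Ioc fun t ht => by
        rw [tightening_of_pos ρ G ht.1]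
        simpa using ENNReal.ofReal_le_ofReal (hG.2.2.2.2.1 t ht.1)
  have h2 : 0 < ∫⁻ t in Set.Iic (0 : ℝ), tightening ρ G t := by
    have := le_setLIntegral_Ioc hmono (-1) 0
    norm_num at this
    exact (tightening_pos hρ hχρ hG (-1)).trans_le
      (this.trans (lintegral_mono_set Set.Ioc_subset_Iic_self))
  calc (1 : ℝ≥0∞) < 1 + ∫⁻ t in Set.Iic (0 : ℝ), tightening ρ G t :=
        ENNReal.lt_add_right ENNReal.one_ne_top h2.ne'
    _ ≤ _ := by
        rw [add_comm]
        gcongr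

/-- On `(-∞, 0]` the fixed point is Lipschitz, being an integral of a function bounded by `G 1`. -/
lemma tightening_sub_le {ρ χ : ℝ} {G : ℝ → ℝ} (hρ : 0 < ρ) (hχρ : χ < ρ)
    (hG : BiddingProfile ρ χ G) {x y : ℝ} (hyx : y ≤ x) (hx : x ≤ 0) :
    (tightening ρ G x).toReal ≤ (tightening ρ G y).toReal + ρ⁻¹ * G 1 * (x - y) := by
  have hfin : ∀ t, tightening ρ G t ≠ ∞ := fun t =>
    ((tightening_le hρ hG t).trans_lt ENNReal.ofReal_lt_top).ne
  have h1 : tightening ρ G (x + 1) ≤ ENNReal.ofReal (G 1) :=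
    (tightening_le hρ hG _).trans (ENNReal.ofReal_le_ofReal (hG.1 (by linarith)))
  have hG1 := (hG.2.2.1 1).le
  have hd : 0 ≤ x - y := sub_nonneg.2 hyx
  have key : tightening ρ G x ≤ tightening ρ G y + ENNReal.ofReal (ρ⁻¹ * G 1 * (x - y)) := by
    rw [tightening_of_nonpos ρ G hx, tightening_of_nonpos ρ G (hyx.trans hx),
      setLIntegral_Iic_add _ (by linarith : y + 1 ≤ x + 1), mul_add, mul_assoc ρ⁻¹,
      ENNReal.ofReal_mul (inv_nonneg.2 hρ.le), ENNReal.ofReal_inv_of_pos hρ,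
      ENNReal.ofReal_mul hG1]
    gcongr
    refine (setLIntegral_Ioc_le (tightening_mono hρ hχρ hG) _ _).trans ?_
    rw [show x + 1 - (y + 1) = x - y by ring]
    gcongr
  have h := ENNReal.toReal_mono (ENNReal.add_ne_top.2 ⟨hfin y, ENNReal.ofReal_ne_top⟩) key
  rwa [ENNReal.toReal_add (hfin y) ENNReal.ofReal_ne_top,
    ENNReal.toReal_ofReal (by positivity)] at h

theorem bidding_profile_tightening
    (ρ χ : ℝ) (hχ : 1 < χ) (hχρ : χ < ρ)
    (G : ℝ → ℝ) (hG : BiddingProfile ρ χ G) :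
    ∃ (χ' : ℝ) (G' : ℝ → ℝ), 1 < χ' ∧ χ' ≤ χ ∧
      BiddingProfile ρ χ' G' ∧ TightProfile ρ χ' G' ∧
      ∀ x ∈ Set.Ioc (0 : ℝ) 1, G' x = G x := by
  have hρ : 0 < ρ := by linarith
  have hmono := tightening_mono hρ hχρ hG
  have hle := tightening_le hρ hG
  have hfin : ∀ t, tightening ρ G t ≠ ∞ := fun t => ((hle t).trans_lt ENNReal.ofReal_lt_top).ne
  have hof : ∀ t, ENNReal.ofReal (tightening ρ G t).toReal = tightening ρ G t :=
    fun t => ENNReal.ofReal_toReal (hfin t)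
  have hagree : ∀ t, 0 < t → (tightening ρ G t).toReal = G t := fun t ht => by
    rw [tightening_of_pos ρ G ht, ENNReal.toReal_ofReal (hG.2.2.1 t).le]
  have hmonoR : Monotone fun t => (tightening ρ G t).toReal :=
    fun a b hab => ENNReal.toReal_mono (hfin b) (hmono hab)
  have hχ' : ENNReal.ofReal (ρ * (tightening ρ G 0).toReal) =
      ENNReal.ofReal ρ * tightening ρ G 0 := by
    rw [ENNReal.ofReal_mul hρ.le, hof]
  have htight : ∀ x ≤ (0 : ℝ),
      (∫⁻ t in Set.Iic (x + 1), ENNReal.ofReal (tightening ρ G t).toReal) =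
        ENNReal.ofReal (ρ * (tightening ρ G x).toReal) := by
    intro x hx
    simp only [hof, ENNReal.ofReal_mul hρ.le]
    exact lintegral_tightening hρ G hx
  have hcons : (∫⁻ t in Set.Iic (1 : ℝ), ENNReal.ofReal (tightening ρ G t).toReal) =
      ENNReal.ofReal (ρ * (tightening ρ G 0).toReal) := by
    simpa using htight 0 le_rfl
  refine ⟨ρ * (tightening ρ G 0).toReal, fun t => (tightening ρ G t).toReal, ?_, ?_,
    ⟨hmonoR, ?_, ?_, ?_, ?_, ?_, hcons.le⟩, ⟨htight, hcons⟩, fun x hx => hagree x hx.1⟩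
  · have h := one_lt_mul_tightening_zero hρ hχρ hG
    rwa [← hχ', ENNReal.one_lt_ofReal] at h
  · have h := tightening_lintegral_le hρ hG
    rwa [← hχ', ENNReal.ofReal_le_ofReal_iff (by linarith)] at h
  · intro x
    rcases le_or_gt x 0 with hx | hx
    · have hlim : Filter.Tendsto (fun y => (tightening ρ G x).toReal - ρ⁻¹ * G 1 * (x - y))
          (nhdsWithin x (Set.Iic x)) (nhds (tightening ρ G x).toReal) := by
        have hc : Continuous fun y => (tightening ρ G x).toReal - ρ⁻¹ * G 1 * (x - y) := by
          fun_prop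
        simpa using (hc.tendsto x).mono_left nhdsWithin_le_nhds
      refine tendsto_of_tendsto_of_tendsto_of_le_of_le' hlim tendsto_const_nhds ?_ ?_
      · filter_upwards [self_mem_nhdsWithin] with y hy
        linarith [tightening_sub_le hρ hχρ hG hy hx]
      · filter_upwards [self_mem_nhdsWithin] with y hy using hmonoR hy
    · refine (hG.2.1 x).congr_of_eventuallyEq ?_ (hagree x hx)
      filter_upwards [mem_nhdsWithin_of_mem_nhds (Ioi_mem_nhds hx)] with y hy using hagree y hy
  · exact fun x => ENNReal.toReal_pos (tightening_pos hρ hχρ hG x).ne' (hfin x)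
  · intro x hx
    refine (hmonoR hx.le).trans_lt ?_
    simpa using ENNReal.toReal_strict_mono ENNReal.one_ne_top (tightening_zero_lt_one hρ hχρ hG)
  · intro x hx
    dsimp only
    rw [hagree x hx]
    exact hG.2.2.2.2.1 x hx
  · intro x
    rcases le_or_gt x 0 with hx | hx
    · exact (htight x hx).le
    · dsimp only
      rw [hagree x hx]
      simp only [hof]
      exact (lintegral_mono fun t => hle t).trans (hG.2.2.2.2.2.1 x)
end

section
/- For every s ∈ (0,1], if there exists a tight (ρ(s), χ)-bidding profile, where ρ(s) := e^s/s, then χ ≥ χ(s), where χ(s) := (e^s − 1)/s for 0 < s ≤ ln 2 and χ(s) := ξ(s)/s for ln 2 ≤ s ≤ 1, with ξ(s) the unique ξ ∈ [1, e] satisfying ξ·(2 − ln ξ) = e^s. -/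
/-!
Write `F x = ∫_{-∞}^x G`, `g t = e^{-st} G t` and `h x = e^{-sx} F x`, so that `h' = g - s h` off a
countable set. Robustness reads `s · h (x + 1) ≤ g x`, because `ρ = e^s / s`.

* Growth (`growth_rate`): `s F ≤ G`, hence `h` is non-decreasing. If `r ≤ s` is the largest number
  with `r F ≤ G`, then `F (x + 1) ≥ e^r F x`, so robustness gives `s e^{r - s} F ≤ G`;
  maximality forces `s e^{r - s} ≤ r`, which is impossible for `r < s ≤ 1`.
* Weighted mass (`weighted_mass_le`): `∫_0^1 g ≤ h 1`. The quantity
  `D x = h (x + 1) - ∫_x^{x+1} g` is non-decreasing by robustness. If `D 0 = -ε < 0`, then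
  `h y + ε ≤ h (y + 1)` for every `y ≤ 0`, and `h` would become negative at `-∞`.

Since `h 1 = e^{-s} χ`, the bound `G ≥ 1` on `(0, 1]` gives `χ ≥ (e^s - 1) / s`.
Robustness and the monotonicity of `h` also give `g t ≥ s h (t + 1) ≥ s e^{-s} χ` for `t ≥ 0`.
Using the first bound on `(0, t₀]` and the second on `(t₀, 1]`, where they cross at
`t₀ = 1 - ln (sχ) / s`, yields `e^s ≤ η (2 - ln η)` for `η = sχ`. As `η ↦ η (2 - ln η)` is strictly
increasing on `[1, e]`, this forces `η ≥ ξ(s)`.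
-/

open MeasureTheory Set
open scoped ENNReal

/-! ### The primitive of a profile and its exponential weighting -/

/-- The primitive `x ↦ ∫_{-∞}^x G` of a profile. -/
noncomputable def cumul (G : ℝ → ℝ) (x : ℝ) : ℝ := ∫ t in Set.Iic x, G t

lemma cumul_sub {G : ℝ → ℝ} (hI : ∀ x, IntegrableOn G (Set.Iic x)) (a b : ℝ) :
    cumul G b - cumul G a = ∫ t in a..b, G t :=
  intervalIntegral.integral_Iic_sub_Iic (hI a) (hI b)

lemma continuous_cumul {G : ℝ → ℝ} (hmono : Monotone G)
    (hI : ∀ x, IntegrableOn G (Set.Iic x)) : Continuous (cumul G) := by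
  have h : cumul G = fun x => (∫ t in (0 : ℝ)..x, G t) + cumul G 0 := by
    funext x
    rw [← cumul_sub hI]
    ring
  rw [h]
  exact (intervalIntegral.continuous_primitive
    (fun a b => hmono.intervalIntegrable) 0).add continuous_const

lemma hasDerivAt_cumul {G : ℝ → ℝ} (hmono : Monotone G)
    (hI : ∀ x, IntegrableOn G (Set.Iic x)) {x : ℝ} (hx : ContinuousAt G x) :
    HasDerivAt (cumul G) (G x) x := by
  have h : cumul G = fun x => (∫ t in (0 : ℝ)..x, G t) + cumul G 0 := by
    funext x
    rw [← cumul_sub hI]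
    ring
  rw [h]
  exact (intervalIntegral.integral_hasDerivAt_right hmono.intervalIntegrable
    hmono.measurable.stronglyMeasurable.stronglyMeasurableAtFilter hx).add_const _

/-- The weight `e^{-rt}` times a monotone function is integrable on bounded intervals. -/
lemma intervalIntegrable_weight {G : ℝ → ℝ} (hmono : Monotone G) (r a b : ℝ) :
    IntervalIntegrable (fun t => Real.exp (-(r * t)) * G t) volume a b :=
  (hmono.intervalIntegrable).continuousOn_mul (by fun_prop)

lemma continuous_weight_cumul {G : ℝ → ℝ} (hmono : Monotone G)
    (hI : ∀ x, IntegrableOn G (Set.Iic x)) (r : ℝ) :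
    Continuous (fun t => Real.exp (-(r * t)) * cumul G t) := by
  have := continuous_cumul hmono hI
  fun_prop

/-- The fundamental theorem of calculus for `e^{-rx} F x`; the derivative exists off the countable
set of jumps of `G`. -/
lemma weighted_ftc {G : ℝ → ℝ} (hmono : Monotone G)
    (hI : ∀ x, IntegrableOn G (Set.Iic x)) (r a b : ℝ) :
    Real.exp (-(r * b)) * cumul G b - Real.exp (-(r * a)) * cumul G a =
      (∫ t in a..b, Real.exp (-(r * t)) * G t) -
        r * ∫ t in a..b, Real.exp (-(r * t)) * cumul G t := by
  have hc := continuous_weight_cumul hmono hI r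
  have hi1 := intervalIntegrable_weight hmono r a b
  have hi2 : IntervalIntegrable (fun t => r * (Real.exp (-(r * t)) * cumul G t)) volume a b :=
    (hc.intervalIntegrable a b).const_mul r
  rw [← intervalIntegral.integral_const_mul, ← intervalIntegral.integral_sub hi1 hi2]
  symm
  refine MeasureTheory.integral_eq_of_hasDerivAt_off_countable
    (fun t => Real.exp (-(r * t)) * cumul G t) _ hmono.countable_not_continuousAt
    hc.continuousOn ?_ (hi1.sub hi2)
  intro x hx
  have hx' : ContinuousAt G x := by
    by_contra h
    exact hx.2 h
  have h1 := hasDerivAt_cumul hmono hI hx'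
  have h2 : HasDerivAt (fun t => Real.exp (-(r * t))) (Real.exp (-(r * x)) * (-(r * 1))) x :=
    (((hasDerivAt_id x).const_mul r).neg).exp
  exact (h2.mul h1).congr_deriv (by ring)

lemma weighted_mono {G : ℝ → ℝ} (hmono : Monotone G)
    (hI : ∀ x, IntegrableOn G (Set.Iic x)) {r : ℝ} (hr : ∀ x, r * cumul G x ≤ G x) :
    Monotone (fun x => Real.exp (-(r * x)) * cumul G x) := by
  intro a b hab
  have h := weighted_ftc hmono hI r a b
  have hle : ∫ t in a..b, r * (Real.exp (-(r * t)) * cumul G t) ≤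
      ∫ t in a..b, Real.exp (-(r * t)) * G t := by
    refine intervalIntegral.integral_mono_on hab
      (((continuous_weight_cumul hmono hI r).intervalIntegrable a b).const_mul r)
      (intervalIntegrable_weight hmono r a b) ?_
    intro x _
    nlinarith [mul_le_mul_of_nonneg_left (hr x) (Real.exp_pos (-(r * x))).le]
  rw [intervalIntegral.integral_const_mul] at hle
  show Real.exp (-(r * a)) * cumul G a ≤ Real.exp (-(r * b)) * cumul G b
  linarith

/-! ### Exponential growth of the primitive -/

/-- Robustness with `ρ = e^s / s` and `s ≤ 1` forces `F` to grow at logarithmic rate at least `s`: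
the largest admissible rate `r ≤ s` satisfies `s e^{r - s} ≤ r`. -/
lemma growth_rate {G : ℝ → ℝ} {s : ℝ} (hs0 : 0 < s) (hs1 : s ≤ 1) (hmono : Monotone G)
    (hI : ∀ x, IntegrableOn G (Set.Iic x)) (hpos : ∀ x, 0 < G x)
    (hrob : ∀ x, s * Real.exp (-s) * cumul G (x + 1) ≤ G x) (x : ℝ) :
    s * cumul G x ≤ G x := by
  let S : Set ℝ := Set.Icc 0 s ∩ {r | ∀ x, r * cumul G x ≤ G x}
  have hcl : IsClosed {r : ℝ | ∀ x, r * cumul G x ≤ G x} := by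
    rw [Set.ofPred_forall]
    exact isClosed_iInter fun x => isClosed_le (by fun_prop) continuous_const
  have hS : IsCompact S := isCompact_Icc.inter_right hcl
  have hne : S.Nonempty := ⟨0, ⟨le_rfl, hs0.le⟩, fun x => by simpa using (hpos x).le⟩
  obtain ⟨r, ⟨⟨hr0, hrs⟩, hr⟩, hmax⟩ := hS.exists_isGreatest hne
  rcases hrs.eq_or_lt with rfl | hlt
  · exact hr x
  exfalso
  have hstep : s * Real.exp (r - s) ∈ S := by
    refine ⟨⟨by positivity, ?_⟩, ?_⟩
    · have : Real.exp (r - s) ≤ 1 := Real.exp_le_one_iff.2 (by linarith)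
      nlinarith
    · intro y
      have h1 : Real.exp (-(r * y)) * cumul G y ≤
          Real.exp (-(r * (y + 1))) * cumul G (y + 1) :=
        weighted_mono hmono hI hr (by linarith : y ≤ y + 1)
      have h2 : Real.exp r * cumul G y ≤ cumul G (y + 1) := by
        have h3 := mul_le_mul_of_nonneg_left h1 (Real.exp_pos (r * (y + 1))).le
        rw [← mul_assoc, ← mul_assoc, ← Real.exp_add, ← Real.exp_add] at h3
        have e1 : r * (y + 1) + -(r * y) = r := by ring
        have e2 : r * (y + 1) + -(r * (y + 1)) = 0 := by ring
        rwa [e1, e2, Real.exp_zero, one_mul] at h3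
      calc s * Real.exp (r - s) * cumul G y
          = s * Real.exp (-s) * (Real.exp r * cumul G y) := by
            rw [sub_eq_add_neg, Real.exp_add]; ring
        _ ≤ s * Real.exp (-s) * cumul G (y + 1) :=
            mul_le_mul_of_nonneg_left h2 (by positivity)
        _ ≤ G y := hrob y
  have hle : s * Real.exp (r - s) ≤ r := hmax hstep
  have hexp : r - s + 1 < Real.exp (r - s) := Real.add_one_lt_exp (by linarith)
  nlinarith [mul_nonneg (sub_nonneg.2 hlt.le) (sub_nonneg.2 hs1)]

/-! ### Upper bound on the weighted mass -/

/-- `∫_0^1 e^{-st} G t dt ≤ e^{-s} F 1`. This encodes that `F` stays non-negative at `-∞`: a failure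
by `ε` at `0` propagates to all `y ≤ 0` and makes `e^{-sx} F x` drop by `ε` per unit step. -/
lemma weighted_mass_le {G : ℝ → ℝ} {s : ℝ} (hs0 : 0 < s) (hs1 : s ≤ 1) (hmono : Monotone G)
    (hI : ∀ x, IntegrableOn G (Set.Iic x)) (hF : ∀ x, 0 ≤ cumul G x)
    (hrob : ∀ x, s * (Real.exp (-(s * (x + 1))) * cumul G (x + 1)) ≤ Real.exp (-(s * x)) * G x)
    (hgrow : ∀ x, s * cumul G x ≤ G x) :
    ∫ t in (0 : ℝ)..1, Real.exp (-(s * t)) * G t ≤ Real.exp (-s) * cumul G 1 := by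
  have hftc := weighted_ftc hmono hI s
  have hhm := weighted_mono hmono hI hgrow
  have hhc := continuous_weight_cumul hmono hI s
  have hgi := intervalIntegrable_weight hmono s
  have hh0 : ∀ x, 0 ≤ Real.exp (-(s * x)) * cumul G x :=
    fun x => mul_nonneg (Real.exp_pos _).le (hF x)
  have h1 : Real.exp (-s) * cumul G 1 = Real.exp (-(s * 1)) * cumul G 1 := by rw [mul_one]
  rw [h1]
  set g : ℝ → ℝ := fun t => Real.exp (-(s * t)) * G t with hg
  set h : ℝ → ℝ := fun t => Real.exp (-(s * t)) * cumul G t with hh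
  change ∀ a b, h b - h a = (∫ t in a..b, g t) - s * ∫ t in a..b, h t at hftc
  change ∀ x, s * h (x + 1) ≤ g x at hrob
  change ∀ x, 0 ≤ h x at hh0
  change ∫ t in (0 : ℝ)..1, g t ≤ h 1
  by_contra! hcon
  obtain ⟨ε, hε, hεeq⟩ : ∃ ε, 0 < ε ∧ ε = (∫ t in (0 : ℝ)..1, g t) - h 1 :=
    ⟨_, sub_pos.2 hcon, rfl⟩
  have hstep : ∀ y ≤ (0 : ℝ), h y + ε ≤ h (y + 1) := by
    intro y hy
    have hshift : s * ∫ t in (y + 1)..1, h t ≤ ∫ t in y..0, g t := by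
      have e : ∫ t in y..0, h (t + 1) = ∫ t in (y + 1)..1, h t := by
        rw [intervalIntegral.integral_comp_add_right h 1, zero_add]
      rw [← e, ← intervalIntegral.integral_const_mul]
      refine intervalIntegral.integral_mono_on hy ?_ (hgi y 0) fun x _ => hrob x
      exact (Continuous.intervalIntegrable (by fun_prop) _ _)
    have hup : ∫ t in y..(y + 1), h t ≤ h (y + 1) := by
      have := intervalIntegral.integral_mono_on (by linarith : y ≤ y + 1)
        (hhc.intervalIntegrable y (y + 1))
        (intervalIntegrable_const (c := h (y + 1)) (μ := volume))
        (fun x hx => hhm hx.2)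
      simpa using this
    have f1 := hftc (y + 1) 1
    have f2 := hftc y (y + 1)
    have a1 := intervalIntegral.integral_add_adjacent_intervals (hgi y 0) (hgi 0 1)
    have a2 := intervalIntegral.integral_add_adjacent_intervals (hgi y (y + 1)) (hgi (y + 1) 1)
    have hsh : s * ∫ t in y..(y + 1), h t ≤ h (y + 1) := by
      have := hh0 (y + 1)
      nlinarith
    change (∫ t in y..0, g t) + (∫ t in (0 : ℝ)..1, g t) = ∫ t in y..1, g t at a1
    change (∫ t in y..(y + 1), g t) + (∫ t in (y + 1)..1, g t) = ∫ t in y..1, g t at a2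
    linarith
  have hdrop : ∀ n : ℕ, h (-(n : ℝ)) + n * ε ≤ h 0 := by
    intro n
    induction n with
    | zero => simp
    | succ n ih =>
      have := hstep (-((n + 1 : ℕ) : ℝ)) (by push_cast; linarith [n.cast_nonneg (α := ℝ)])
      have e : -((n + 1 : ℕ) : ℝ) + 1 = -(n : ℝ) := by push_cast; ring
      rw [e] at this
      push_cast at this ⊢
      linarith
  obtain ⟨n, hn⟩ := exists_nat_gt (h 0 / ε)
  rw [div_lt_iff₀ hε] at hn
  linarith [hdrop n, hh0 (-(n : ℝ))]

/-! ### Comparison with the offset bound -/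

lemma integral_exp_weight {s : ℝ} (hs : 0 < s) (b : ℝ) :
    ∫ t in (0 : ℝ)..b, Real.exp (-(s * t)) = (1 - Real.exp (-(s * b))) / s := by
  have h : ∀ x ∈ Set.uIcc 0 b,
      HasDerivAt (fun t => -Real.exp (-(s * t)) / s) (Real.exp (-(s * x))) x := by
    intro x _
    have h2 : HasDerivAt (fun t => Real.exp (-(s * t))) (Real.exp (-(s * x)) * (-(s * 1))) x :=
      (((hasDerivAt_id x).const_mul s).neg).exp
    exact ((h2.neg).div_const s).congr_deriv (by field_simp)
  rw [intervalIntegral.integral_eq_sub_of_hasDerivAt h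
    (Continuous.intervalIntegrable (by fun_prop) _ _)]
  simp
  ring

/-- `η ↦ η (2 - ln η)` is strictly increasing on `(0, e]`. -/
lemma mul_two_sub_log_lt {η ξ : ℝ} (hη : 0 < η) (hlt : η < ξ) (hξ : ξ ≤ Real.exp 1) :
    η * (2 - Real.log η) < ξ * (2 - Real.log ξ) := by
  have hξ0 : 0 < ξ := hη.trans hlt
  have h1 : Real.log ξ ≤ 1 := (Real.log_le_iff_le_exp hξ0).2 hξ
  have h2 : Real.log (ξ / η) < ξ / η - 1 :=
    Real.log_lt_sub_one_of_pos (by positivity) (ne_of_gt ((one_lt_div hη).2 hlt))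
  rw [Real.log_div hξ0.ne' hη.ne'] at h2
  have h3 : η * (Real.log ξ - Real.log η) < ξ - η := by
    have := mul_lt_mul_of_pos_left h2 hη
    have e : η * (ξ / η - 1) = ξ - η := by field_simp
    linarith
  nlinarith

theorem tight_bidding_profile_lower_bound
    (s : ℝ) (hs : s ∈ Set.Ioc (0 : ℝ) 1) (χ χs : ℝ) (hχs : IsChiVal s χs)
    (hχ1 : 1 < χ) (hχρ : χ ≤ Real.exp s / s)
    (G : ℝ → ℝ) (hG : BiddingProfile (Real.exp s / s) χ G)
    (htight : TightProfile (Real.exp s / s) χ G) :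
    χs ≤ χ := by
  obtain ⟨hs0, hs1⟩ := hs
  obtain ⟨hmono, -, hpos, -, hone, hrob, -⟩ := hG
  have hmass := htight.2
  have hI : ∀ x, IntegrableOn G (Set.Iic x) := by
    intro x
    refine ⟨hmono.measurable.aestronglyMeasurable, ?_⟩
    rw [hasFiniteIntegral_iff_ofReal (Filter.Eventually.of_forall fun t => (hpos t).le)]
    have := hrob (x - 1)
    rw [sub_add_cancel] at this
    exact this.trans_lt ENNReal.ofReal_lt_top
  have hFl : ∀ x, (∫⁻ t in Set.Iic x, ENNReal.ofReal (G t)) = ENNReal.ofReal (cumul G x) :=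
    fun x => (ofReal_integral_eq_lintegral_ofReal (hI x)
      (Filter.Eventually.of_forall fun t => (hpos t).le)).symm
  have hF : ∀ x, 0 ≤ cumul G x := fun x => integral_nonneg fun t => (hpos t).le
  have hF1 : cumul G 1 = χ := by
    rw [hFl, ENNReal.ofReal_eq_ofReal_iff (hF 1) (by linarith)] at hmass
    exact hmass
  have hrob1 : ∀ x, s * Real.exp (-s) * cumul G (x + 1) ≤ G x := by
    intro x
    have h := hrob x
    rw [hFl, ENNReal.ofReal_le_ofReal_iff (by have := hpos x; positivity)] at h
    have h2 := mul_le_mul_of_nonneg_left h (by positivity : 0 ≤ s * Real.exp (-s))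
    have e : s * Real.exp (-s) * (Real.exp s / s * G x) = G x := by
      rw [Real.exp_neg]
      field_simp
    rwa [e] at h2
  have hrob2 : ∀ x, s * (Real.exp (-(s * (x + 1))) * cumul G (x + 1)) ≤
      Real.exp (-(s * x)) * G x := by
    intro x
    have h := mul_le_mul_of_nonneg_left (hrob1 x) (Real.exp_pos (-(s * x))).le
    have e : Real.exp (-(s * (x + 1))) = Real.exp (-(s * x)) * Real.exp (-s) := by
      rw [← Real.exp_add]; ring_nf
    rw [e]
    linarith
  have hgrow := growth_rate hs0 hs1 hmono hI hpos hrob1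
  have hW := weighted_mass_le hs0 hs1 hmono hI hF hrob2 hgrow
  rw [hF1] at hW
  have hgi := intervalIntegrable_weight hmono s
  have hlow1 : ∀ b, 0 ≤ b → (1 - Real.exp (-(s * b))) / s ≤
      ∫ t in (0 : ℝ)..b, Real.exp (-(s * t)) * G t := by
    intro b hb
    rw [← integral_exp_weight hs0]
    refine intervalIntegral.integral_mono_on_of_le_Ioo hb
      (Continuous.intervalIntegrable (by fun_prop) _ _) (hgi 0 b) ?_
    intro x hx
    exact le_mul_of_one_le_right (Real.exp_pos _).le (hone x hx.1)
  have hexps : Real.exp s * Real.exp (-s) = 1 := by rw [← Real.exp_add]; simp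
  have hbase : Real.exp s - 1 ≤ s * χ := by
    have h := (hlow1 1 zero_le_one).trans hW
    rw [div_le_iff₀ hs0, mul_one] at h
    have h2 := mul_le_mul_of_nonneg_left h (Real.exp_pos s).le
    calc Real.exp s - 1 = Real.exp s * (1 - Real.exp (-s)) := by rw [mul_sub, hexps]; ring
      _ ≤ Real.exp s * (Real.exp (-s) * χ * s) := h2
      _ = (Real.exp s * Real.exp (-s)) * (s * χ) := by ring
      _ = s * χ := by rw [hexps, one_mul]
  rcases hχs with ⟨-, rfl⟩ | ⟨hs2, ξ, ⟨-, hξe⟩, hξ, rfl⟩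
  · rw [div_le_iff₀ hs0]
    linarith
  rw [div_le_iff₀ hs0]
  by_contra! hlt
  obtain ⟨η, hη⟩ : ∃ η, η = s * χ := ⟨_, rfl⟩
  have hexp2 : 2 ≤ Real.exp s := (Real.log_le_iff_le_exp two_pos).1 hs2
  have hη1 : 1 ≤ η := by linarith
  have hη0 : 0 < η := by linarith
  have hηs : Real.log η ≤ s := by
    rw [Real.log_le_iff_le_exp hη0, hη]
    rw [le_div_iff₀ hs0] at hχρ
    linarith
  have hlog0 : 0 ≤ Real.log η := Real.log_nonneg hη1
  -- the point where the lower bounds `e^{-st}` and `s e^{-s} χ` for `e^{-st} G t` cross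
  obtain ⟨t₀, ht₀⟩ : ∃ t₀, t₀ = 1 - Real.log η / s := ⟨_, rfl⟩
  have ht0 : 0 ≤ t₀ := by
    have := (div_le_one hs0).2 hηs
    linarith
  have ht1 : t₀ ≤ 1 := by
    have : 0 ≤ Real.log η / s := by positivity
    linarith
  have hst : s * (1 - t₀) = Real.log η := by
    rw [ht₀]
    field_simp
    ring
  have hlow2 : (1 - t₀) * (η * Real.exp (-s)) ≤
      ∫ t in t₀..1, Real.exp (-(s * t)) * G t := by
    have h := intervalIntegral.integral_mono_on ht1
      (intervalIntegrable_const (c := η * Real.exp (-s))) (hgi t₀ 1) ?_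
    · rwa [intervalIntegral.integral_const, smul_eq_mul] at h
    intro x hx
    refine le_trans ?_ (hrob2 x)
    have hm : Real.exp (-(s * 1)) * cumul G 1 ≤ Real.exp (-(s * (x + 1))) * cumul G (x + 1) :=
      weighted_mono hmono hI hgrow (by linarith [hx.1] : (1 : ℝ) ≤ x + 1)
    rw [hF1, mul_one] at hm
    rw [hη]
    nlinarith
  have hsum := intervalIntegral.integral_add_adjacent_intervals (hgi 0 t₀) (hgi t₀ 1)
  have hkey : (1 - Real.exp (-(s * t₀))) / s + (1 - t₀) * (η * Real.exp (-s)) ≤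
      Real.exp (-s) * χ := by
    linarith [hlow1 t₀ ht0]
  have hexpt : Real.exp s * Real.exp (-(s * t₀)) = η := by
    rw [← Real.exp_add]
    have : s + -(s * t₀) = Real.log η := by rw [← hst]; ring
    rw [this, Real.exp_log hη0]
  have hfin : Real.exp s - η + Real.log η * η ≤ η := by
    have h := mul_le_mul_of_nonneg_left hkey (mul_pos hs0 (Real.exp_pos s)).le
    have e1 : s * Real.exp s *
        ((1 - Real.exp (-(s * t₀))) / s + (1 - t₀) * (η * Real.exp (-s))) =
        Real.exp s - Real.exp s * Real.exp (-(s * t₀)) +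
          (s * (1 - t₀)) * η * (Real.exp s * Real.exp (-s)) := by
      field_simp
    have e2 : s * Real.exp s * (Real.exp (-s) * χ) = (Real.exp s * Real.exp (-s)) * (s * χ) := by
      ring
    rw [e1, e2, hexps, hexpt, hst, ← hη] at h
    linarith
  have hmon := mul_two_sub_log_lt hη0 (by linarith : η < ξ) hξe
  rw [hξ] at hmon
  linarith
end

section
/- Fix s ∈ (0,1] and set ρ(s) := e^s/s. Let G be a tight (ρ(s), χ)-bidding profile induced by an integrable function φ : (0,1] → [1,∞). Then χ ≥ e^s · ∫₀¹ e^{−s·x}·φ(x) dx. -/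
open MeasureTheory Set
open scoped ENNReal

lemma BiddingProfile.integrableOn {ρ χ : ℝ} {G : ℝ → ℝ} (hG : BiddingProfile ρ χ G) (x : ℝ) :
    IntegrableOn G (Set.Iic x) := by
  obtain ⟨hmono, -, hpos, -, -, hrob, -⟩ := hG
  refine ⟨hmono.measurable.aestronglyMeasurable, ?_⟩
  rw [hasFiniteIntegral_iff_ofReal (Filter.Eventually.of_forall fun t => (hpos t).le)]
  have := hrob (x - 1)
  rw [sub_add_cancel] at this
  exact this.trans_lt ENNReal.ofReal_lt_top

lemma BiddingProfile.ofReal_cumul {ρ χ : ℝ} {G : ℝ → ℝ} (hG : BiddingProfile ρ χ G) (x : ℝ) :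
    ENNReal.ofReal (cumul G x) = ∫⁻ t in Set.Iic x, ENNReal.ofReal (G t) :=
  ofReal_integral_eq_lintegral_ofReal (hG.integrableOn x)
    (Filter.Eventually.of_forall fun t => (hG.2.2.1 t).le)

lemma BiddingProfile.cumul_nonneg {ρ χ : ℝ} {G : ℝ → ℝ} (hG : BiddingProfile ρ χ G) (x : ℝ) :
    0 ≤ cumul G x :=
  integral_nonneg fun t => (hG.2.2.1 t).le

lemma BiddingProfile.cumul_eq {ρ χ : ℝ} {G : ℝ → ℝ} (hG : BiddingProfile ρ χ G) (x : ℝ) :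
    cumul G x = cumul G 0 + ∫ t in (0 : ℝ)..x, G t := by
  have := intervalIntegral.integral_Iic_sub_Iic (hG.integrableOn 0) (hG.integrableOn x)
  rw [← this, cumul, cumul]; ring

lemma BiddingProfile.intervalIntegrable {ρ χ : ℝ} {G : ℝ → ℝ} (hG : BiddingProfile ρ χ G)
    (a b : ℝ) : IntervalIntegrable G volume a b :=
  hG.1.intervalIntegrable

lemma BiddingProfile.continuous_cumul {ρ χ : ℝ} {G : ℝ → ℝ} (hG : BiddingProfile ρ χ G) :
    Continuous (cumul G) := by
  have : cumul G = fun x => cumul G 0 + ∫ t in (0 : ℝ)..x, G t := funext hG.cumul_eq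
  rw [this]
  exact continuous_const.add (intervalIntegral.continuous_primitive hG.intervalIntegrable 0)

lemma BiddingProfile.hasDerivAt_cumul {ρ χ : ℝ} {G : ℝ → ℝ} (hG : BiddingProfile ρ χ G)
    {x : ℝ} (hx : ContinuousAt G x) : HasDerivAt (cumul G) (G x) x := by
  have : cumul G = fun x => cumul G 0 + ∫ t in (0 : ℝ)..x, G t := funext hG.cumul_eq
  rw [this]
  exact (intervalIntegral.integral_hasDerivAt_right (hG.intervalIntegrable 0 x)
    (hG.1.measurable.stronglyMeasurable.stronglyMeasurableAtFilter) hx).const_add _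

/-- Integration by parts for `e^{-st} F(t)` on `[0, 1]`. It is legitimate because the monotone `G`
has only countably many discontinuities, and `F' = G` everywhere else. -/
lemma BiddingProfile.discounted_by_parts {ρ χ : ℝ} {G : ℝ → ℝ} (hG : BiddingProfile ρ χ G)
    (s : ℝ) :
    ∫ t in (0 : ℝ)..1, Real.exp (-(s * t)) * G t =
      Real.exp (-s) * cumul G 1 - cumul G 0 +
        s * ∫ t in (0 : ℝ)..1, Real.exp (-(s * t)) * cumul G t := by
  have hc := hG.continuous_cumul
  have hi1 : IntervalIntegrable (fun t => Real.exp (-(s * t)) * G t) volume 0 1 :=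
    (hG.intervalIntegrable 0 1).continuousOn_mul (by fun_prop)
  have hi2 : IntervalIntegrable (fun t => s * (Real.exp (-(s * t)) * cumul G t)) volume 0 1 :=
    Continuous.intervalIntegrable (by fun_prop) _ _
  have key := MeasureTheory.integral_eq_of_hasDerivAt_off_countable
    (f := fun t => Real.exp (-(s * t)) * cumul G t)
    (fun t => Real.exp (-(s * t)) * G t - s * (Real.exp (-(s * t)) * cumul G t))
    (a := 0) (b := 1) (s := {x | ¬ ContinuousAt G x})
    hG.1.countable_not_continuousAt (by fun_prop) ?_ (hi1.sub hi2)
  · rw [intervalIntegral.integral_sub hi1 hi2, intervalIntegral.integral_const_mul] at key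
    simp only [mul_one, mul_zero, neg_zero, Real.exp_zero, one_mul] at key
    linarith
  · intro x hx
    have hx' : ContinuousAt G x := not_not.1 hx.2
    have h1 : HasDerivAt (fun t : ℝ => -(s * t)) (-(s * 1)) x :=
      ((hasDerivAt_id x).const_mul s).neg
    exact (h1.exp.mul (hG.hasDerivAt_cumul hx')).congr_deriv (by ring)

/-- A continuous nonnegative function on `(-∞, 1]` cannot stay below its forward unit averages
by a fixed amount. Its maximum over `(-∞, 1]` would be attained in `[0, 1]`, and each unit step to
the left would lower the upper bound by that amount. -/
lemma nonneg_of_sub_integral_eq {s C : ℝ} (hs : s ≤ 1) {h : ℝ → ℝ} (hc : Continuous h)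
    (h0 : ∀ x, 0 ≤ h x) (hC : ∀ x ≤ 0, h x - s * ∫ t in x..(x + 1), h t = C) : 0 ≤ C := by
  by_contra! hneg
  have step : ∀ x ≤ 0, ∀ B : ℝ, (∀ t ∈ Set.Icc x (x + 1), h t ≤ B) → h x ≤ B + C := by
    intro x hx B hB
    have e := hC x hx
    have hle : x ≤ x + 1 := by linarith
    have i0 : 0 ≤ ∫ t in x..(x + 1), h t :=
      intervalIntegral.integral_nonneg hle fun t _ => h0 t
    have i1 : ∫ t in x..(x + 1), h t ≤ ∫ _t in x..(x + 1), B :=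
      intervalIntegral.integral_mono_on hle (hc.intervalIntegrable _ _)
        (by simp) hB
    simp at i1
    nlinarith
  obtain ⟨w, -, hw⟩ := isCompact_Icc.exists_isMaxOn (Set.nonempty_Icc.2 (zero_le_one' ℝ))
    hc.continuousOn
  have hbd : ∀ y ≤ 1, h y ≤ h w := by
    intro y hy
    obtain ⟨z, hz, hzmax⟩ := isCompact_Icc.exists_isMaxOn (Set.nonempty_Icc.2 hy) hc.continuousOn
    refine (hzmax (Set.left_mem_Icc.2 hy)).trans ?_
    rcases le_or_gt z 0 with hz0 | hz0
    · have := step z hz0 (h z) fun t ht => hzmax ⟨hz.1.trans ht.1, by linarith [ht.2]⟩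
      linarith
    · exact hw ⟨hz0.le, hz.2⟩
  have hdec : ∀ n : ℕ, ∀ y ≤ 1 - (n : ℝ), h y ≤ h w + n * C := by
    intro n
    induction n with
    | zero => simpa using hbd
    | succ n ih =>
      intro y hy
      push_cast at hy ⊢
      have := step y (by linarith [n.cast_nonneg (α := ℝ)]) (h w + n * C)
        fun t ht => ih t (by linarith [ht.2])
      linarith
  obtain ⟨n, hn⟩ := exists_nat_gt (h w / (-C))
  rw [div_lt_iff₀ (by linarith)] at hn
  linarith [hdec n (1 - n) le_rfl, h0 (1 - n)]

/-- The conserved quantity: on `(-∞, 0]` tightness says `F' = s e^{-s} F(· + 1)` for the cumulative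
function `F`, so `h(x) = e^{-sx} F(x)` satisfies `h' = s (h(· + 1) - h)`. -/
lemma conserved {s χ : ℝ} (hs : 0 < s) {G : ℝ → ℝ}
    (hG : BiddingProfile (Real.exp s / s) χ G)
    (hF : ∀ x ≤ 0, cumul G (x + 1) = Real.exp s / s * G x) (y : ℝ) (hy : y ≤ 0) :
    Real.exp (-(s * y)) * cumul G y - s * ∫ t in y..(y + 1), Real.exp (-(s * t)) * cumul G t =
      cumul G 0 - s * ∫ t in (0 : ℝ)..1, Real.exp (-(s * t)) * cumul G t := by
  have hc := hG.continuous_cumul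
  set h : ℝ → ℝ := fun t => Real.exp (-(s * t)) * cumul G t with hh
  have hhc : Continuous h := by fun_prop
  have hsplit : ∀ x, ∫ t in x..(x + 1), h t =
      (∫ t in (0 : ℝ)..(x + 1), h t) - ∫ t in (0 : ℝ)..x, h t := fun x =>
    (intervalIntegral.integral_interval_sub_left (hhc.intervalIntegrable _ _)
      (hhc.intervalIntegrable _ _)).symm
  have hd : ∀ x, HasDerivAt (fun x => ∫ t in (0 : ℝ)..x, h t) (h x) x := fun x =>
    (hhc.integral_hasStrictDerivAt 0 x).hasDerivAt
  have hdw : ∀ x, HasDerivAt (fun x => ∫ t in x..(x + 1), h t) (h (x + 1) - h x) x := by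
    intro x
    simp only [hsplit]
    exact ((hd (x + 1)).comp_add_const x 1).sub (hd x)
  have hwc : Continuous fun x => ∫ t in x..(x + 1), h t :=
    continuous_iff_continuousAt.2 fun x => (hdw x).continuousAt
  have key := constant_of_has_deriv_right_zero (a := y) (b := 0)
    (f := fun x => h x - s * ∫ t in x..(x + 1), h t) (by fun_prop) ?_ 0 (Set.right_mem_Icc.2 hy)
  · simpa [hh] using key.symm
  · intro x hx
    have hGx : ∀ z ≤ 0, G z = s * Real.exp (-s) * cumul G (z + 1) := by
      intro z hz
      rw [hF z hz, Real.exp_neg]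
      field_simp
    have hcont : ContinuousAt G x := by
      have : ContinuousAt (fun z => s * Real.exp (-s) * cumul G (z + 1)) x := by fun_prop
      refine this.congr ?_
      filter_upwards [Iio_mem_nhds hx.2] with z hz using (hGx z (le_of_lt hz)).symm
    have h1 : HasDerivAt (fun t : ℝ => -(s * t)) (-(s * 1)) x :=
      ((hasDerivAt_id x).const_mul s).neg
    have h2 := (h1.exp.mul (hG.hasDerivAt_cumul hcont)).sub ((hdw x).const_mul s)
    refine HasDerivAt.hasDerivWithinAt (h2.congr_deriv ?_)
    rw [hGx x hx.2.le, hh]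
    have : Real.exp (-(s * (x + 1))) = Real.exp (-(s * x)) * Real.exp (-s) := by
      rw [← Real.exp_add]; ring_nf
    simp only [this]
    ring

theorem tight_profile_consistency_integral_bound
    (s : ℝ) (hs : s ∈ Set.Ioc (0 : ℝ) 1) (χ : ℝ)
    (hχ1 : 1 < χ) (hχρ : χ ≤ Real.exp s / s)
    (G φ : ℝ → ℝ)
    (hG : BiddingProfile (Real.exp s / s) χ G)
    (htight : TightProfile (Real.exp s / s) χ G)
    (hφint : IntegrableOn φ (Set.Ioc 0 1))
    (hφ1 : ∀ x ∈ Set.Ioc (0 : ℝ) 1, 1 ≤ φ x)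
    (hind : ∀ x ∈ Set.Ioc (0 : ℝ) 1, G x = φ x) :
    Real.exp s * ∫ x in Set.Ioc (0 : ℝ) 1, Real.exp (-(s * x)) * φ x ≤ χ := by
  obtain ⟨hs0, hs1⟩ := hs
  have hF : ∀ x ≤ 0, cumul G (x + 1) = Real.exp s / s * G x := by
    intro x hx
    have := htight.1 x hx
    rw [← hG.ofReal_cumul] at this
    have hp := hG.2.2.1 x
    exact (ENNReal.ofReal_eq_ofReal_iff (hG.cumul_nonneg _) (by positivity)).1 this
  have hF1 : cumul G 1 = χ := by
    have := htight.2
    rw [← hG.ofReal_cumul] at this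
    exact (ENNReal.ofReal_eq_ofReal_iff (hG.cumul_nonneg _) (by linarith)).1 this
  have hc := hG.continuous_cumul
  have hC := nonneg_of_sub_integral_eq hs1
    (h := fun t => Real.exp (-(s * t)) * cumul G t) (by fun_prop)
    (fun x => mul_nonneg (Real.exp_pos _).le (hG.cumul_nonneg x)) (conserved hs0 hG hF)
  have hparts := hG.discounted_by_parts s
  rw [hF1, intervalIntegral.integral_of_le zero_le_one] at hparts
  have hcongr : ∫ x in Set.Ioc (0 : ℝ) 1, Real.exp (-(s * x)) * φ x =
      ∫ x in Set.Ioc (0 : ℝ) 1, Real.exp (-(s * x)) * G x :=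
    setIntegral_congr_fun measurableSet_Ioc fun x hx => by simp only [hind x hx]
  rw [hcongr]
  calc _ ≤ Real.exp s * (Real.exp (-s) * χ) := by
        gcongr
        linarith
    _ = χ := by rw [← mul_assoc, ← Real.exp_add]; simp
end

section
/- Fix s ∈ (0,1] and set ρ(s) := e^s/s. Let G be a tight (ρ(s), χ)-bidding profile induced by an integrable function φ : (0,1] → [1,∞). Then φ(x) ≥ max(1, s·χ·e^{s(x−1)}) for every x ∈ (0,1]. -/
/-! The argument uses the primitive `F x = ∫_{-∞}^x G`. Robustness reads
`s e^{-s} F(x+1) ≤ F'(x)`. If `c F ≤ F'` holds everywhere then `F(x+1) ≥ e^c F(x)`, hence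
`s e^{c-s} F ≤ F'` everywhere: the admissible rates are stable under `c ↦ s e^{c-s}`. For `s ≤ 1`,
the only fixed point of this map in `[0,s]` is `s`, and the map strictly increases every smaller
rate, so the largest admissible rate at most `s` is `s` itself. With `s F ≤ F'` one gets
`F(1+x) ≥ e^{sx} F(1)` and robustness at `x ∈ (0,1]` gives `G(x) ≥ s e^{-s} e^{sx} χ`,
because `F(1) = χ` by tightness. -/

open MeasureTheory Set
open scoped ENNReal

/-- A one-step Euler bound, iterated, yields exponential growth. -/
lemma exp_growth_of_euler {F : ℝ → ℝ} {c : ℝ} (hc : 0 ≤ c)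
    (h : ∀ x d, 0 ≤ d → (1 + c * d) * F x ≤ F (x + d)) (x y : ℝ) (hy : 0 ≤ y) :
    Real.exp (c * y) * F x ≤ F (x + y) := by
  have key : ∀ d, 0 ≤ d → ∀ n : ℕ, (1 + c * d) ^ n * F x ≤ F (x + n * d) := by
    intro d hd n
    induction n with
    | zero => simp
    | succ k ih =>
      have h1 := h (x + k * d) d hd
      have h2 : 0 ≤ 1 + c * d := by positivity
      have h3 := mul_le_mul_of_nonneg_left ih h2
      have h4 : x + ((k + 1 : ℕ) : ℝ) * d = x + k * d + d := by push_cast; ring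
      rw [h4, pow_succ]
      linarith
  have lim := (Real.tendsto_one_add_div_pow_exp (c * y)).mul_const (F x)
  refine le_of_tendsto lim ?_
  filter_upwards [Filter.eventually_gt_atTop 0] with n hn
  have hn' : (0 : ℝ) < n := by exact_mod_cast hn
  have := key (y / n) (by positivity) n
  rwa [mul_div_cancel₀ _ hn'.ne', ← mul_div_assoc] at this

/-- Largest-rate argument: the smaller root `s` of `c e^{-c} = s e^{-s}` is an admissible rate.
`F` plays the role of a primitive of `G`, which enters only through the growth hypothesis `hgrow`. -/
lemma rate_le {F G : ℝ → ℝ} {s : ℝ} (hs0 : 0 < s) (hs1 : s ≤ 1)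
    (hF : ∀ x, 0 < F x) (hG : ∀ x, 0 < G x)
    (hrob : ∀ x, s * Real.exp (-s) * F (x + 1) ≤ G x)
    (hgrow : ∀ c, 0 ≤ c → (∀ x, c * F x ≤ G x) →
      ∀ x y, 0 ≤ y → Real.exp (c * y) * F x ≤ F (x + y)) :
    ∀ x, s * F x ≤ G x := by
  set A : Set ℝ := {c | 0 ≤ c ∧ c ≤ s ∧ ∀ x, c * F x ≤ G x} with hA
  have hbdd : BddAbove A := ⟨s, fun c hc => hc.2.1⟩
  have hne : A.Nonempty := ⟨0, le_rfl, hs0.le, fun x => by simpa using (hG x).le⟩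
  set m := sSup A with hm
  have hm0 : 0 ≤ m := le_csSup hbdd ⟨le_rfl, hs0.le, fun x => by simpa using (hG x).le⟩
  have hms : m ≤ s := csSup_le hne fun c hc => hc.2.1
  have hmA : ∀ x, m * F x ≤ G x := by
    intro x
    rw [← le_div_iff₀ (hF x)]
    exact csSup_le hne fun c hc => (le_div_iff₀ (hF x)).2 (hc.2.2 x)
  have hstep : s * Real.exp (m - s) ∈ A := by
    refine ⟨by positivity, ?_, fun x => ?_⟩
    · have : Real.exp (m - s) ≤ 1 := Real.exp_le_one_iff.2 (by linarith)
      nlinarith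
    · have h1 := hgrow m hm0 hmA x 1 zero_le_one
      rw [mul_one] at h1
      have h2 : 0 ≤ s * Real.exp (-s) := by positivity
      have h3 := mul_le_mul_of_nonneg_left h1 h2
      have h4 : Real.exp (m - s) = Real.exp (-s) * Real.exp m := by
        rw [← Real.exp_add]; ring_nf
      rw [h4]
      linarith [hrob x]
  have hle : s * Real.exp (m - s) ≤ m := le_csSup hbdd hstep
  have hms' : m = s := by
    by_contra hne'
    -- For `m < s`, strict convexity gives `s e^{m-s} > s (1 + m - s) ≥ m`.
    have := Real.add_one_lt_exp (sub_ne_zero.2 hne')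
    have h5 := mul_lt_mul_of_pos_left this hs0
    nlinarith [mul_nonneg (sub_nonneg.2 hs1) (sub_nonneg.2 hms)]
  rwa [← hms']

theorem tight_profile_pointwise_lower_bound
    (s : ℝ) (hs : s ∈ Set.Ioc (0 : ℝ) 1) (χ : ℝ)
    (hχ1 : 1 < χ) (hχρ : χ ≤ Real.exp s / s)
    (G φ : ℝ → ℝ)
    (hG : BiddingProfile (Real.exp s / s) χ G)
    (htight : TightProfile (Real.exp s / s) χ G)
    (hφint : IntegrableOn φ (Set.Ioc 0 1))
    (hφ1 : ∀ x ∈ Set.Ioc (0 : ℝ) 1, 1 ≤ φ x)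
    (hind : ∀ x ∈ Set.Ioc (0 : ℝ) 1, G x = φ x) :
    ∀ x ∈ Set.Ioc (0 : ℝ) 1, max 1 (s * χ * Real.exp (s * (x - 1))) ≤ φ x := by
  obtain ⟨hs0, hs1⟩ := hs
  obtain ⟨hmono, -, hpos, -, -, hrob, -⟩ := hG
  have hlint : ∀ x, (∫⁻ t in Iic x, ENNReal.ofReal (G t)) < ⊤ := fun x => by
    have := hrob (x - 1)
    rw [sub_add_cancel] at this
    exact this.trans_lt ENNReal.ofReal_lt_top
  have hint : ∀ x, IntegrableOn G (Iic x) := fun x =>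
    ⟨hmono.measurable.aestronglyMeasurable, by
      rw [hasFiniteIntegral_iff_ofReal (Filter.Eventually.of_forall fun t => (hpos t).le)]
      exact hlint x⟩
  set F : ℝ → ℝ := fun x => ∫ t in Iic x, G t with hFdef
  have hof : ∀ x, ENNReal.ofReal (F x) = ∫⁻ t in Iic x, ENNReal.ofReal (G t) := fun x =>
    ofReal_integral_eq_lintegral_ofReal (hint x)
      (Filter.Eventually.of_forall fun t => (hpos t).le)
  have hF : ∀ x, 0 < F x := by
    intro x
    refine (setIntegral_pos_iff_support_of_nonneg_ae
      (Filter.Eventually.of_forall fun t => (hpos t).le) (hint x)).2 ?_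
    have : Function.support G = univ := by
      ext t; simp [(hpos t).ne']
    rw [this, univ_inter, Real.volume_Iic]
    exact ENNReal.zero_lt_top
  have hF1 : F 1 = χ := by
    have := (hof 1).trans htight.2
    rwa [ENNReal.ofReal_eq_ofReal_iff (hF 1).le (by linarith)] at this
  have hrob' : ∀ x, s * Real.exp (-s) * F (x + 1) ≤ G x := by
    intro x
    have h := hrob x
    rw [← hof, ENNReal.ofReal_le_ofReal_iff (by have := hpos x; positivity)] at h
    have h2 : 0 ≤ s * Real.exp (-s) := by positivity
    have h3 := mul_le_mul_of_nonneg_left h h2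
    have h4 : s * Real.exp (-s) * (Real.exp s / s * G x) = G x := by
      rw [Real.exp_neg]; field_simp
    linarith
  have hsub : ∀ x y, x ≤ y → F y - F x = ∫ t in x..y, G t := fun x y _ =>
    intervalIntegral.integral_Iic_sub_Iic (hint x) (hint y)
  have hFmono : Monotone F := by
    intro x y hxy
    have := hsub x y hxy
    have h0 : 0 ≤ ∫ t in x..y, G t :=
      intervalIntegral.integral_nonneg hxy fun t _ => (hpos t).le
    linarith
  have hgrow : ∀ c, 0 ≤ c → (∀ x, c * F x ≤ G x) →
      ∀ x y, 0 ≤ y → Real.exp (c * y) * F x ≤ F (x + y) := by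
    intro c hc hcG x y hy
    refine exp_growth_of_euler hc (fun x d hd => ?_) x y hy
    have h1 := hsub x (x + d) (by linarith)
    have h2 : ∫ _ in x..x + d, c * F x ≤ ∫ t in x..x + d, G t := by
      refine intervalIntegral.integral_mono_on (by linarith) intervalIntegrable_const
        hmono.intervalIntegrable fun t ht => ?_
      exact (mul_le_mul_of_nonneg_left (hFmono ht.1) hc).trans (hcG t)
    rw [intervalIntegral.integral_const, smul_eq_mul, add_sub_cancel_left] at h2
    linarith
  have hrate := rate_le hs0 hs1 hF hpos hrob' hgrow
  intro x hx
  refine max_le (hφ1 x hx) ?_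
  rw [← hind x hx]
  have h1 := hgrow s hs0.le hrate 1 x hx.1.le
  rw [hF1, add_comm 1 x] at h1
  have h2 : 0 ≤ s * Real.exp (-s) := by positivity
  have h3 := mul_le_mul_of_nonneg_left h1 h2
  have h4 : Real.exp (s * (x - 1)) = Real.exp (-s) * Real.exp (s * x) := by
    rw [← Real.exp_add]; ring_nf
  rw [h4]
  linarith [hrob' x]
end
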